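/- For any prime p, there exists a field K such that: (a) there are infinitely many pairwise nonisomorphic central division K-algebras of degree p; and (b) every field extension of K of degree p splits every central division K-algebra of degree p. Consequently any two central division K-algebras of degree p have the same (infinite) genus. -/

import Mathlib

open scoped TensorProduct
universe u

/-- A finite-dimensional `F`-algebra is *split* if it is a matrix algebra over `F`. -/
def IsSplit (F : Type u) [Field F] (A : Type u) [Ring A] [Algebra F A] : Prop :=
  ∃ n : ℕ, 0 < n ∧ Nonempty (A ≃ₐ[F] Matrix (Fin n) (Fin n) F)

/-- Brauer equivalence of two `F`-algebras. -/
def BrauerEquiv (F : Type u) [Field F] (A B : Type u) [Ring A] [Algebra F A]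
    [Ring B] [Algebra F B] : Prop :=
  ∃ n m : ℕ, 0 < n ∧ 0 < m ∧ Nonempty (Matrix (Fin n) (Fin n) A ≃ₐ[F] Matrix (Fin m) (Fin m) B)

/-- `A` is a finite-dimensional central simple `F`-algebra. -/
def IsCSA (F A : Type u) [Field F] [Ring A] [Algebra F A] : Prop :=
  Algebra.IsCentral F A ∧ IsSimpleRing A ∧ FiniteDimensional F A

/-- The `n`-fold tensor power of an `F`-algebra. -/
abbrev tpow (F : Type u) [Field F] (A : Type u) [Ring A] [Algebra F A] (n : ℕ) : Type u :=
  ⨂[F] _ : Fin n, A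

/-- The Brauer class of `A` is killed by `p`: its `p`-th tensor power is split. -/
def IsPTorsion (F : Type u) [Field F] (A : Type u) [Ring A] [Algebra F A] (p : ℕ) : Prop :=
  IsSplit F (tpow F A p)

/-- The restriction map `Br(F)[p] → Br(E)[p]` along `f : F →+* E` is injective:
two `p`-torsion Brauer classes that agree after scalar extension agree already over `F`. -/
def ResInjP (p : ℕ) (F E : Type u) [Field F] [Field E] (f : F →+* E) : Prop :=
  letI : Algebra F E := f.toAlgebra
  ∀ (A B : Type u) [Ring A] [Algebra F A] [Ring B] [Algebra F B],
    IsCSA F A → IsCSA F B → IsPTorsion F A p → IsPTorsion F B p →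
    BrauerEquiv E (E ⊗[F] A) (E ⊗[F] B) → BrauerEquiv F A B

/-- The restriction map `Br(F) → Br(E)` along `f : F →+* E` is injective. -/
def ResInj (F E : Type u) [Field F] [Field E] (f : F →+* E) : Prop :=
  letI : Algebra F E := f.toAlgebra
  ∀ (A B : Type u) [Ring A] [Algebra F A] [Ring B] [Algebra F B],
    IsCSA F A → IsCSA F B →
    BrauerEquiv E (E ⊗[F] A) (E ⊗[F] B) → BrauerEquiv F A B

/-- `D` is a central division algebra of degree `p` over `K`. -/
def IsCentralDivisionOfDeg (K D : Type u) [Field K] [DivisionRing D] [Algebra K D]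
    (p : ℕ) : Prop :=
  Algebra.IsCentral K D ∧ FiniteDimensional K D ∧ Module.finrank K D = p ^ 2

/-- Witness for STATEMENT 12: a field `K` with infinitely many pairwise nonisomorphic
central division `K`-algebras of degree `p`, such that every degree-`p` field extension of
`K` splits every central division `K`-algebra of degree `p`; consequently any two such
algebras have the same (infinite) genus. -/
structure CommonGenusWitness (p : ℕ) : Type (u + 1) where
  K : Type u
  [fieldK : Field K]
  /-- infinitely many pairwise nonisomorphic central division algebras of degree `p` -/
  D : ℕ → Type u
  [divD : ∀ n, DivisionRing (D n)]
  [algD : ∀ n, Algebra K (D n)]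
  hD : ∀ n, IsCentralDivisionOfDeg K (D n) p
  noniso : ∀ n m, n ≠ m → IsEmpty (D n ≃ₐ[K] D m)
  /-- every degree-`p` extension splits every central division algebra of degree `p` -/
  allSplit : ∀ (L : Type u) [Field L] [Algebra K L], Module.finrank K L = p →
    ∀ (B : Type u) [DivisionRing B] [Algebra K B], IsCentralDivisionOfDeg K B p →
      IsSplit L (L ⊗[K] B)
  /-- consequently, any two central division `K`-algebras of degree `p` have the same
  maximal subfields, i.e. the same genus -/
  sameGenus : ∀ (B B' : Type u) [DivisionRing B] [Algebra K B] [DivisionRing B']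
      [Algebra K B'], IsCentralDivisionOfDeg K B p → IsCentralDivisionOfDeg K B' p →
    ∀ (L : Type u) [Field L] [Algebra K L], Module.finrank K L = p →
      (Nonempty (L →ₐ[K] B) ↔ Nonempty (L →ₐ[K] B'))

/-!
Inside an uncountable algebraically closed field of characteristic zero consider the subfields `F`
such that some `α ∈ F` has a `p`-th root `μ ∉ F` and some `b 0, b 1, … ∈ F` are such that neither
the `b n` nor the quotients `b n / b m` are norms from `F(μ)`. The symbol algebras `(α, b n)` over
`F` are then pairwise nonisomorphic division algebras of degree `p`.

Adjoining a generic element of prescribed norm enlarges the set of norms from another Kummer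
extension `F(ℓ ^ (1 / p))` without turning elements of `F` into norms from `F(μ)`. Zorn's lemma
gives an `F` which has all the norms that can be adjoined in this way and admits no algebraic
enlargement. Over this `F` every extension of degree `p` is a Kummer extension, and every division
algebra of degree `p` contains a `p`-th root of `α`, so is some `(α, c)`. Multiplying its second
generator by `t - x`, where `x ^ p = α`, replaces `c` by `c (t ^ p - α)`, and for a suitable `t`
this is a norm from `F((ℓ / α) ^ (1 / p))`, which puts a `p`-th root of `ℓ` into the algebra.
-/

open Finset Polynomial TensorProduct

/-! ### Symbol algebras -/

section SkewCommutation

variable {K A : Type*} [Field K] [Ring A] [Algebra K A] {q : K} {x y z : A}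

/-- `y` commutes with `x` up to the scalar `q`, as in the quantum plane: `y x = q x y`. -/
def QCommute (q : K) (x y : A) : Prop :=
  y * x = q • (x * y)

namespace QCommute

lemma symm (hq : q ≠ 0) (h : QCommute q x y) : QCommute q⁻¹ y x := by
  rw [QCommute, h, inv_smul_smul₀ hq]

lemma mul_left (h : QCommute q x y) {r : K} (h' : QCommute r z y) :
    QCommute (q * r) (x * z) y := by
  rw [QCommute, ← mul_assoc, h, smul_mul_assoc, mul_assoc, h', mul_smul_comm, smul_smul, mul_assoc]

lemma mul_right (h : QCommute q x y) {r : K} (h' : QCommute r x z) :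
    QCommute (q * r) x (y * z) := by
  rw [QCommute, mul_assoc, h', mul_smul_comm, ← mul_assoc, h, smul_mul_assoc, smul_smul, mul_assoc,
    mul_comm]

lemma one_iff : QCommute (1 : K) x y ↔ Commute x y := by
  rw [QCommute, one_smul, eq_comm]
  rfl

lemma inv {u : Aˣ} (h : QCommute q (u : A) y) : QCommute q y (↑u⁻¹ : A) := by
  rw [QCommute, Units.inv_mul_eq_iff_eq_mul, mul_smul_comm, ← mul_assoc, ← smul_mul_assoc, ← h,
    Units.mul_inv_cancel_right]

lemma commute_mul_right (hz : Commute x z) (h : QCommute q x y) : QCommute q x (z * y) := by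
  simpa using (one_iff.2 hz).mul_right h

lemma pow_left (h : QCommute q x y) (i : ℕ) : QCommute (q ^ i) (x ^ i) y := by
  induction i with
  | zero => simp [QCommute]
  | succ i ih => simpa only [pow_succ] using ih.mul_left h

lemma pow_right (h : QCommute q x y) (i : ℕ) : QCommute (q ^ i) x (y ^ i) := by
  induction i with
  | zero => simp [QCommute]
  | succ i ih => simpa only [pow_succ] using ih.mul_right h

lemma mul_aeval (h : QCommute q x y) (f : K[X]) :
    y * aeval x f = aeval x (f.comp (C q * X)) * y := by
  induction f using Polynomial.induction_on' with
  | add f g hf hg => simp only [map_add, add_comp, mul_add, add_mul, hf, hg]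
  | monomial n a =>
    simp only [aeval_monomial, monomial_comp, mul_pow, map_mul, map_pow, aeval_C, aeval_X]
    rw [← mul_assoc, ← Algebra.commutes, mul_assoc, h.pow_left n, ← map_pow (algebraMap K A),
      ← Algebra.smul_def (q ^ n), mul_assoc, smul_mul_assoc]

lemma map {B : Type*} [Ring B] [Algebra K B] (h : QCommute q x y) (φ : A →ₐ[K] B) :
    QCommute q (φ x) (φ y) := by
  rw [QCommute, ← map_mul, h, map_smul, map_mul]

end QCommute

/-- The product `f(X) f(qX) ⋯ f(q^{n-1}X)`. When `q` is a primitive `p`-th root of unity, it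
computes for `n = p` the norm of `f(θ)` from a Kummer extension `K(θ)`, `θ ^ p ∈ K`. -/
noncomputable def skewNorm (q : K) (n : ℕ) (f : K[X]) : K[X] :=
  ∏ i ∈ range n, f.comp (C (q ^ i) * X)

lemma skewNorm_succ (q : K) (n : ℕ) (f : K[X]) :
    skewNorm q (n + 1) f = skewNorm q n f * f.comp (C (q ^ n) * X) :=
  prod_range_succ _ _

lemma skewNorm_C_sub_X {p : ℕ} [NeZero p] (hq : IsPrimitiveRoot q p) (t : K) :
    skewNorm q p (C t - X) = C (t ^ p) - X ^ p := by
  have h := congrArg (eval (C t)) <|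
    X_pow_sub_C_eq_prod (hq.map_of_injective C_injective) (NeZero.pos p)
      (a := (X : K[X]) ^ p) (α := X) rfl
  simpa [skewNorm, eval_prod] using h.symm

lemma QCommute.aeval_mul_pow (h : QCommute q x y) (f : K[X]) (n : ℕ) :
    (aeval x f * y) ^ n = aeval x (skewNorm q n f) * y ^ n := by
  induction n with
  | zero => simp [skewNorm]
  | succ n ih =>
    rw [pow_succ, ih, mul_assoc, ← mul_assoc (y ^ n), (h.pow_right n).mul_aeval, skewNorm_succ,
      map_mul, pow_succ]
    simp only [mul_assoc]

end SkewCommutation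

section SymbolPair

variable {K A : Type*} [Field K] [Ring A] [Algebra K A] {p : ℕ} {ζ a b : K} {x y : A}

/-- The defining relations `x ^ p = a`, `y ^ p = b`, `y x = ζ x y` of the symbol algebra
`(a, b)_ζ`. -/
structure IsSymbolPair (p : ℕ) (ζ a b : K) (x y : A) : Prop where
  left_pow : x ^ p = algebraMap K A a
  right_pow : y ^ p = algebraMap K A b
  qCommute : QCommute ζ x y

lemma ne_zero_of_pow_eq_algebraMap [Nontrivial A] [NeZero p] (ha : a ≠ 0)
    (hx : x ^ p = algebraMap K A a) : x ≠ 0 := by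
  rintro rfl
  rw [zero_pow (NeZero.ne p)] at hx
  exact ha ((map_eq_zero _).1 hx.symm)

lemma isUnit_of_pow_eq_algebraMap [NeZero p] (ha : a ≠ 0) (hx : x ^ p = algebraMap K A a) :
    IsUnit x :=
  (isUnit_pow_iff (NeZero.ne p)).1 (hx ▸ ha.isUnit.map (algebraMap K A))

/-- For different `j`, the `u i * y ^ j` are eigenvectors of conjugation by `x` with different
eigenvalues. -/
lemma linearIndependent_mul_pow {ι : Type*} [Finite ι] (hζ : IsPrimitiveRoot ζ p) (hx : IsUnit x)
    (hy : IsUnit y) (h : QCommute ζ x y) {u : ι → A} (hu : LinearIndependent K u)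
    (hux : ∀ i, Commute x (u i)) :
    LinearIndependent K fun s : ι × Fin p => u s.1 * y ^ (s.2 : ℕ) := by
  cases nonempty_fintype ι
  obtain ⟨x, rfl⟩ := hx
  obtain ⟨y, rfl⟩ := hy
  let T : Module.End K A :=
    LinearMap.mulLeft K (↑x⁻¹ : A) ∘ₗ LinearMap.mulRight K (x : A)
  have hT (i : ι) (j : ℕ) : u i * (y : A) ^ j ∈ T.eigenspace (ζ ^ j) := by
    rw [Module.End.mem_eigenspace_iff]
    simp only [T, LinearMap.comp_apply, LinearMap.mulRight_apply, LinearMap.mulLeft_apply]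
    rw [mul_assoc, h.pow_right j, mul_smul_comm, ← mul_assoc, ← (hux i).eq, mul_smul_comm,
      mul_assoc, Units.inv_mul_cancel_left]
  have hind := (iSupIndep_iff_finsetSum_eq_zero_imp_eq_zero _).1 <|
    (Module.End.eigenspaces_iSupIndep T).comp (f := fun j : Fin p => ζ ^ (j : ℕ))
      fun j j' hj => Fin.ext (hζ.pow_inj j.2 j'.2 hj)
  rw [Fintype.linearIndependent_iff] at hu ⊢
  intro c hc s
  have hcol : ∑ i, c (i, s.2) • (u i * (y : A) ^ (s.2 : ℕ)) = 0 := by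
    refine hind univ (fun j : Fin p => ∑ i, c (i, j) • (u i * (y : A) ^ (j : ℕ))) (fun j _ => ?_)
      ?_ s.2 (mem_univ _)
    · exact sum_mem fun i _ => Submodule.smul_mem _ _ (hT i j)
    · rw [sum_comm, ← Fintype.sum_prod_type', ← hc]
  refine hu (fun i => c (i, s.2)) ?_ s.1
  simp_rw [← smul_mul_assoc, ← sum_mul] at hcol
  exact (y.isUnit.pow _).mul_left_eq_zero.1 hcol

/-- The monomials `x ^ i * y ^ j` with `i, j < p`, which form a basis of a symbol algebra of
degree `p` generated by `x` and `y`. -/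
def skewMonomial (p : ℕ) (x y : A) (s : Fin p × Fin p) : A :=
  x ^ (s.1 : ℕ) * y ^ (s.2 : ℕ)

lemma QCommute.linearIndependent_skewMonomial [Nontrivial A] [NeZero p] (hζ : IsPrimitiveRoot ζ p)
    (h : QCommute ζ x y) (hx : IsUnit x) (hy : IsUnit y) :
    LinearIndependent K (skewMonomial p x y) := by
  have hone : LinearIndependent K fun _ : Unit => (1 : A) := by simp
  have hpow : LinearIndependent K fun i : Fin p => x ^ (i : ℕ) := by
    simpa [Function.comp_def] using
      (linearIndependent_mul_pow hζ.inv hy hx (h.symm (hζ.ne_zero (NeZero.ne p))) hone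
        fun _ => Commute.one_right y).comp (fun i : Fin p => ((), i)) (Prod.mk_right_injective ())
  exact linearIndependent_mul_pow hζ hx hy h hpow fun i => Commute.self_pow x i

lemma pow_eq_smul_pow_mod (hx : x ^ p = algebraMap K A a) (n : ℕ) :
    x ^ n = a ^ (n / p) • x ^ (n % p) := by
  rw [Algebra.smul_def, map_pow, ← hx, ← pow_mul, ← pow_add, Nat.div_add_mod]

namespace IsSymbolPair

variable (h : IsSymbolPair p ζ a b x y)
include h

lemma swap (hζ : ζ ≠ 0) : IsSymbolPair p ζ⁻¹ b a y x :=
  ⟨h.right_pow, h.left_pow, h.qCommute.symm hζ⟩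

lemma map {B : Type*} [Ring B] [Algebra K B] (φ : A →ₐ[K] B) :
    IsSymbolPair p ζ a b (φ x) (φ y) :=
  ⟨by rw [← map_pow, h.left_pow, φ.commutes], by rw [← map_pow, h.right_pow, φ.commutes],
    h.qCommute.map φ⟩

lemma linearIndependent_skewMonomial [Nontrivial A] [NeZero p] (hζ : IsPrimitiveRoot ζ p)
    (ha : a ≠ 0) (hb : b ≠ 0) : LinearIndependent K (skewMonomial p x y) :=
  h.qCommute.linearIndependent_skewMonomial hζ (isUnit_of_pow_eq_algebraMap ha h.left_pow)
    (isUnit_of_pow_eq_algebraMap hb h.right_pow)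

lemma pow_mul_pow_mem_span [NeZero p] (i j : ℕ) :
    x ^ i * y ^ j ∈ Submodule.span K (Set.range (skewMonomial p x y)) := by
  rw [pow_eq_smul_pow_mod h.left_pow i, pow_eq_smul_pow_mod h.right_pow j, smul_mul_smul_comm]
  exact Submodule.smul_mem _ _ <| Submodule.subset_span
    ⟨(⟨i % p, Nat.mod_lt _ (NeZero.pos p)⟩, ⟨j % p, Nat.mod_lt _ (NeZero.pos p)⟩), rfl⟩

lemma span_skewMonomial [NeZero p] (hgen : Algebra.adjoin K {x, y} = ⊤) :
    Submodule.span K (Set.range (skewMonomial p x y)) = ⊤ := by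
  set S := Submodule.span K (Set.range (skewMonomial p x y)) with hS
  have hleft (w : A) (hw : w ∈ Algebra.adjoin K {x, y}) : S ≤ S.comap (LinearMap.mulLeft K w) := by
    induction hw using Algebra.adjoin_induction with
    | mem w hw =>
      refine Submodule.span_le.2 ?_
      rintro _ ⟨⟨i, j⟩, rfl⟩
      change w * (x ^ (i : ℕ) * y ^ (j : ℕ)) ∈ S
      rcases hw with rfl | rfl
      · rw [← mul_assoc, ← pow_succ']
        exact h.pow_mul_pow_mem_span _ _
      · rw [← mul_assoc, h.qCommute.pow_left, smul_mul_assoc, mul_assoc, ← pow_succ']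
        exact S.smul_mem _ (h.pow_mul_pow_mem_span _ _)
    | algebraMap r => exact fun m hm => by simpa [← Algebra.smul_def] using S.smul_mem r hm
    | add v w _ _ hv hw => exact fun m hm => by simpa [add_mul] using S.add_mem (hv hm) (hw hm)
    | mul v w _ _ hv hw => exact fun m hm => by simpa [mul_assoc] using hv (hw hm)
  refine eq_top_iff.2 fun w _ => ?_
  have hone : (1 : A) ∈ S := by simpa using h.pow_mul_pow_mem_span 0 0
  simpa using hleft w (hgen ▸ Algebra.mem_top) hone

lemma span_skewMonomial_of_finrank [Nontrivial A] [NeZero p] (hζ : IsPrimitiveRoot ζ p)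
    (ha : a ≠ 0) (hb : b ≠ 0) (hA : Module.finrank K A = p ^ 2) :
    Submodule.span K (Set.range (skewMonomial p x y)) = ⊤ :=
  (h.linearIndependent_skewMonomial hζ ha hb).span_eq_top_of_card_eq_finrank
    (by simp [hA, sq])

end IsSymbolPair

end SymbolPair

section SymbolStructure

variable {K A : Type*} [Field K] [Ring A] [Algebra K A] {p : ℕ} {ζ a b : K} {x y : A}

lemma QCommute.coeff_eq_zero {ι : Type*} [Fintype ι] {q : ι → K} {v : ι → A} (hx : IsUnit x)
    (hq : ∀ i, QCommute (q i) x (v i)) (hv : LinearIndependent K v) {c : ι → K}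
    (hc : Commute x (∑ i, c i • v i)) {i : ι} (hi : q i ≠ 1) : c i = 0 := by
  have hsum : x * ∑ i, (c i * (q i - 1)) • v i = 0 := by
    rw [← sub_eq_zero.2 hc.symm, mul_sum, mul_sum, sum_mul, ← sum_sub_distrib]
    refine sum_congr rfl fun i _ => ?_
    rw [smul_mul_assoc, hq i, mul_smul_comm, mul_smul_comm, smul_smul, ← sub_smul, mul_sub, mul_one]
  have := Fintype.linearIndependent_iff.1 hv _ (hx.mul_right_eq_zero.1 hsum) i
  exact (mul_eq_zero.1 this).resolve_right (sub_ne_zero.2 hi)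

lemma pow_fin_ne_one_of_primitive [NeZero p] (hζ : IsPrimitiveRoot ζ p) {i : Fin p}
    (hi : i ≠ 0) : ζ ^ (i : ℕ) ≠ 1 :=
  hζ.pow_ne_one_of_pos_of_lt (fun h => hi (Fin.ext h)) i.2

namespace IsSymbolPair

variable (h : IsSymbolPair p ζ a b x y)
include h

lemma qCommute_skewMonomial (s : Fin p × Fin p) :
    QCommute (ζ ^ (s.2 : ℕ)) x (skewMonomial p x y s) :=
  (h.qCommute.pow_right _).commute_mul_right (Commute.self_pow x _)

lemma qCommute_skewMonomial' (hζ : ζ ≠ 0) (s : Fin p × Fin p) :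
    QCommute (ζ⁻¹ ^ (s.1 : ℕ)) y (skewMonomial p x y s) := by
  rw [← mul_one (ζ⁻¹ ^ (s.1 : ℕ))]
  exact ((h.qCommute.symm hζ).pow_right _).mul_right (QCommute.one_iff.2 (Commute.self_pow y _))

variable [Nontrivial A] [NeZero p] (hζ : IsPrimitiveRoot ζ p) (ha : a ≠ 0) (hb : b ≠ 0)
include hζ ha hb

lemma exists_sum_skewMonomial (hA : Module.finrank K A = p ^ 2) (w : A) :
    ∃ c : Fin p × Fin p → K, ∑ s, c s • skewMonomial p x y s = w :=
  (Submodule.mem_span_range_iff_exists_fun K).1 <|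
    (h.span_skewMonomial_of_finrank hζ ha hb hA).symm ▸ Submodule.mem_top

lemma exists_aeval_eq_of_commute (hA : Module.finrank K A = p ^ 2) {w : A} (hw : Commute x w) :
    ∃ f : K[X], aeval x f = w := by
  obtain ⟨c, rfl⟩ := h.exists_sum_skewMonomial hζ ha hb hA w
  have hc (s : Fin p × Fin p) (hs : s.2 ≠ 0) : c s = 0 :=
    QCommute.coeff_eq_zero (isUnit_of_pow_eq_algebraMap ha h.left_pow) h.qCommute_skewMonomial
      (h.linearIndependent_skewMonomial hζ ha hb) hw (pow_fin_ne_one_of_primitive hζ hs)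
  refine ⟨∑ i : Fin p, C (c (i, 0)) * X ^ (i : ℕ), ?_⟩
  rw [Fintype.sum_prod_type, map_sum]
  refine sum_congr rfl fun i _ => ?_
  rw [sum_eq_single 0 (fun j _ hj => by rw [hc (i, j) hj, zero_smul]) (by simp)]
  simp [skewMonomial, Algebra.smul_def]

lemma isCentral (hA : Module.finrank K A = p ^ 2) : Algebra.IsCentral K A := by
  refine ⟨fun w hw => ?_⟩
  rw [Subalgebra.mem_center_iff] at hw
  obtain ⟨c, rfl⟩ := h.exists_sum_skewMonomial hζ ha hb hA w
  have hind := h.linearIndependent_skewMonomial hζ ha hb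
  have hc (s : Fin p × Fin p) (hs : s ≠ 0) : c s = 0 := by
    rcases not_and_or.1 (Prod.ext_iff.not.1 hs) with hs | hs
    · exact QCommute.coeff_eq_zero (isUnit_of_pow_eq_algebraMap hb h.right_pow)
        (h.qCommute_skewMonomial' (hζ.ne_zero (NeZero.ne p))) hind (hw y)
        (pow_fin_ne_one_of_primitive hζ.inv hs)
    · exact QCommute.coeff_eq_zero (isUnit_of_pow_eq_algebraMap ha h.left_pow)
        h.qCommute_skewMonomial hind (hw x) (pow_fin_ne_one_of_primitive hζ hs)
  rw [sum_eq_single 0 (fun s _ hs => by rw [hc s hs, zero_smul]) (by simp)]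
  exact Algebra.mem_bot.2 ⟨c 0, by simp [skewMonomial, Algebra.smul_def]⟩

lemma injective_algHom (hA : Module.finrank K A = p ^ 2) {B : Type*} [Ring B] [Nontrivial B]
    [Algebra K B] (φ : A →ₐ[K] B) : Function.Injective φ := by
  refine (injective_iff_map_eq_zero φ).2 fun w hw => ?_
  obtain ⟨c, rfl⟩ := h.exists_sum_skewMonomial hζ ha hb hA w
  have hc := Fintype.linearIndependent_iff.1
    ((h.map φ).linearIndependent_skewMonomial hζ ha hb) c (by simpa [skewMonomial] using hw)
  simp [hc]

lemma isSimpleRing (hA : Module.finrank K A = p ^ 2) : IsSimpleRing A := by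
  refine IsSimpleRing.of_eq_bot_or_eq_top fun I => or_iff_not_imp_right.2 fun hI => ?_
  have : Nontrivial I.ringCon.Quotient :=
    ⟨1, 0, fun h => hI (I.one_mem_iff.1 ((I.mem_iff _).2 (Quotient.eq'.1 h)))⟩
  rw [← I.ker_ringCon_mk', TwoSidedIdeal.ker_eq_bot]
  exact h.injective_algHom hζ ha hb hA (I.ringCon.mkₐ (α := K))

end IsSymbolPair

end SymbolStructure

section CrossedProduct

variable {K S : Type*} [Field K] [CommRing S] [Algebra K S]

lemma lmul_mul_toLinearMap_pow (z : S) (τ : S →ₐ[K] S) (n : ℕ) :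
    (Algebra.lmul K S z * τ.toLinearMap) ^ n =
      Algebra.lmul K S (∏ i ∈ range n, (τ ^ i) z) * (τ ^ n).toLinearMap := by
  refine LinearMap.ext fun v => ?_
  induction n generalizing v with
  | zero => simp
  | succ n ih =>
    rw [pow_succ, Module.End.mul_apply, ih, prod_range_succ, pow_succ]
    simp [mul_assoc]

/-- Multiplication operators and an automorphism of order `p` represent a symbol algebra on a
commutative algebra. -/
lemma isSymbolPair_lmul {p : ℕ} {ζ a b : K} {x z : S} {τ : S →ₐ[K] S} (hτ : τ ^ p = 1)
    (hx : x ^ p = algebraMap K S a) (hτx : τ x = ζ • x)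
    (hz : ∏ i ∈ range p, (τ ^ i) z = algebraMap K S b) :
    IsSymbolPair p ζ a b (Algebra.lmul K S x) (Algebra.lmul K S z * τ.toLinearMap) where
  left_pow := by rw [← map_pow, hx, AlgHom.commutes]
  right_pow := by
    rw [lmul_mul_toLinearMap_pow, hτ, hz, AlgHom.commutes]
    exact mul_one _
  qCommute := LinearMap.ext fun v => by simp [hτx, mul_left_comm]

/-- The matrix algebra is realised as the endomorphisms of `F[X] ⧸ (X ^ p - a)`, on which the root
acts by multiplication and `X ↦ ζ X` by substitution. -/
lemma exists_isSymbolPair_matrix {F : Type*} [Field F] {p : ℕ} [NeZero p] {ζ : F} (hζ : ζ ^ p = 1)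
    (a θ : F) : ∃ x y : Matrix (Fin p) (Fin p) F, IsSymbolPair p ζ a (θ ^ p) x y := by
  have hmonic : (X ^ p - C a : F[X]).Monic := monic_X_pow_sub_C a (NeZero.ne p)
  set x := AdjoinRoot.root (X ^ p - C a)
  have hx : x ^ p = algebraMap F _ a := by
    have h := AdjoinRoot.eval₂_root (X ^ p - C a)
    rwa [eval₂_sub, eval₂_X_pow, eval₂_C, sub_eq_zero] at h
  let τ : AdjoinRoot (X ^ p - C a) →ₐ[F] AdjoinRoot (X ^ p - C a) :=
    AdjoinRoot.liftAlgHom _ (Algebra.ofId F _) (ζ • x) <| by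
      rw [eval₂_sub, eval₂_X_pow, eval₂_C, _root_.smul_pow, hζ, one_smul, hx]
      exact sub_self _
  have hτx : τ x = ζ • x := AdjoinRoot.liftAlgHom_root ..
  have hτ (i : ℕ) : (τ ^ i) x = ζ ^ i • x := by
    induction i with
    | zero => simp
    | succ i ih => rw [pow_succ, AlgHom.mul_apply, hτx, map_smul, ih, smul_smul, pow_succ']
  have hpair := isSymbolPair_lmul (z := algebraMap F _ θ) (b := θ ^ p)
    (AdjoinRoot.algHom_ext (by rw [hτ, hζ, one_smul]; rfl) : τ ^ p = 1) hx hτx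
    (by simp only [AlgHom.commutes, prod_const, card_range, map_pow])
  let e := algEquivMatrix ((AdjoinRoot.powerBasis' hmonic).basis.reindex
    (finCongr (by simp : _ = p)))
  exact ⟨_, _, hpair.map e.toAlgHom⟩

end CrossedProduct

section SymbolAlgebra

variable {K : Type*} [Field K] (p : ℕ) (ζ a b : K)

/-- The relations of the symbol algebra between the generators `false` and `true`. -/
inductive SymbolRel : FreeAlgebra K Bool → FreeAlgebra K Bool → Prop
  | left_pow : SymbolRel (FreeAlgebra.ι K false ^ p) (algebraMap K _ a)
  | right_pow : SymbolRel (FreeAlgebra.ι K true ^ p) (algebraMap K _ b)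
  | qCommute : SymbolRel (FreeAlgebra.ι K true * FreeAlgebra.ι K false)
      (ζ • (FreeAlgebra.ι K false * FreeAlgebra.ι K true))

/-- The symbol algebra `(a, b)_ζ`: the universal `K`-algebra with a symbol pair. -/
abbrev SymbolAlgebra : Type _ :=
  RingQuot (SymbolRel p ζ a b)

namespace SymbolAlgebra

/-- The first generator of the symbol algebra. -/
def left : SymbolAlgebra p ζ a b :=
  RingQuot.mkAlgHom K (SymbolRel p ζ a b) (FreeAlgebra.ι K false)

/-- The second generator of the symbol algebra. -/
def right : SymbolAlgebra p ζ a b :=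
  RingQuot.mkAlgHom K (SymbolRel p ζ a b) (FreeAlgebra.ι K true)

lemma isSymbolPair : IsSymbolPair p ζ a b (left p ζ a b) (right p ζ a b) where
  left_pow := by
    rw [left, ← map_pow, RingQuot.mkAlgHom_rel K .left_pow, AlgHom.commutes]
  right_pow := by
    rw [right, ← map_pow, RingQuot.mkAlgHom_rel K .right_pow, AlgHom.commutes]
  qCommute := by
    rw [QCommute, left, right, ← map_mul, RingQuot.mkAlgHom_rel K .qCommute, map_smul, map_mul]

lemma adjoin_eq_top : Algebra.adjoin K {left p ζ a b, right p ζ a b} = ⊤ := by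
  have h := congrArg (Subalgebra.map (RingQuot.mkAlgHom K (SymbolRel p ζ a b)))
    (FreeAlgebra.adjoin_range_ι K Bool)
  rw [AlgHom.map_adjoin, ← Set.range_comp, Algebra.map_top,
    (AlgHom.range_eq_top _).2 (RingQuot.mkAlgHom_surjective K _)] at h
  convert h
  ext w
  simp [left, right]

variable {p ζ a b} {A : Type*} [Ring A] [Algebra K A] {x y : A}

lemma exists_algHom (h : IsSymbolPair p ζ a b x y) :
    ∃ φ : SymbolAlgebra p ζ a b →ₐ[K] A, φ (left p ζ a b) = x ∧ φ (right p ζ a b) = y := by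
  let φ := RingQuot.liftAlgHom K (s := SymbolRel p ζ a b)
    ⟨FreeAlgebra.lift K fun i => bif i then y else x, fun u v huv => ?_⟩
  · exact ⟨φ, by simp [φ, left], by simp [φ, right]⟩
  · cases huv with
    | left_pow => simp [h.left_pow]
    | right_pow => simp [h.right_pow]
    | qCommute =>
      simp only [map_mul, map_smul, FreeAlgebra.lift_ι_apply]
      exact h.qCommute

end SymbolAlgebra

lemma isSymbolPair_algebraMap_iff {L A : Type*} [Field L] [Algebra K L] [Ring A] [Algebra K A]
    [Algebra L A] [IsScalarTower K L A] {x y : A} :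
    IsSymbolPair p (algebraMap K L ζ) (algebraMap K L a) (algebraMap K L b) x y ↔
      IsSymbolPair p ζ a b x y := by
  constructor <;> rintro ⟨hx, hy, hxy⟩
  · refine ⟨?_, ?_, ?_⟩
    · rwa [IsScalarTower.algebraMap_apply K L A]
    · rwa [IsScalarTower.algebraMap_apply K L A]
    · rwa [QCommute, algebraMap_smul] at hxy
  · refine ⟨?_, ?_, ?_⟩
    · rwa [← IsScalarTower.algebraMap_apply]
    · rwa [← IsScalarTower.algebraMap_apply]
    · rwa [QCommute, algebraMap_smul]

namespace SymbolAlgebra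

variable {p ζ a b} [NeZero p] (hζ : IsPrimitiveRoot ζ p) (ha : a ≠ 0) (hb : b ≠ 0)

lemma nontrivial (hζ : ζ ^ p = 1) : Nontrivial (SymbolAlgebra p ζ a b) := by
  let L := AlgebraicClosure K
  obtain ⟨θ, hθ⟩ := IsAlgClosed.exists_pow_nat_eq (algebraMap K L b) (NeZero.pos p)
  obtain ⟨x, y, h⟩ := exists_isSymbolPair_matrix (ζ := algebraMap K L ζ)
    (by rw [← map_pow, hζ, map_one]) (algebraMap K L a) θ
  obtain ⟨φ, -⟩ := exists_algHom (isSymbolPair_algebraMap_iff p ζ a b (L := L) |>.1 (hθ ▸ h))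
  exact φ.toRingHom.domain_nontrivial

include hζ ha hb

lemma finrank_eq : Module.finrank K (SymbolAlgebra p ζ a b) = p ^ 2 := by
  have := nontrivial (a := a) (b := b) hζ.pow_eq_one
  have h := isSymbolPair p ζ a b
  have hb := Module.Basis.mk (h.linearIndependent_skewMonomial hζ ha hb)
    (h.span_skewMonomial (adjoin_eq_top p ζ a b)).ge
  rw [Module.finrank_eq_card_basis hb, Fintype.card_prod, Fintype.card_fin, sq]

lemma exists_algEquiv {A : Type*} [Ring A] [Nontrivial A] [Algebra K A] {x y : A}
    (h : IsSymbolPair p ζ a b x y) (hA : Module.finrank K A = p ^ 2) :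
    ∃ e : SymbolAlgebra p ζ a b ≃ₐ[K] A, e (left p ζ a b) = x ∧ e (right p ζ a b) = y := by
  have := nontrivial (a := a) (b := b) hζ.pow_eq_one
  have hdim := finrank_eq hζ ha hb
  have hpos : 0 < p ^ 2 := pow_pos (NeZero.pos p) 2
  have : Module.Finite K (SymbolAlgebra p ζ a b) := Module.finite_of_finrank_pos (hdim ▸ hpos)
  have : Module.Finite K A := Module.finite_of_finrank_pos (hA ▸ hpos)
  obtain ⟨φ, hx, hy⟩ := exists_algHom h
  have hinj := (isSymbolPair p ζ a b).injective_algHom hζ ha hb hdim φ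
  have hsurj := (LinearMap.injective_iff_surjective_of_finrank_eq_finrank
    (f := φ.toLinearMap) (hdim.trans hA.symm)).1 hinj
  exact ⟨AlgEquiv.ofBijective φ ⟨hinj, hsurj⟩, hx, hy⟩

end SymbolAlgebra

namespace IsSymbolPair

variable {p ζ a b} [NeZero p] (hζ : IsPrimitiveRoot ζ p) (ha : a ≠ 0) (hb : b ≠ 0)
  {A A' : Type*} [Ring A] [Nontrivial A] [Algebra K A] [Ring A'] [Algebra K A']
  {x y : A} {x' y' : A'}

include hζ ha hb

lemma exists_algHom (h : IsSymbolPair p ζ a b x y) (hA : Module.finrank K A = p ^ 2)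
    (h' : IsSymbolPair p ζ a b x' y') : ∃ φ : A →ₐ[K] A', φ x = x' ∧ φ y = y' := by
  obtain ⟨e, rfl, rfl⟩ := SymbolAlgebra.exists_algEquiv hζ ha hb h hA
  obtain ⟨φ, rfl, rfl⟩ := SymbolAlgebra.exists_algHom h'
  exact ⟨φ.comp e.symm, by simp, by simp⟩

lemma nonempty_algEquiv [Nontrivial A'] (h : IsSymbolPair p ζ a b x y)
    (hA : Module.finrank K A = p ^ 2) (h' : IsSymbolPair p ζ a b x' y')
    (hA' : Module.finrank K A' = p ^ 2) : Nonempty (A ≃ₐ[K] A') := by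
  obtain ⟨e, -⟩ := SymbolAlgebra.exists_algEquiv hζ ha hb h hA
  obtain ⟨e', -⟩ := SymbolAlgebra.exists_algEquiv hζ ha hb h' hA'
  exact ⟨e.symm.trans e'⟩

end IsSymbolPair

end SymbolAlgebra

section Eigenvector

variable {K V : Type*} [Field K] [AddCommGroup V] [Module K V] {T : Module.End K V} {v : V}

lemma exists_eigenvector_of_aeval_prod_eq_zero {ι : Type*} (s : Finset ι) (r : ι → K) (hv : v ≠ 0)
    (h : aeval T (∏ i ∈ s, (X - C (r i))) v = 0) : ∃ i ∈ s, ∃ w ≠ 0, T w = r i • w := by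
  induction s using Finset.cons_induction with
  | empty => simp [hv] at h
  | cons i s his ih =>
    by_cases hs : aeval T (∏ i ∈ s, (X - C (r i))) v = 0
    · obtain ⟨j, hj, hw⟩ := ih hs
      exact ⟨j, mem_cons_of_mem hj, hw⟩
    · rw [prod_cons, map_mul, Module.End.mul_apply] at h
      refine ⟨i, mem_cons_self i s, _, hs, sub_eq_zero.1 ?_⟩
      simpa [Algebra.algebraMap_eq_smul_one] using h

lemma dvd_of_aeval_apply_eq_zero {f g : K[X]} (hf : Irreducible f) (hv : v ≠ 0)
    (hfv : aeval T f v = 0) (hgv : aeval T g v = 0) : f ∣ g := by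
  refine hf.coprime_iff_not_dvd.not_left.1 fun ⟨a, b, hab⟩ => hv ?_
  simpa [hfv, hgv] using (congrArg (fun f => aeval T f v) hab).symm

lemma exists_aeval_apply_eq {f : K[X]} (hf : Irreducible f) (hv : v ≠ 0)
    (hfv : aeval T f v = 0) (hV : Module.finrank K V = f.natDegree) (w : V) :
    ∃ g : K[X], aeval T g v = w := by
  let φ : degreeLT K f.natDegree →ₗ[K] V :=
    LinearMap.applyₗ v ∘ₗ (aeval T).toLinearMap ∘ₗ (degreeLT K f.natDegree).subtype
  have hφ : Function.Injective φ := by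
    refine (injective_iff_map_eq_zero φ).2 fun g hg => Subtype.ext ?_
    refine eq_zero_of_dvd_of_degree_lt (dvd_of_aeval_apply_eq_zero hf hv hfv hg) ?_
    rw [degree_eq_natDegree hf.ne_zero]
    exact mem_degreeLT.1 g.2
  have hdim : Module.finrank K (degreeLT K f.natDegree) = Module.finrank K V := by
    rw [hV, (degreeLTEquiv K _).finrank_eq, Module.finrank_fin_fun]
  have : FiniteDimensional K (degreeLT K f.natDegree) := (degreeLTEquiv K _).symm.finiteDimensional
  have : FiniteDimensional K V := Module.finite_of_finrank_pos (hV ▸ hf.natDegree_pos)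
  obtain ⟨g, hg⟩ := (LinearMap.injective_iff_surjective_of_finrank_eq_finrank hdim).1 hφ w
  exact ⟨g, hg⟩

variable {p : ℕ} [NeZero p] {ζ : K} (hζ : IsPrimitiveRoot ζ p)
include hζ

lemma exists_eigenvector_of_pow_apply_eq (hv : v ≠ 0) {r : K} (h : (T ^ p) v = r ^ p • v) :
    ∃ i < p, ∃ w ≠ 0, T w = (ζ ^ i * r) • w := by
  obtain ⟨i, hi, hw⟩ := exists_eigenvector_of_aeval_prod_eq_zero (T := T) (range p)
    (fun i => ζ ^ i * r) hv <| by
      rw [← X_pow_sub_C_eq_prod hζ (NeZero.pos p) rfl]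
      rw [map_sub, map_pow, aeval_X, aeval_C, LinearMap.sub_apply, h, Module.algebraMap_end_apply,
        sub_self]
  exact ⟨i, mem_range.1 hi, hw⟩

lemma exists_eigenvector_of_pow_eq_one (hT : T ^ p = 1) (hv : T v ≠ v) :
    ∃ i, 0 < i ∧ i < p ∧ ∃ w ≠ 0, T w = ζ ^ i • w := by
  have hprod : (∏ i ∈ (range p).erase 0, (X - C (ζ ^ i * 1))) * (X - C 1) = X ^ p - C (1 ^ p) := by
    rw [X_pow_sub_C_eq_prod hζ (NeZero.pos p) rfl, mul_comm,
      ← mul_prod_erase _ _ (mem_range.2 (NeZero.pos p)), pow_zero, one_mul]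
  obtain ⟨i, hi, w, hw, hTw⟩ := exists_eigenvector_of_aeval_prod_eq_zero (T := T) (v := T v - v)
    ((range p).erase 0) (fun i => ζ ^ i * 1) (sub_ne_zero.2 hv) <| by
      simpa [hT] using congrArg (fun f => aeval T f v) hprod
  obtain ⟨hi0, hip⟩ := mem_erase.1 hi
  exact ⟨i, Nat.pos_of_ne_zero hi0, mem_range.1 hip, w, hw, by simpa using hTw⟩

end Eigenvector

section KummerNorm

variable {K : Type*} [Field K] {p : ℕ} {ζ a b b' c : K}

/-- `c` is a norm from the Kummer extension `K[X] ⧸ (X ^ p - a)`, whose Galois group is generated by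
`X ↦ ζ X`. -/
def IsKummerNorm (p : ℕ) (ζ a c : K) : Prop :=
  ∃ f : K[X], X ^ p - C a ∣ skewNorm ζ p f - C c

lemma aeval_eq_of_dvd_sub {A : Type*} [Ring A] [Algebra K A] {x : A} {f g : K[X]}
    (hx : x ^ p = algebraMap K A a) (h : X ^ p - C a ∣ f - g) : aeval x f = aeval x g := by
  refine sub_eq_zero.1 ?_
  rw [← map_sub]
  exact aeval_eq_zero_of_dvd_aeval_eq_zero h (by simp [hx])

lemma dvd_of_aeval_eq_zero {A : Type*} [Ring A] [Nontrivial A] [Algebra K A] (hp : p.Prime)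
    (ha : ∀ r : K, r ^ p ≠ a) {x : A} (hx : x ^ p = algebraMap K A a) {f : K[X]}
    (hf : aeval x f = 0) : X ^ p - C a ∣ f := by
  rw [minpoly.eq_of_irreducible_of_monic (X_pow_sub_C_irreducible_of_prime hp ha)
    (show aeval x _ = 0 by simp [hx]) (monic_X_pow_sub_C a hp.ne_zero)]
  exact minpoly.dvd K x hf

lemma ne_zero_of_forall_pow_ne [NeZero p] (ha : ∀ r : K, r ^ p ≠ a) : a ≠ 0 :=
  fun h => ha 0 (by rw [h, zero_pow (NeZero.ne p)])

lemma skewNorm_comp [NeZero p] (hζ : ζ ^ p = 1) (f : K[X]) :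
    (skewNorm ζ p f).comp (C ζ * X) = skewNorm ζ p f := by
  rcases eq_or_ne f 0 with rfl | hf
  · simp [skewNorm, NeZero.ne p]
  refine mul_right_cancel₀ hf ?_
  have hsucc := (prod_range_succ' (fun i => f.comp (C (ζ ^ i) * X)) p).symm.trans
    (prod_range_succ _ p)
  simp only [hζ, pow_zero, C_1, one_mul, comp_X] at hsucc
  rw [skewNorm, ← hsucc, Polynomial.prod_comp]
  simp [comp_assoc, pow_succ, mul_assoc]

lemma isKummerNorm_pow [NeZero p] (hζ : IsPrimitiveRoot ζ p) {x : K} (hx : x ≠ 0) (c : K) :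
    IsKummerNorm p ζ (x ^ p) c := by
  have hnode : Set.InjOn (fun i => ζ ^ i * x) (range p) := fun i hi j hj h =>
    hζ.pow_inj (mem_range.1 hi) (mem_range.1 hj) (mul_right_cancel₀ hx h)
  let f := Lagrange.interpolate (range p) (fun i => ζ ^ i * x) fun i => if i = 0 then c else 1
  have hf (i : ℕ) (hi : i ∈ range p) : eval (ζ ^ i * x) f = if i = 0 then c else 1 :=
    Lagrange.eval_interpolate_at_node _ hnode hi
  have heval (i : ℕ) : eval (ζ ^ i * x) (skewNorm ζ p f) = c := by
    induction i with
    | zero =>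
      have hprod : ∏ i ∈ range p, eval (ζ ^ i * x) f = c := by
        rw [prod_congr rfl hf, prod_ite_eq', if_pos (mem_range.2 (NeZero.pos p))]
      simpa [skewNorm, eval_prod, eval_comp] using hprod
    | succ i ih =>
      rw [← skewNorm_comp hζ.pow_eq_one, eval_comp, eval_mul, eval_C, eval_X] at ih
      rwa [pow_succ', mul_assoc]
  refine ⟨f, ?_⟩
  rw [X_pow_sub_C_eq_prod hζ (NeZero.pos p) rfl]
  refine prod_dvd_of_coprime (fun i hi j hj hij => ?_) fun i _ => ?_
  · exact isCoprime_X_sub_C_of_isUnit_sub (sub_ne_zero.2 (hnode.ne hi hj hij)).isUnit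
  · rw [dvd_iff_isRoot, IsRoot, eval_sub, heval, eval_C, sub_self]

namespace IsSymbolPair

variable {A : Type*} [Ring A] [Algebra K A]

lemma inv {u : Aˣ} {y : A} (h : IsSymbolPair p ζ a b (u : A) y) :
    IsSymbolPair p ζ b a⁻¹ y (↑u⁻¹ : A) where
  left_pow := h.right_pow
  right_pow := by
    rcases subsingleton_or_nontrivial A with _ | _
    · exact Subsingleton.elim _ _
    have ha : a ≠ 0 := by
      rintro rfl
      exact (u ^ p).ne_zero (by simpa using h.left_pow)
    rw [← Units.val_pow_eq_pow_val, inv_pow, Units.inv_eq_of_mul_eq_one_right]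
    rw [Units.val_pow_eq_pow_val, h.left_pow, ← map_mul, mul_inv_cancel₀ ha, map_one]
  qCommute := h.qCommute.inv

lemma exists_aeval_mul {x y : A} (h : IsSymbolPair p ζ a b x y) (hc : IsKummerNorm p ζ a c) :
    ∃ f : K[X], IsSymbolPair p ζ a (c * b) x (aeval x f * y) := by
  obtain ⟨f, hf⟩ := hc
  have hcomm : Commute x (aeval x f) := by
    simpa using (Commute.all X f).map (aeval x)
  refine ⟨f, h.left_pow, ?_, h.qCommute.commute_mul_right hcomm⟩
  rw [h.qCommute.aeval_mul_pow, aeval_eq_of_dvd_sub h.left_pow hf, aeval_C, h.right_pow, map_mul]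

lemma isKummerNorm_div [Nontrivial A] (hp : p.Prime) (hζ : IsPrimitiveRoot ζ p)
    (ha : ∀ r : K, r ^ p ≠ a) (hb : b ≠ 0) (hA : Module.finrank K A = p ^ 2) {x y y' : A}
    (h : IsSymbolPair p ζ a b x y) (h' : IsSymbolPair p ζ a b' x y') :
    IsKummerNorm p ζ a (b' / b) := by
  have : NeZero p := ⟨hp.ne_zero⟩
  obtain ⟨u, rfl⟩ := isUnit_of_pow_eq_algebraMap hb h.right_pow
  have hcomm : Commute x (y' * ↑u⁻¹) := by
    have hζ0 := hζ.ne_zero hp.ne_zero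
    rw [← QCommute.one_iff (K := K), ← mul_inv_cancel₀ hζ0]
    exact h'.qCommute.mul_right (h.qCommute.symm hζ0).inv
  obtain ⟨f, hf⟩ := h.exists_aeval_eq_of_commute hζ (ne_zero_of_forall_pow_ne ha) hb hA hcomm
  refine ⟨f, dvd_of_aeval_eq_zero hp ha h.left_pow ?_⟩
  have hpow := h.qCommute.aeval_mul_pow f p
  rw [hf, Units.inv_mul_cancel_right, h'.right_pow, h.right_pow] at hpow
  rw [map_sub, aeval_C, div_eq_mul_inv, map_mul, hpow, mul_assoc, ← map_mul, mul_inv_cancel₀ hb,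
    map_one, mul_one, sub_self]

end IsSymbolPair

lemma isKummerNorm_of_isSymbolPair_end {V : Type*} [AddCommGroup V] [Module K V] (hp : p.Prime)
    (ha : ∀ r : K, r ^ p ≠ a) (hV : Module.finrank K V = p) {P Q : Module.End K V}
    (h : IsSymbolPair p ζ a b P Q) : IsKummerNorm p ζ a b := by
  have hirr := X_pow_sub_C_irreducible_of_prime hp ha
  have hP (v : V) : aeval P (X ^ p - C a) v = 0 := by simp [h.left_pow]
  have : Nontrivial V := Module.nontrivial_of_finrank_pos (R := K) (hV ▸ hp.pos)
  obtain ⟨v, hv⟩ := exists_ne (0 : V)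
  obtain ⟨f, hf⟩ := exists_aeval_apply_eq hirr hv (hP v) (by simpa using hV) (Q v)
  have hpow (n : ℕ) : (Q ^ n) v = aeval P (skewNorm ζ n f) v := by
    induction n with
    | zero => simp [skewNorm]
    | succ n ih =>
      rw [pow_succ, Module.End.mul_apply, ← hf, ← Module.End.mul_apply,
        (h.qCommute.pow_right n).mul_aeval, Module.End.mul_apply, ih, skewNorm_succ,
        mul_comm (skewNorm ζ n f), map_mul, Module.End.mul_apply]
  refine ⟨f, dvd_of_aeval_apply_eq_zero hirr hv (hP v) ?_⟩
  rw [map_sub, LinearMap.sub_apply, ← hpow, h.right_pow]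
  simp

lemma isKummerNorm_of_isSymbolPair_matrix (hp : p.Prime) (ha : ∀ r : K, r ^ p ≠ a)
    {P Q : Matrix (Fin p) (Fin p) K} (h : IsSymbolPair p ζ a b P Q) : IsKummerNorm p ζ a b :=
  isKummerNorm_of_isSymbolPair_end hp ha (by simp) (h.map Matrix.toLinAlgEquiv'.toAlgHom)

lemma IsKummerNorm.swap (hp : p.Prime) (hζ : ζ ^ p = 1) (ha : a ≠ 0) (hc : ∀ r : K, r ^ p ≠ c)
    (h : IsKummerNorm p ζ a c) : IsKummerNorm p ζ c a⁻¹ := by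
  have : NeZero p := ⟨hp.ne_zero⟩
  obtain ⟨x, y, hxy⟩ := exists_isSymbolPair_matrix hζ a 1
  obtain ⟨u, rfl⟩ := isUnit_of_pow_eq_algebraMap ha hxy.left_pow
  obtain ⟨f, hf⟩ := hxy.exists_aeval_mul h
  rw [one_pow, mul_one] at hf
  exact isKummerNorm_of_isSymbolPair_matrix hp hc (IsSymbolPair.inv hf)

end KummerNorm

section DivisionAlgebra

variable {K B : Type*} [Field K] [DivisionRing B] [Algebra K B] {p : ℕ} {ζ a b b' : K}

lemma forall_pow_ne_of_notMem_bot [NeZero p] (hζ : IsPrimitiveRoot ζ p) {x : B}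
    (hx : x ^ p = algebraMap K B a) (hxK : x ∉ (⊥ : Subalgebra K B)) (r : K) : r ^ p ≠ a := by
  rintro rfl
  obtain ⟨i, -, w, hw, hxw⟩ := exists_eigenvector_of_pow_apply_eq (T := Algebra.lmul K B x) (v := 1)
    hζ one_ne_zero (r := r) (by rw [← map_pow, hx, AlgHom.commutes, Module.algebraMap_end_apply])
  refine hxK (Algebra.mem_bot.2 ⟨ζ ^ i * r, mul_right_cancel₀ hw ?_⟩)
  rw [← Algebra.smul_def]
  exact hxw.symm

lemma mulLeft_inv_mul_mulRight_pow {x x' : B} (ha : a ≠ 0) (hx : x ^ p = algebraMap K B a)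
    (hx' : x' ^ p = algebraMap K B a) :
    (LinearMap.mulLeft K x'⁻¹ * LinearMap.mulRight K x) ^ p = 1 := by
  rw [(LinearMap.commute_mulLeft_right x'⁻¹ x).mul_pow, LinearMap.pow_mulLeft,
    LinearMap.pow_mulRight, inv_pow, hx, hx']
  ext w
  rw [Module.End.mul_apply, LinearMap.mulRight_apply, LinearMap.mulLeft_apply, ← Algebra.commutes,
    inv_mul_cancel_left₀ ((_root_.map_ne_zero _).2 ha), Module.End.one_apply]

lemma mem_bot_of_forall_commute [Algebra.IsCentral K B] {x : B} (hx : ∀ w, Commute x w) :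
    x ∈ (⊥ : Subalgebra K B) :=
  Algebra.IsCentral.center_eq_bot K B ▸ Subalgebra.mem_center_iff.2 fun w => (hx w).symm

lemma QCommute.commute_pow_of_finrank (hζ : IsPrimitiveRoot ζ p) [NeZero p]
    (hB : Module.finrank K B = p ^ 2) {x y : B} (h : QCommute ζ x y) (hx : x ≠ 0) (hy : y ≠ 0)
    (w : B) : Commute (y ^ p) w := by
  have hxy : Commute (y ^ p) x := by
    rw [Commute.symm_iff, ← QCommute.one_iff (K := K), ← hζ.pow_eq_one]
    exact h.pow_right p
  have hw : w ∈ Submodule.span K (Set.range (skewMonomial p x y)) := by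
    rw [(h.linearIndependent_skewMonomial hζ hx.isUnit hy.isUnit).span_eq_top_of_card_eq_finrank
      (by simp [hB, sq])]
    exact Submodule.mem_top
  induction hw using Submodule.span_induction with
  | mem w hw =>
    obtain ⟨s, rfl⟩ := hw
    exact (hxy.pow_right _).mul_right (Commute.pow_pow_self y p _)
  | zero => exact Commute.zero_right _
  | add v w _ _ hv hw => exact hv.add_right hw
  | smul r w _ hw => exact hw.smul_right r

/-- For `y` take an eigenvector of conjugation by `x`. -/
lemma exists_isSymbolPair (hp : p.Prime) [Algebra.IsCentral K B] (hζ : IsPrimitiveRoot ζ p)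
    (hB : Module.finrank K B = p ^ 2) {x : B} (hx : x ^ p = algebraMap K B a)
    (hxK : x ∉ (⊥ : Subalgebra K B)) : ∃ (y : B) (b : K), b ≠ 0 ∧ IsSymbolPair p ζ a b x y := by
  have : NeZero p := ⟨hp.ne_zero⟩
  have ha := ne_zero_of_forall_pow_ne (forall_pow_ne_of_notMem_bot hζ hx hxK)
  have hx0 := ne_zero_of_pow_eq_algebraMap ha hx
  obtain ⟨v, hv⟩ := not_forall.1 (mt mem_bot_of_forall_commute hxK)
  obtain ⟨i, hi, hip, w, hw, hwx⟩ := exists_eigenvector_of_pow_eq_one (v := v) hζ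
    (mulLeft_inv_mul_mulRight_pow ha hx hx)
    (by simpa [inv_mul_eq_iff_eq_mul₀ hx0, eq_comm, commute_iff_eq] using hv)
  have hxw : QCommute (ζ ^ i) x w := by
    simpa [inv_mul_eq_iff_eq_mul₀ hx0, QCommute] using hwx
  have hζi := hζ.pow_of_coprime i
    (hp.coprime_iff_not_dvd.2 (Nat.not_dvd_of_pos_of_lt hi hip)).symm
  obtain ⟨m, -, hm⟩ := hζi.eq_pow_of_pow_eq_one hζ.pow_eq_one
  have hxy : QCommute ζ x (w ^ m) := hm ▸ hxw.pow_right m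
  have hy : w ^ m ≠ 0 := pow_ne_zero m hw
  obtain ⟨b, hb⟩ := Algebra.mem_bot.1 <|
    mem_bot_of_forall_commute (K := K) (hxy.commute_pow_of_finrank hζ hB hx0 hy)
  refine ⟨w ^ m, b, ?_, hx, hb.symm, hxy⟩
  rintro rfl
  exact pow_ne_zero p hy (by rw [← hb, map_zero])

/-- Some conjugation carries `x` to `x'`, which reduces to the case of a common first generator. -/
lemma IsSymbolPair.isKummerNorm_div_of_divisionRing (hp : p.Prime) (hζ : IsPrimitiveRoot ζ p)
    (hB : Module.finrank K B = p ^ 2) (ha : ∀ r : K, r ^ p ≠ a) (hb : b ≠ 0) {x y x' y' : B}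
    (h : IsSymbolPair p ζ a b x y) (h' : IsSymbolPair p ζ a b' x' y') :
    IsKummerNorm p ζ a (b' / b) := by
  have : NeZero p := ⟨hp.ne_zero⟩
  have ha0 := ne_zero_of_forall_pow_ne ha
  have hx' := ne_zero_of_pow_eq_algebraMap ha0 h'.left_pow
  obtain ⟨i, hi, w, hw, hwx⟩ := exists_eigenvector_of_pow_apply_eq (r := 1) hζ one_ne_zero <| by
    rw [mulLeft_inv_mul_mulRight_pow ha0 h.left_pow h'.left_pow, one_pow, one_smul,
      Module.End.one_apply]
  have hwx' : w * x = ζ ^ i • (x' * w) := by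
    simpa [inv_mul_eq_iff_eq_mul₀ hx', QCommute] using hwx
  let u := Units.mk0 (w * y ^ (p - i)) (mul_ne_zero hw
    (pow_ne_zero _ (ne_zero_of_pow_eq_algebraMap hb h.right_pow)))
  have hu : (u : B) * x = x' * u := by
    change w * y ^ (p - i) * x = x' * (w * y ^ (p - i))
    rw [mul_assoc, h.qCommute.pow_right, mul_smul_comm, ← mul_assoc, hwx', smul_mul_assoc,
      smul_smul, ← pow_add, Nat.sub_add_cancel hi.le, hζ.pow_eq_one, one_smul, mul_assoc]
  have hconj := h.map (MulSemiringAction.toAlgHom K B (ConjAct.toConjAct u))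
  have hux : MulSemiringAction.toAlgHom K B (ConjAct.toConjAct u) x = x' := by
    rw [MulSemiringAction.toAlgHom_apply, ConjAct.units_smul_def, ConjAct.ofConjAct_toConjAct, hu,
      Units.mul_inv_cancel_right]
  exact (hux ▸ hconj).isKummerNorm_div hp hζ ha hb hB h'

end DivisionAlgebra

section Splitting

variable {K : Type u} [Field K] {p : ℕ} {ζ a b : K}

lemma IsSymbolPair.isSplit_baseChange [NeZero p] (hζ : IsPrimitiveRoot ζ p) (ha : a ≠ 0)
    (hb : b ≠ 0) {B : Type u} [Ring B] [Algebra K B] (hB : Module.finrank K B = p ^ 2) {x y : B}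
    (h : IsSymbolPair p ζ a b x y) {L : Type u} [Field L] [Algebra K L] {θ : L}
    (hθ : θ ^ p = algebraMap K L a) : IsSplit L (L ⊗[K] B) := by
  have hζL := hζ.map_of_injective (algebraMap K L).injective
  have hdim : Module.finrank L (L ⊗[K] B) = p ^ 2 := by rw [Module.finrank_baseChange, hB]
  have : Nontrivial (L ⊗[K] B) :=
    Module.nontrivial_of_finrank_pos (R := L) (hdim ▸ pow_pos (NeZero.pos p) 2)
  have hpair := (isSymbolPair_algebraMap_iff p ζ a b (L := L)).2
    (h.map (Algebra.TensorProduct.includeRight : B →ₐ[K] L ⊗[K] B))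
  obtain ⟨y', x', hmat⟩ := exists_isSymbolPair_matrix hζL.inv.pow_eq_one (algebraMap K L b) θ
  have hmat' := hmat.swap (inv_ne_zero (hζL.ne_zero (NeZero.ne p)))
  rw [inv_inv, hθ] at hmat'
  exact ⟨p, NeZero.pos p, hpair.nonempty_algEquiv hζL ((_root_.map_ne_zero _).2 ha)
    ((_root_.map_ne_zero _).2 hb) hdim hmat' (by simp [Module.finrank_matrix, sq])⟩

/-- A simple algebra of dimension `p ^ 2` is a division algebra or a matrix algebra over `K`, and in
the latter the second slot of a symbol pair is a norm. -/
lemma exists_isCentralDivisionOfDeg (hp : p.Prime) (hζ : IsPrimitiveRoot ζ p)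
    (ha : ∀ r : K, r ^ p ≠ a) (hb : b ≠ 0) (hab : ¬ IsKummerNorm p ζ a b) :
    ∃ (D : Type u) (_ : DivisionRing D) (_ : Algebra K D), IsCentralDivisionOfDeg K D p ∧
      ∃ x y : D, IsSymbolPair p ζ a b x y := by
  have : NeZero p := ⟨hp.ne_zero⟩
  have ha0 := ne_zero_of_forall_pow_ne ha
  let A := SymbolAlgebra p ζ a b
  have hpair : IsSymbolPair p ζ a b _ _ := SymbolAlgebra.isSymbolPair p ζ a b
  have : Nontrivial A := SymbolAlgebra.nontrivial hζ.pow_eq_one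
  have hA : Module.finrank K A = p ^ 2 := SymbolAlgebra.finrank_eq hζ ha0 hb
  have : Module.Finite K A := Module.finite_of_finrank_pos (hA ▸ pow_pos hp.pos 2)
  have : IsArtinianRing A := IsArtinianRing.of_finite K A
  have : Algebra.IsCentral K A := hpair.isCentral hζ ha0 hb hA
  have : IsSimpleRing A := hpair.isSimpleRing hζ ha0 hb hA
  obtain ⟨n, _, D, _, _, _, ⟨e⟩⟩ := IsSimpleRing.exists_algEquiv_matrix_divisionRing_finite K A
  have hn : n * n * Module.finrank K D = p ^ 2 := by
    rw [← hA, e.toLinearEquiv.finrank_eq, Module.finrank_matrix, Fintype.card_fin]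
  have hdvd : n ∣ p := by
    rw [← Nat.pow_dvd_pow_iff two_ne_zero, ← hn, sq]
    exact dvd_mul_right _ _
  rcases (Nat.dvd_prime hp).1 hdvd with rfl | rfl
  · let e' : A ≃ₐ[K] D := e.trans
      ((Matrix.reindexAlgEquiv K D finOneEquiv).trans Matrix.uniqueAlgEquiv)
    exact ⟨D, _, _, ⟨Algebra.IsCentral.of_algEquiv K A D e', ‹_›, by simpa using hn⟩, _, _,
      hpair.map e'.toAlgHom⟩
  · have hD : Module.finrank K D = 1 :=
      Nat.eq_of_mul_eq_mul_left (Nat.mul_pos hp.pos hp.pos) (by rw [hn, sq, mul_one])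
    let e' : A ≃ₐ[K] Matrix (Fin _) (Fin _) K := e.trans
      (AlgEquiv.ofBijective (Algebra.ofId K D)
        (Algebra.finrank_eq_one_iff_bijective_algebraMap.1 hD)).symm.mapMatrix
    exact absurd (isKummerNorm_of_isSymbolPair_matrix hp ha (hpair.map e'.toAlgHom)) hab

end Splitting

section Subfields

variable {K B : Type*} [Field K] [DivisionRing B] [Algebra K B]

lemma exists_algHom_adjoinRoot {A : Type*} [Ring A] [Algebra K A] {f : K[X]} {x : A}
    (hx : aeval x f = 0) : ∃ φ : AdjoinRoot f →ₐ[K] A, φ (AdjoinRoot.root f) = x := by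
  refine ⟨Ideal.Quotient.liftₐ _ (aeval x) fun g hg => ?_, ?_⟩
  · exact aeval_eq_zero_of_dvd_aeval_eq_zero (Ideal.mem_span_singleton.1 hg) hx
  · exact (Ideal.Quotient.lift_mk _ _ _).trans (aeval_X x)

lemma finrank_dvd_of_algHom {E : Type*} [Field E] [Algebra K E] (φ : E →ₐ[K] B) :
    Module.finrank K E ∣ Module.finrank K B := by
  let _ : Module E B := Module.compHom B φ.toRingHom
  have : IsScalarTower K E B := ⟨fun r e w => by
    change φ (r • e) * w = r • (φ e * w)
    rw [map_smul, smul_mul_assoc]⟩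
  exact ⟨_, (Module.finrank_mul_finrank K E B).symm⟩

lemma commute_of_surjective_algHom {E : Type*} [CommRing E] [Algebra K E] {φ : E →ₐ[K] B}
    (hφ : Function.Surjective φ) (x w : B) : Commute x w := by
  obtain ⟨e, rfl⟩ := hφ x
  obtain ⟨e', rfl⟩ := hφ w
  exact (Commute.all e e').map φ

lemma natDegree_minpoly_of_notMem_bot [Algebra.IsCentral K B] {p : ℕ} (hp : p.Prime)
    (hB : Module.finrank K B = p ^ 2) {x : B} (hx : x ∉ (⊥ : Subalgebra K B)) :
    (minpoly K x).natDegree = p := by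
  have : Module.Finite K B := Module.finite_of_finrank_pos (hB ▸ pow_pos hp.pos 2)
  have hint : IsIntegral K x := Algebra.IsIntegral.isIntegral x
  have : Fact (Irreducible (minpoly K x)) := ⟨minpoly.irreducible hint⟩
  obtain ⟨φ, -⟩ := exists_algHom_adjoinRoot (minpoly.aeval K x)
  have hdim : Module.finrank K (AdjoinRoot (minpoly K x)) = (minpoly K x).natDegree :=
    (AdjoinRoot.powerBasis (minpoly.ne_zero hint)).finrank
  have : Module.Finite K (AdjoinRoot (minpoly K x)) :=
    (AdjoinRoot.powerBasis (minpoly.ne_zero hint)).finite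
  obtain ⟨k, hk, hxk⟩ := (Nat.dvd_prime_pow hp).1 (hB ▸ hdim ▸ finrank_dvd_of_algHom φ)
  interval_cases k
  · exact absurd (Algebra.mem_bot.2 (minpoly.natDegree_eq_one_iff.1 hxk)) hx
  · rwa [pow_one] at hxk
  · have hφ : Function.Surjective φ :=
      (LinearMap.injective_iff_surjective_of_finrank_eq_finrank (f := φ.toLinearMap)
        (by rw [hdim, hxk, hB])).1 φ.toRingHom.injective
    exact absurd (mem_bot_of_forall_commute (commute_of_surjective_algHom hφ x)) hx

lemma exists_algHom_of_finrank_eq_sq [Algebra.IsCentral K B] {p : ℕ} (hp : p.Prime)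
    (hB : Module.finrank K B = p ^ 2) :
    ∃ f : K[X], Irreducible f ∧ f.natDegree = p ∧ Nonempty (AdjoinRoot f →ₐ[K] B) := by
  have : Module.Finite K B := Module.finite_of_finrank_pos (hB ▸ pow_pos hp.pos 2)
  obtain ⟨x, hx⟩ : ∃ x : B, x ∉ (⊥ : Subalgebra K B) := by
    by_contra! h
    have hone := finrank_eq_one (1 : B) one_ne_zero fun w => by
      simpa [Algebra.algebraMap_eq_smul_one] using Algebra.mem_bot.1 (h w)
    rw [hB, Nat.pow_eq_one] at hone
    exact hone.elim hp.ne_one two_ne_zero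
  exact ⟨minpoly K x, minpoly.irreducible (Algebra.IsIntegral.isIntegral x),
    natDegree_minpoly_of_notMem_bot hp hB hx,
    (exists_algHom_adjoinRoot (minpoly.aeval K x)).nonempty⟩

lemma nonempty_algHom_of_pow_eq {p : ℕ} (hp : p.Prime) {E A : Type*} [Field E] [Algebra K E]
    [Ring A] [Algebra K A] (hE : Module.finrank K E = p) {a : K} (ha : ∀ r : K, r ^ p ≠ a) {θ : E}
    (hθ : θ ^ p = algebraMap K E a) {x : A} (hx : x ^ p = algebraMap K A a) :
    Nonempty (E →ₐ[K] A) := by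
  have : Fact (Irreducible (X ^ p - C a)) := ⟨X_pow_sub_C_irreducible_of_prime hp ha⟩
  have hdim : Module.finrank K (AdjoinRoot (X ^ p - C a)) = p :=
    (AdjoinRoot.powerBasis (X_pow_sub_C_ne_zero hp.pos a)).finrank.trans natDegree_X_pow_sub_C
  have : Module.Finite K (AdjoinRoot (X ^ p - C a)) :=
    Module.finite_of_finrank_pos (by rw [hdim]; exact hp.pos)
  have : Module.Finite K E := Module.finite_of_finrank_pos (hE ▸ hp.pos)
  obtain ⟨φ, -⟩ := exists_algHom_adjoinRoot (f := X ^ p - C a) (x := x) (by simp [hx])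
  obtain ⟨ψ, -⟩ := exists_algHom_adjoinRoot (f := X ^ p - C a) (x := θ) (by simp [hθ])
  have hψ : Function.Surjective ψ :=
    (LinearMap.injective_iff_surjective_of_finrank_eq_finrank (f := ψ.toLinearMap)
      (by rw [hdim, hE])).1 ψ.toRingHom.injective
  exact ⟨φ.comp (AlgEquiv.ofBijective ψ ⟨ψ.toRingHom.injective, hψ⟩).symm.toAlgHom⟩

/-- A nonzero `v : V` gives a bijection `w ↦ w • v` from `B` to `V`, which carries the action of `E`
on `V` to right multiplications on `B`. -/
lemma nonempty_algHom_of_algHom_end [FiniteDimensional K B] {E V : Type*} [Field E] [Algebra K E]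
    [AddCommGroup V] [Module K V] [Module E V] [IsScalarTower K E V]
    (hV : Module.finrank K V = Module.finrank K B) (φ : B →ₐ[K] Module.End E V) :
    Nonempty (E →ₐ[K] B) := by
  have hBpos : 0 < Module.finrank K B := Module.finrank_pos
  have : FiniteDimensional K V := Module.finite_of_finrank_pos (hV ▸ hBpos)
  have : Nontrivial V := Module.nontrivial_of_finrank_pos (R := K) (hV ▸ hBpos)
  obtain ⟨v, hv⟩ := exists_ne (0 : V)
  let T : B →ₗ[K] V :=
    { toFun w := φ w v
      map_add' w w' := by simp
      map_smul' r w := by simp }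
  have hT : Function.Injective T := by
    refine (injective_iff_map_eq_zero T).2 fun w (hw : φ w v = 0) => by_contra fun hw0 => hv ?_
    rw [← Module.End.one_apply (R := E) v, ← map_one φ, ← inv_mul_cancel₀ hw0, map_mul,
      Module.End.mul_apply, hw, map_zero]
  let e := LinearEquiv.ofInjectiveOfFinrankEq T hT hV.symm
  have he (w : B) : e w = φ w v := rfl
  have hmul (r r' : E) : e.symm (r • r' • v) = e.symm (r • v) * e.symm (r' • v) := by
    rw [LinearEquiv.symm_apply_eq, he, map_mul, Module.End.mul_apply, ← he (e.symm _),
      LinearEquiv.apply_symm_apply, map_smul, ← he, LinearEquiv.apply_symm_apply, smul_comm]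
  refine ⟨AlgHom.ofLinearMap
    (e.symm.toLinearMap ∘ₗ (LinearMap.toSpanSingleton E V v).restrictScalars K) ?_ fun r r' => ?_⟩
  · simp [LinearEquiv.symm_apply_eq, he]
  · simp [mul_smul, hmul]

end Subfields

/-- A field over which the `(α, b n)` are pairwise nonisomorphic division algebras, every extension
of degree `p` is a Kummer extension, every division symbol algebra `(ℓ, c)` of degree `p` is split
by `K(α ^ (1 / p))`, and, unless `K(ℓ ^ (1 / p))` embeds in `K(α ^ (1 / p))`, every `c` can be
multiplied by some `t ^ p - α` to become a norm from `K((ℓ / α) ^ (1 / p))`. -/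
structure IsSymbolLinked (p : ℕ) {K : Type u} [Field K] (ζ α : K) (b : ℕ → K) : Prop where
  isPrimitiveRoot : IsPrimitiveRoot ζ p
  forall_pow_ne (r : K) : r ^ p ≠ α
  not_isKummerNorm (n : ℕ) : ¬ IsKummerNorm p ζ α (b n)
  not_isKummerNorm_div (n m : ℕ) : n ≠ m → ¬ IsKummerNorm p ζ α (b n / b m)
  exists_root (L : Type u) [Field L] [Algebra K L] : Module.finrank K L = p →
    ∃ (θ : L) (ℓ : K), θ ^ p = algebraMap K L ℓ ∧ ∀ r : K, r ^ p ≠ ℓ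
  isKummerNorm_or_split (ℓ c : K) : (∀ r : K, r ^ p ≠ ℓ) → IsKummerNorm p ζ ℓ c ∨
    ∃ (E : Type u) (_ : Field E) (_ : Algebra K E) (μ : E), Module.finrank K E = p ∧
      μ ^ p = algebraMap K E α ∧
      IsKummerNorm p (algebraMap K E ζ) (algebraMap K E ℓ) (algebraMap K E c)
  dvd_or_exists_isKummerNorm (ℓ c : K) : c ≠ 0 →
    (∃ f : K[X], X ^ p - C α ∣ f ^ p - C ℓ) ∨ ∃ t : K, IsKummerNorm p ζ (ℓ / α) (c * (t ^ p - α))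

section DivisionSymbolPair

variable {K B : Type*} [Field K] [DivisionRing B] [Algebra K B] {p : ℕ} {ζ a b c : K} {x y : B}

lemma QCommute.right_notMem_bot (hζ : ζ ≠ 1) (h : QCommute ζ x y) (hx : x ≠ 0) (hy : y ≠ 0) :
    y ∉ (⊥ : Subalgebra K B) := fun hyK => by
  obtain ⟨r, rfl⟩ := Algebra.mem_bot.1 hyK
  have h1 : (ζ - 1) • (x * algebraMap K B r) = 0 := by
    rw [sub_smul, ← h, one_smul, Algebra.commutes, sub_self]
  exact smul_ne_zero (sub_ne_zero.2 hζ) (mul_ne_zero hx hy) h1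

lemma notMem_bot_of_pow_eq (hx : x ^ p = algebraMap K B a) (ha : ∀ r : K, r ^ p ≠ a) :
    x ∉ (⊥ : Subalgebra K B) := fun hxK => by
  obtain ⟨r, rfl⟩ := Algebra.mem_bot.1 hxK
  exact ha r ((algebraMap K B).injective (by rw [map_pow, hx]))

lemma IsSymbolPair.forall_pow_ne_right (hp : p.Prime) (hζ : IsPrimitiveRoot ζ p) (ha : a ≠ 0)
    (hb : b ≠ 0) (h : IsSymbolPair p ζ a b x y) (r : K) : r ^ p ≠ b :=
  have : NeZero p := ⟨hp.ne_zero⟩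
  forall_pow_ne_of_notMem_bot hζ h.right_pow
    (h.qCommute.right_notMem_bot (hζ.ne_one hp.one_lt) (ne_zero_of_pow_eq_algebraMap ha h.left_pow)
      (ne_zero_of_pow_eq_algebraMap hb h.right_pow)) r

lemma IsKummerNorm.zero (hp : p ≠ 0) : IsKummerNorm p ζ a 0 :=
  ⟨0, by simp [skewNorm, hp]⟩

lemma IsKummerNorm.inv (hp : p.Prime) (hζ : IsPrimitiveRoot ζ p) (ha : ∀ r : K, r ^ p ≠ a)
    (hc : IsKummerNorm p ζ a c) : IsKummerNorm p ζ a c⁻¹ := by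
  have : NeZero p := ⟨hp.ne_zero⟩
  rcases eq_or_ne c 0 with rfl | hc0
  · rwa [inv_zero]
  obtain ⟨x, y, h⟩ := exists_isSymbolPair_matrix hζ.pow_eq_one a 1
  obtain ⟨f, hf⟩ := h.exists_aeval_mul hc
  simpa using hf.isKummerNorm_div hp hζ ha (by simpa) (by simp [Module.finrank_matrix, sq]) h

lemma IsSymbolPair.not_isKummerNorm (hp : p.Prime) (hζ : IsPrimitiveRoot ζ p)
    (ha : ∀ r : K, r ^ p ≠ a) (hb : b ≠ 0) (h : IsSymbolPair p ζ a b x y) :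
    ¬ IsKummerNorm p ζ a b := fun hab => by
  have : NeZero p := ⟨hp.ne_zero⟩
  obtain ⟨f, hf⟩ := h.exists_aeval_mul (hab.inv hp hζ ha)
  rw [inv_mul_cancel₀ hb] at hf
  exact hf.forall_pow_ne_right hp hζ (ne_zero_of_forall_pow_ne ha) one_ne_zero 1 (one_pow p)

lemma IsSymbolPair.nonempty_algHom_of_isKummerNorm (hp : p.Prime) (hζ : IsPrimitiveRoot ζ p)
    (ha : a ≠ 0) (hb : b ≠ 0) (hB : Module.finrank K B = p ^ 2) (h : IsSymbolPair p ζ a b x y)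
    {E : Type*} [Field E] [Algebra K E] (hE : Module.finrank K E = p)
    (hab : IsKummerNorm p (algebraMap K E ζ) (algebraMap K E a) (algebraMap K E b)) :
    Nonempty (E →ₐ[K] B) := by
  have : NeZero p := ⟨hp.ne_zero⟩
  have : FiniteDimensional K B := Module.finite_of_finrank_pos (hB ▸ pow_pos hp.pos 2)
  obtain ⟨x', y', h'⟩ := exists_isSymbolPair_matrix
    (hζ.map_of_injective (algebraMap K E).injective).pow_eq_one (algebraMap K E a) 1
  obtain ⟨f, hf⟩ := h'.exists_aeval_mul hab
  rw [one_pow, mul_one, isSymbolPair_algebraMap_iff] at hf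
  obtain ⟨φ, -⟩ := h.exists_algHom hζ ha hb hB hf
  let ψ : Matrix (Fin p) (Fin p) E →ₐ[K] Module.End E (Fin p → E) :=
    Matrix.toLinAlgEquiv'.toAlgHom.restrictScalars K
  have : FiniteDimensional K E := Module.finite_of_finrank_pos (hE ▸ hp.pos)
  exact nonempty_algHom_of_algHom_end (by rw [Module.finrank_pi_fintype, hB]; simp [hE, sq])
    (ψ.comp φ)

end DivisionSymbolPair

namespace IsSymbolLinked

variable {p : ℕ} {K : Type u} [Field K] {ζ α : K} {b : ℕ → K} (H : IsSymbolLinked p ζ α b)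
  (hp : p.Prime)

include H hp

section Embedding

variable {B : Type u} [DivisionRing B] [Algebra K B] [Algebra.IsCentral K B]
  (hB : Module.finrank K B = p ^ 2)

include hB

lemma exists_pow_eq : ∃ x : B, x ^ p = algebraMap K B α := by
  have : NeZero p := ⟨hp.ne_zero⟩
  obtain ⟨f, hf, hfp, ⟨φ⟩⟩ := exists_algHom_of_finrank_eq_sq hp hB
  have : Fact (Irreducible f) := ⟨hf⟩
  obtain ⟨θ, ℓ, hθ, hℓ⟩ := H.exists_root (AdjoinRoot f)
    ((AdjoinRoot.powerBasis hf.ne_zero).finrank.trans hfp)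
  have hx : φ θ ^ p = algebraMap K B ℓ := by rw [← map_pow, hθ, AlgHom.commutes]
  obtain ⟨y, c, hc, h⟩ := exists_isSymbolPair hp H.isPrimitiveRoot hB hx
    (notMem_bot_of_pow_eq hx hℓ)
  obtain ⟨E, _, _, μ, hE, hμ, hEc⟩ := (H.isKummerNorm_or_split ℓ c hℓ).resolve_left
    (h.not_isKummerNorm hp H.isPrimitiveRoot hℓ hc)
  obtain ⟨ψ⟩ := h.nonempty_algHom_of_isKummerNorm hp H.isPrimitiveRoot
    (ne_zero_of_forall_pow_ne hℓ) hc hB hE hEc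
  exact ⟨ψ μ, by rw [← map_pow, hμ, AlgHom.commutes]⟩

/-- Multiplying `y` by `t - x` replaces the slot `c` of `(α, c)` by `c * (t ^ p - α)`. -/
lemma exists_pow_eq_of_forall_pow_ne {ℓ : K} (hℓ : ∀ r : K, r ^ p ≠ ℓ) :
    ∃ x : B, x ^ p = algebraMap K B ℓ := by
  have : NeZero p := ⟨hp.ne_zero⟩
  have hα := ne_zero_of_forall_pow_ne H.forall_pow_ne
  obtain ⟨x, hx⟩ := H.exists_pow_eq hp hB
  obtain ⟨y, c, hc, h⟩ := exists_isSymbolPair hp H.isPrimitiveRoot hB hx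
    (notMem_bot_of_pow_eq hx H.forall_pow_ne)
  obtain ⟨f, hf⟩ | ⟨t, ht⟩ := H.dvd_or_exists_isKummerNorm ℓ c hc
  · exact ⟨aeval x f, by rw [← map_pow, aeval_eq_of_dvd_sub hx hf, aeval_C]⟩
  have hnorm : IsKummerNorm p ζ α (t ^ p - α) :=
    ⟨C t - X, by
      rw [skewNorm_C_sub_X H.isPrimitiveRoot, C_sub, sub_sub_sub_cancel_left]
      exact ⟨-1, by ring⟩⟩
  obtain ⟨g, hg⟩ := h.exists_aeval_mul hnorm
  have hd : (t ^ p - α) * c ≠ 0 := mul_ne_zero (sub_ne_zero.2 (H.forall_pow_ne t)) hc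
  have hdp := hg.forall_pow_ne_right hp H.isPrimitiveRoot hα hd
  obtain ⟨u, rfl⟩ := isUnit_of_pow_eq_algebraMap hα hx
  rw [mul_comm c] at ht
  obtain ⟨g', hg'⟩ := hg.inv.exists_aeval_mul
    (ht.swap hp H.isPrimitiveRoot.pow_eq_one (div_ne_zero (ne_zero_of_forall_pow_ne hℓ) hα) hdp)
  refine ⟨(aeval (aeval (u : B) g * y) g' * (u⁻¹ : Bˣ))⁻¹, ?_⟩
  rw [inv_pow, hg'.right_pow, ← map_inv₀]
  congr 1
  field

end Embedding

theorem nonempty_commonGenusWitness : Nonempty (CommonGenusWitness.{u} p) := by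
  have : NeZero p := ⟨hp.ne_zero⟩
  have hb (n : ℕ) : b n ≠ 0 := fun hn =>
    H.not_isKummerNorm n (hn ▸ IsKummerNorm.zero hp.ne_zero)
  have exists_pow_eq {L : Type u} [Field L] [Algebra K L] (hL : Module.finrank K L = p) :
      ∃ (θ : L) (ℓ : K), θ ^ p = algebraMap K L ℓ ∧ (∀ r : K, r ^ p ≠ ℓ) ∧
        ∀ (B : Type u) [DivisionRing B] [Algebra K B], IsCentralDivisionOfDeg K B p →
          ∃ x : B, x ^ p = algebraMap K B ℓ := by
    obtain ⟨θ, ℓ, hθ, hℓ⟩ := H.exists_root L hL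
    refine ⟨θ, ℓ, hθ, hℓ, fun B _ _ hB => ?_⟩
    have := hB.1
    exact H.exists_pow_eq_of_forall_pow_ne hp hB.2.2 hℓ
  choose D _ _ hD x y hxy using fun n => exists_isCentralDivisionOfDeg hp H.isPrimitiveRoot
    H.forall_pow_ne (hb n) (H.not_isKummerNorm n)
  refine ⟨{ K := K, D := D, hD := hD, noniso := ?_, allSplit := ?_, sameGenus := ?_ }⟩
  · refine fun n m hnm => ⟨fun e => H.not_isKummerNorm_div m n hnm.symm ?_⟩
    have := (hD m).1
    exact (hxy n).map e.toAlgHom |>.isKummerNorm_div_of_divisionRing hp H.isPrimitiveRoot (hD m).2.2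
      H.forall_pow_ne (hb n) (hxy m)
  · intro L _ _ hL B _ _ hB
    have := hB.1
    obtain ⟨θ, ℓ, hθ, hℓ, h⟩ := exists_pow_eq hL
    obtain ⟨x, hx⟩ := h B hB
    obtain ⟨y, c, hc, hxy⟩ := exists_isSymbolPair hp H.isPrimitiveRoot hB.2.2 hx
      (notMem_bot_of_pow_eq hx hℓ)
    exact hxy.isSplit_baseChange H.isPrimitiveRoot (ne_zero_of_forall_pow_ne hℓ) hc hB.2.2 hθ
  · intro B B' _ _ _ _ hB hB' L _ _ hL
    obtain ⟨θ, ℓ, hθ, hℓ, h⟩ := exists_pow_eq hL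
    obtain ⟨x, hx⟩ := h B hB
    obtain ⟨x', hx'⟩ := h B' hB'
    exact ⟨fun _ => nonempty_algHom_of_pow_eq hp hL hℓ hθ hx',
      fun _ => nonempty_algHom_of_pow_eq hp hL hℓ hθ hx⟩

end IsSymbolLinked

/-! ### Norms from generic cyclic extensions -/

/-- The norm `x * σ x * ⋯ * σ ^ (p - 1) x` along `p` iterates of `σ`. Nothing is assumed of `σ`:
it is the norm to the fixed ring when `σ` has order `p`. -/
def cyclicNorm {N : Type*} [CommSemiring N] (p : ℕ) (σ : N →+* N) : N →* N :=
  ∏ i ∈ range p, ((σ ^ i : N →+* N) : N →* N)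

section CyclicNorm

variable {N : Type*} [CommRing N] {p : ℕ} {σ τ : N →+* N}

lemma cyclicNorm_apply (p : ℕ) (σ : N →+* N) (x : N) :
    cyclicNorm p σ x = ∏ i ∈ range p, σ^[i] x := by
  simp [cyclicNorm, MonoidHom.finsetProd_apply]

lemma cyclicNorm_of_fixed {x : N} (hx : σ x = x) : cyclicNorm p σ x = x ^ p := by
  rw [cyclicNorm_apply, prod_congr rfl fun i _ => Function.iterate_fixed hx i]
  simp

lemma map_cyclicNorm {M : Type*} [CommRing M] {ρ : M →+* M} {f : N →+* M}
    (h : f.comp σ = ρ.comp f) (x : N) : f (cyclicNorm p σ x) = cyclicNorm p ρ (f x) := by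
  rw [cyclicNorm_apply, cyclicNorm_apply, map_prod]
  have hsc : Function.Semiconj f σ ρ := DFunLike.congr_fun h
  exact prod_congr rfl fun i _ => hsc.iterate_right i x

lemma cyclicNorm_ne_zero [IsDomain N] (hσ : Function.Injective σ) {x : N} (hx : x ≠ 0) :
    cyclicNorm p σ x ≠ 0 := by
  rw [cyclicNorm_apply, prod_ne_zero_iff]
  exact fun i _ h => hx (hσ.iterate i (by rw [h, iterate_map_zero]))

lemma injective_of_pow_eq_one [NeZero p] (hσ : σ ^ p = 1) : Function.Injective σ := by
  obtain ⟨u, rfl⟩ := IsUnit.of_pow_eq_one hσ (NeZero.ne p)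
  exact Function.LeftInverse.injective (DFunLike.congr_fun u.inv_mul)

lemma iterate_apply_of_pow_eq_one (hσ : σ ^ p = 1) (x : N) : σ^[p] x = x := by
  rw [← RingHom.coe_pow, hσ, RingHom.one_def, RingHom.id_apply]

/-- The telescoping identity behind the invariance of the norm and Hilbert's theorem 90. -/
lemma mul_map_prod_iterate (σ : N →+* N) (x : N) (k : ℕ) :
    x * σ (∏ i ∈ range k, σ^[i] x) = (∏ i ∈ range k, σ^[i] x) * σ^[k] x := by
  rw [← prod_range_succ, prod_range_succ', map_prod, mul_comm]
  simp only [Function.iterate_succ_apply', Function.iterate_zero, id]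

lemma cyclicNorm_map [NeZero p] (hσ : σ ^ p = 1) (x : N) :
    cyclicNorm p σ (σ x) = cyclicNorm p σ x := by
  obtain ⟨n, rfl⟩ := Nat.exists_eq_succ_of_ne_zero (NeZero.ne p)
  rw [cyclicNorm_apply, cyclicNorm_apply, prod_range_succ, prod_range_succ',
    ← Function.iterate_succ_apply, iterate_apply_of_pow_eq_one hσ]
  rfl

lemma cyclicNorm_iterate [NeZero p] (hσ : σ ^ p = 1) (x : N) (k : ℕ) :
    cyclicNorm p σ (σ^[k] x) = cyclicNorm p σ x := by
  induction k with
  | zero => rfl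
  | succ k ih => rw [Function.iterate_succ_apply', cyclicNorm_map hσ, ih]

lemma dvd_cyclicNorm [NeZero p] (σ : N →+* N) (x : N) : x ∣ cyclicNorm p σ x := by
  rw [cyclicNorm_apply]
  exact dvd_prod_of_mem (fun i => σ^[i] x) (mem_range.2 (NeZero.pos p))

lemma associated_map_of_dvd [IsDomain N] [NeZero p] (hσ : σ ^ p = 1) {a : N} (ha : a ≠ 0)
    (h : a ∣ σ a) : Associated a (σ a) := by
  obtain ⟨v, hv⟩ := h
  have hv1 : cyclicNorm p σ v = 1 := by
    apply mul_left_cancel₀ (cyclicNorm_ne_zero (p := p) (injective_of_pow_eq_one hσ) ha)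
    rw [← map_mul, ← hv, cyclicNorm_map hσ, mul_one]
  exact ⟨(isUnit_of_dvd_one (hv1 ▸ dvd_cyclicNorm σ v)).unit, hv.symm⟩

/-- **Hilbert's theorem 90** for an endomorphism of order `p`. -/
lemma exists_mul_eq_map_of_cyclicNorm_eq_one {N : Type*} [Field N] {σ : N →+* N} (hp : 0 < p)
    (hσ : orderOf σ = p) {m : N} (hm : cyclicNorm p σ m = 1) : ∃ w ≠ 0, m * w = σ w := by
  have hσp : σ ^ p = 1 := hσ ▸ pow_orderOf_eq_one σ
  rw [cyclicNorm_apply] at hm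
  let M (i : ℕ) : N := ∏ k ∈ range i, σ^[k] m
  -- Dedekind: the resolvent `∑ M i * σ ^ i` is not identically zero
  obtain ⟨x, hx⟩ : ∃ x, ∑ i ∈ range p, M i * σ^[i] x ≠ 0 := by
    have hinj : Function.Injective fun i : Fin p => ((σ ^ (i : ℕ) : N →+* N) : N →* N) := by
      subst hσ
      exact fun i j hij => Fin.ext <| pow_injOn_Iio_orderOf (Set.mem_Iio.2 i.2) (Set.mem_Iio.2 j.2)
        <| RingHom.ext fun x => DFunLike.congr_fun hij x
    have hli := (linearIndependent_monoidHom N N).comp _ hinj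
    by_contra! h
    have h0 := Fintype.linearIndependent_iff.1 hli (fun i => M i)
      (funext fun x => by simpa [Finset.sum_range] using h x) ⟨0, hp⟩
    simp [M] at h0
  set v := ∑ i ∈ range p, M i * σ^[i] x with hv
  have hσv : m * σ v = v := by
    have hterm (i : ℕ) : m * σ (M i * σ^[i] x) = M (i + 1) * σ^[i + 1] x := by
      rw [map_mul, ← mul_assoc, mul_map_prod_iterate, ← prod_range_succ,
        Function.iterate_succ_apply']
    have hlast : M p * σ^[p] x = M 0 * σ^[0] x := by
      rw [iterate_apply_of_pow_eq_one hσp]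
      simp [M, hm]
    rw [hv, map_sum, mul_sum, sum_congr rfl fun i _ => hterm i]
    apply add_right_cancel (b := M 0 * σ^[0] x)
    rw [← sum_range_succ' fun i => M i * σ^[i] x, sum_range_succ, hlast]
  have hσv0 : σ v ≠ 0 := (_root_.map_ne_zero σ).2 hx
  refine ⟨v⁻¹, inv_ne_zero hx, ?_⟩
  rw [map_inv₀]
  field_simp
  exact hσv

lemma cyclicNorm_div {N : Type*} [Field N] (p : ℕ) (σ : N →+* N) (x y : N) :
    cyclicNorm p σ (x / y) = cyclicNorm p σ x / cyclicNorm p σ y := by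
  simp only [cyclicNorm_apply, ← RingHom.coe_pow, map_div₀, prod_div_distrib]

variable [IsDomain N] [UniqueFactorizationMonoid N] [NeZero p]

/-- Hilbert's theorem 90 up to units, one prime factor at a time: a prime factor `π` of `A` has a
conjugate dividing `B`, and `π` and this conjugate differ by a coboundary. -/
lemma exists_associated_mul_map (hσ : σ ^ p = 1) {A B : N} (hA : A ≠ 0) (hB : B ≠ 0)
    (h : Associated (cyclicNorm p σ A) (cyclicNorm p σ B)) :
    ∃ g ≠ 0, Associated (A * σ g) (B * g) := by
  have hinj := injective_of_pow_eq_one hσ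
  induction A using UniqueFactorizationMonoid.induction_on_prime generalizing B with
  | h₁ => exact absurd rfl hA
  | h₂ x hx =>
    have hBu : IsUnit B := isUnit_of_dvd_unit (dvd_cyclicNorm σ B) (h.isUnit (hx.map _))
    have hxB : Associated x B :=
      (associated_one_iff_isUnit.2 hx).trans (associated_one_iff_isUnit.2 hBu).symm
    exact ⟨1, one_ne_zero, by simpa using hxB⟩
  | h₃ a π ha hπ ih =>
    have hπB : π ∣ cyclicNorm p σ B :=
      ((dvd_cyclicNorm σ π).trans ⟨_, map_mul _ _ _⟩).trans h.dvd
    rw [cyclicNorm_apply] at hπB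
    obtain ⟨i, hi, w, hw⟩ := hπ.exists_mem_finset_dvd hπB
    obtain ⟨k, rfl⟩ := Nat.exists_eq_add_of_lt (mem_range.1 hi)
    set k' := k + 1 with hk'
    have hB' : B = σ^[k'] π * σ^[k'] w := by
      rw [← iterate_map_mul, ← hw, ← Function.iterate_add_apply, hk', add_comm,
        ← add_assoc, iterate_apply_of_pow_eq_one hσ]
    have hB'0 : σ^[k'] w ≠ 0 := right_ne_zero_of_mul (hB' ▸ hB)
    rw [hB', map_mul, map_mul, cyclicNorm_iterate hσ] at h
    obtain ⟨g, hg, hgn⟩ := ih ha hB'0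
      (h.of_mul_left (Associated.refl _) (cyclicNorm_ne_zero hinj hπ.ne_zero))
    refine ⟨g * ∏ i ∈ range k', σ^[i] π, mul_ne_zero hg (prod_ne_zero_iff.2 fun i _ h0 =>
      hπ.ne_zero (hinj.iterate i (by rw [h0, iterate_map_zero]))), ?_⟩
    have hcob := mul_map_prod_iterate σ π k'
    have hleft : π * a * σ (g * ∏ i ∈ range k', σ^[i] π) =
        a * σ g * ((∏ i ∈ range k', σ^[i] π) * σ^[k'] π) := by
      rw [map_mul, ← hcob]
      ring
    have hright : B * (g * ∏ i ∈ range k', σ^[i] π) =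
        σ^[k'] w * g * ((∏ i ∈ range k', σ^[i] π) * σ^[k'] π) := by
      rw [hB']
      ring
    rw [hleft, hright]
    exact hgn.mul_mul (Associated.refl _)

/-- Among the solutions `g` of `A * σ g ~ B * g` one of least factorization divides `τ g`,
because `τ g` is again a solution and hence so is their greatest common divisor. -/
lemma exists_associated_mul_map_dvd (hσ : σ ^ p = 1) (hτ : Function.Injective τ)
    (hcomm : Commute σ τ) {A B : N} (hA : A ≠ 0) (hB : B ≠ 0) (hfix : τ A * B = A * τ B)
    (h : Associated (cyclicNorm p σ A) (cyclicNorm p σ B)) :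
    ∃ g ≠ 0, Associated (A * σ g) (B * g) ∧ g ∣ τ g := by
  have hσi := injective_of_pow_eq_one hσ
  let S : Set N := {g | g ≠ 0 ∧ Associated (A * σ g) (B * g)}
  obtain ⟨g, ⟨hg, hgn⟩, hmin⟩ := WellFounded.has_min
    (IsWellFounded.wf (r := (DvdNotUnit : N → N → Prop))) S (exists_associated_mul_map hσ hA hB h)
  have hτgn : Associated (A * σ (τ g)) (B * τ g) := by
    refine Associated.of_mul_left ?_ (Associated.refl (τ B)) ((map_ne_zero_iff τ hτ).2 hB)
    have hleft : τ B * (A * σ (τ g)) = τ (A * σ g) * B := by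
      rw [map_mul, show σ (τ g) = τ (σ g) from DFunLike.congr_fun hcomm g]
      linear_combination -τ (σ g) * hfix
    have hright : τ B * (B * τ g) = τ (B * g) * B := by
      rw [map_mul]
      ring
    rw [hleft, hright]
    exact (hgn.map τ).mul_mul (Associated.refl B)
  obtain ⟨a, b, d, hab, rfl, hdb⟩ := UniqueFactorizationMonoid.exists_reduced_factors g hg (τ g)
  obtain ⟨hd, ha⟩ := mul_ne_zero_iff.1 hg
  have hσd := (map_ne_zero_iff σ hσi).2 hd
  rw [← hdb] at hτgn
  have hcross : Associated (σ a * b) (a * σ b) := by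
    refine Associated.of_mul_left ?_ (Associated.refl (A * B * d * σ d))
      (mul_ne_zero (mul_ne_zero (mul_ne_zero hA hB) hd) hσd)
    have hleft : A * B * d * σ d * (σ a * b) = A * σ (d * a) * (B * (d * b)) := by
      rw [map_mul]
      ring
    have hright : A * B * d * σ d * (a * σ b) = B * (d * a) * (A * σ (d * b)) := by
      rw [map_mul]
      ring
    rw [hleft, hright]
    exact hgn.mul_mul hτgn.symm
  have haσ : Associated a (σ a) := associated_map_of_dvd hσ ha
    (hab.dvd_of_dvd_mul_right ((dvd_mul_right a _).trans hcross.symm.dvd))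
  have hdS : d ∈ S := by
    refine ⟨hd, Associated.of_mul_right ?_ haσ.symm ((map_ne_zero_iff σ hσi).2 ha)⟩
    rwa [mul_assoc, ← map_mul, mul_assoc]
  have hau : IsUnit a := by
    by_contra hau
    exact hmin d hdS ⟨hd, a, hau, rfl⟩
  refine ⟨d * a, hg, hgn, ?_⟩
  rw [← hdb]
  exact mul_dvd_mul_left d (hau.dvd)

end CyclicNorm

section TwistedShift

variable {p : ℕ} {N : Type*} [CommRing N] {σ τ : N →+* N} {c : N}

/-- The `τ`-semilinear endomorphism `X j ↦ X (j + 1)` of the polynomial ring on `ZMod p`, where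
passing the end `-1` of the cycle costs a factor `c`. It is made so that `X 0` spans a line on
which the `p`-th iterate is multiplication by `c`. -/
noncomputable def twistedShift (p : ℕ) (τ : N →+* N) (c : N) :
    MvPolynomial (ZMod p) N →+* MvPolynomial (ZMod p) N :=
  MvPolynomial.eval₂Hom (MvPolynomial.C.comp τ)
    fun j => (if j = -1 then MvPolynomial.C c else 1) * MvPolynomial.X (j + 1)

lemma twistedShift_C (a : N) : twistedShift p τ c (.C a) = .C (τ a) := by
  simp [twistedShift]

lemma twistedShift_X (j : ZMod p) : twistedShift p τ c (.X j) =
    (if j = -1 then .C c else 1) * .X (j + 1) := by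
  simp [twistedShift]

lemma twistedShift_iterate_C (a : N) (i : ℕ) :
    (twistedShift p τ c)^[i] (.C a) = .C (τ^[i] a) :=
  (Function.Semiconj.iterate_right (f := MvPolynomial.C) (ga := τ)
    (fun x => (twistedShift_C x).symm) i a).symm

lemma twistedShift_iterate_X_zero {i : ℕ} (hi : i < p) :
    (twistedShift p τ c)^[i] (.X 0) = .X (i : ZMod p) := by
  induction i with
  | zero => simp
  | succ i ih =>
    have h0 : ((i : ZMod p)) ≠ -1 := fun h => by
      have h1 : ((i + 1 : ℕ) : ZMod p) = 0 := by rw [Nat.cast_succ, h, neg_add_cancel]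
      exact Nat.not_dvd_of_pos_of_lt i.succ_pos hi ((ZMod.natCast_eq_zero_iff _ _).1 h1)
    rw [Function.iterate_succ_apply', ih (i.lt_succ_self.trans hi), twistedShift_X, if_neg h0,
      one_mul, Nat.cast_succ]

lemma totalDegree_twistedShift_le (f : MvPolynomial (ZMod p) N) :
    (twistedShift p τ c f).totalDegree ≤ f.totalDegree := by
  rw [twistedShift, MvPolynomial.coe_eval₂Hom, MvPolynomial.eval₂_eq]
  refine MvPolynomial.totalDegree_finsetSum_le fun d hd => ?_
  refine (MvPolynomial.totalDegree_mul _ _).trans ?_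
  rw [RingHom.comp_apply, MvPolynomial.totalDegree_C, zero_add]
  refine ((MvPolynomial.totalDegree_finsetProd _ _).trans (sum_le_sum fun i _ => ?_)).trans
    (MvPolynomial.le_totalDegree hd)
  have hfac : ((if i = -1 then .C c else 1) * .X (i + 1) :
      MvPolynomial (ZMod p) N).totalDegree ≤ 1 := by
    refine (MvPolynomial.totalDegree_mul _ _).trans ?_
    have hX : (.X (i + 1) : MvPolynomial (ZMod p) N).totalDegree ≤ 1 :=
      (MvPolynomial.totalDegree_monomial_le _ _).trans (by simp)
    split_ifs <;> simpa using hX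
  exact (MvPolynomial.totalDegree_pow _ _).trans (mul_le_of_le_one_right' hfac)

lemma map_comp_twistedShift (hστ : Commute σ τ) (hc : σ c = c) :
    Commute (MvPolynomial.map σ) (twistedShift p τ c) := by
  refine MvPolynomial.ringHom_ext (fun r => ?_) fun j => ?_
  · have hr : σ (τ r) = τ (σ r) := DFunLike.congr_fun hστ r
    simp [twistedShift_C, hr]
  · have hw : MvPolynomial.map σ (if j = -1 then .C c else 1 : MvPolynomial (ZMod p) N) =
        if j = -1 then .C c else 1 := by split_ifs <;> simp [hc]
    simp only [RingHom.mul_def, RingHom.comp_apply, twistedShift_X, map_mul, hw,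
      MvPolynomial.map_X]

lemma map_pow_eq_one {ι : Type*} (hσ : σ ^ p = 1) :
    (MvPolynomial.map σ : MvPolynomial ι N →+* MvPolynomial ι N) ^ p = 1 := by
  have hC : Function.Semiconj (MvPolynomial.C (σ := ι)) σ (MvPolynomial.map σ) :=
    fun x => (MvPolynomial.map_C σ x).symm
  refine MvPolynomial.ringHom_ext (fun r => ?_) fun j => ?_
  · rw [RingHom.coe_pow, ← hC.iterate_right p r, iterate_apply_of_pow_eq_one hσ]
    rfl
  · rw [RingHom.coe_pow, Function.iterate_fixed (MvPolynomial.map_X σ j)]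
    rfl

lemma coeff_aeval_C_mul_X {ι : Type*} (c : N) (f : MvPolynomial ι N) (m : ι →₀ ℕ) :
    (MvPolynomial.aeval (fun j => (.C c * .X j : MvPolynomial ι N)) f).coeff m =
      c ^ m.degree * f.coeff m := by
  classical
  induction f using MvPolynomial.induction_on' with
  | monomial u a =>
    have hu : (u.prod fun i k => (.C c * .X i : MvPolynomial ι N) ^ k) =
        .monomial u (c ^ u.degree) := by
      rw [MvPolynomial.monomial_eq, MvPolynomial.C_pow, Finsupp.degree_apply,
        ← prod_pow_eq_pow_sum, Finsupp.prod, Finsupp.prod, ← prod_mul_distrib]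
      simp only [mul_pow]
    rw [MvPolynomial.aeval_monomial, MvPolynomial.algebraMap_eq, hu, MvPolynomial.C_mul_monomial,
      MvPolynomial.coeff_monomial, MvPolynomial.coeff_monomial]
    split_ifs with h
    · rw [h, mul_comm]
    · rw [mul_zero]
  | add f g hf hg =>
    rw [map_add, MvPolynomial.coeff_add, MvPolynomial.coeff_add, hf, hg, mul_add]

variable [NeZero p]

lemma twistedShift_iterate_period_X (hc : τ c = c) (j : ZMod p) :
    (twistedShift p τ c)^[p] (.X j) = .C c * .X j := by
  have hzero : (twistedShift p τ c)^[p] (.X 0) = .C c * .X 0 := by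
    obtain ⟨k, hk⟩ := Nat.exists_eq_succ_of_ne_zero (NeZero.ne p)
    have hcast : (k : ZMod p) = -1 := by
      rw [eq_neg_iff_add_eq_zero, ← Nat.cast_succ, ← hk, ZMod.natCast_self]
    calc (twistedShift p τ c)^[p] (.X 0)
        = twistedShift p τ c ((twistedShift p τ c)^[k] (.X 0)) := by
          rw [hk, Function.iterate_succ_apply']
      _ = .C c * .X 0 := by
          rw [twistedShift_iterate_X_zero (hk ▸ k.lt_succ_self), twistedShift_X, hcast,
            if_pos rfl, neg_add_cancel]
  have hj := twistedShift_iterate_X_zero (τ := τ) (c := c) (ZMod.val_lt j)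
  rw [ZMod.natCast_zmod_val] at hj
  rw [← hj, ← Function.iterate_add_apply, add_comm, Function.iterate_add_apply, hzero,
    iterate_map_mul, twistedShift_iterate_C, Function.iterate_fixed hc]

lemma twistedShift_iterate_period (hτ : τ ^ p = 1) (hc : τ c = c) (f : MvPolynomial (ZMod p) N) :
    (twistedShift p τ c)^[p] f = MvPolynomial.aeval (fun j => .C c * .X j) f := by
  have h : twistedShift p τ c ^ p = (MvPolynomial.aeval fun j => .C c * .X j :
      MvPolynomial (ZMod p) N →ₐ[N] MvPolynomial (ZMod p) N).toRingHom := by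
    refine MvPolynomial.ringHom_ext (fun r => ?_) fun j => ?_
    · simp [twistedShift_iterate_C, iterate_apply_of_pow_eq_one hτ, MvPolynomial.algebraMap_eq]
    · simp [twistedShift_iterate_period_X hc]
  rw [← RingHom.coe_pow, h]
  rfl

lemma twistedShift_injective [IsDomain N] (hτ : τ ^ p = 1) (hc : τ c = c) (hc0 : c ≠ 0) :
    Function.Injective (twistedShift p τ c) := by
  have hp : Function.Injective (twistedShift p τ c)^[p] := fun f g hfg => by
    rw [twistedShift_iterate_period hτ hc, twistedShift_iterate_period hτ hc] at hfg
    ext m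
    have hm := congrArg (MvPolynomial.coeff m) hfg
    rw [coeff_aeval_C_mul_X, coeff_aeval_C_mul_X] at hm
    exact mul_left_cancel₀ (pow_ne_zero _ hc0) hm
  obtain ⟨k, hk⟩ := Nat.exists_eq_succ_of_ne_zero (NeZero.ne p)
  rw [hk, Function.iterate_succ, ← hk] at hp
  exact hp.of_comp

end TwistedShift

section Cocycle

variable {p : ℕ} {N : Type*} [Field N] {σ τ : N →+* N} {c s : N}

/-- The `p`-th iterate of the shift scales each variable by `c`, so `d` is the degree of any
monomial of `g`. -/
lemma exists_cyclicNorm_eq_pow [NeZero p] (hτ : τ ^ p = 1) (hc : τ c = c)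
    {g : MvPolynomial (ZMod p) N} (hg : g ≠ 0) {m : N}
    (hm : twistedShift p τ c g = g * .C m) : ∃ d, cyclicNorm p τ m = c ^ d := by
  have hit (i : ℕ) : (twistedShift p τ c)^[i] g = g * .C (∏ k ∈ range i, τ^[k] m) := by
    induction i with
    | zero => simp
    | succ i ih =>
      rw [Function.iterate_succ_apply', ih, map_mul, hm, twistedShift_C, mul_assoc,
        ← MvPolynomial.C_mul, mul_map_prod_iterate, prod_range_succ]
  obtain ⟨k, hk⟩ := MvPolynomial.ne_zero_iff.1 hg
  have h := congrArg (MvPolynomial.coeff k) (hit p)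
  rw [twistedShift_iterate_period hτ hc, coeff_aeval_C_mul_X, mul_comm g,
    MvPolynomial.coeff_C_mul] at h
  exact ⟨_, (cyclicNorm_apply p τ m).trans (mul_right_cancel₀ hk h).symm⟩

lemma exists_cocycle_of_cyclicNorm_eq [NeZero p] (hσ : σ ^ p = 1) (hτ : τ ^ p = 1)
    (hστ : Commute σ τ) (hc0 : c ≠ 0) (hσc : σ c = c) (hτc : τ c = c) (hs : s ≠ 0)
    {A B : MvPolynomial (ZMod p) N} (hA : A ≠ 0) (hB : B ≠ 0)
    (hfix : twistedShift p τ c A * B = A * twistedShift p τ c B)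
    (h : cyclicNorm p (MvPolynomial.map σ) A = .C s * cyclicNorm p (MvPolynomial.map σ) B) :
    ∃ n m, m ≠ 0 ∧ cyclicNorm p σ n = s ∧ σ m * n = τ n * m ∧
      ∃ d, cyclicNorm p τ m = c ^ d := by
  let S : MvPolynomial (ZMod p) N →+* MvPolynomial (ZMod p) N := MvPolynomial.map σ
  let T := twistedShift p τ c
  have hS : S ^ p = 1 := map_pow_eq_one hσ
  have hSi : Function.Injective S := injective_of_pow_eq_one hS
  have hTi : Function.Injective T := twistedShift_injective hτ hτc hc0
  have hST : Commute S T := map_comp_twistedShift hστ hσc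
  obtain ⟨g, hg, hgn, m', hm'⟩ := exists_associated_mul_map_dvd hS hTi hST hA hB hfix
    (h ▸ associated_unit_mul_left _ _ ((isUnit_iff_ne_zero.2 hs).map MvPolynomial.C))
  obtain ⟨u, hu⟩ := hgn.symm
  obtain ⟨n, -, hn⟩ := MvPolynomial.isUnit_iff_eq_C_of_isReduced.1 u.isUnit
  rw [hn] at hu
  have hTg : T g ≠ 0 := (map_ne_zero_iff T hTi).2 hg
  have hm'0 : m' ≠ 0 := right_ne_zero_of_mul (hm' ▸ hTg)
  obtain ⟨m, rfl⟩ : ∃ m, m' = .C m := by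
    have hdeg := totalDegree_twistedShift_le (τ := τ) (c := c) g
    rw [show twistedShift p τ c g = _ from hm',
      MvPolynomial.totalDegree_mul_of_isDomain hg hm'0] at hdeg
    exact ⟨_, MvPolynomial.totalDegree_eq_zero_iff_eq_C.1 (by lia)⟩
  refine ⟨n, m, by rintro rfl; simp at hm'0, ?_, ?_,
    exists_cyclicNorm_eq_pow hτ hτc hg hm'⟩
  · have hnorm := congrArg (cyclicNorm p S) hu
    rw [map_mul, map_mul, map_mul, cyclicNorm_map hS, h,
      ← map_cyclicNorm (f := MvPolynomial.C) (σ := σ) (by ext; simp [S])] at hnorm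
    refine MvPolynomial.C_injective (ZMod p) N (mul_right_cancel₀ (mul_ne_zero
      (cyclicNorm_ne_zero (p := p) hSi hB) (cyclicNorm_ne_zero (p := p) hSi hg)) ?_)
    linear_combination hnorm
  · have hTB : T B ≠ 0 := (map_ne_zero_iff T hTi).2 hB
    have hT := congrArg T hu
    rw [map_mul, map_mul, map_mul, show T (S g) = S (T g) from (DFunLike.congr_fun hST g).symm,
      hm', map_mul, twistedShift_C, show S (.C m) = .C (σ m) from MvPolynomial.map_C _ _] at hT
    refine MvPolynomial.C_injective (ZMod p) N
      (mul_left_cancel₀ (mul_ne_zero (mul_ne_zero hTB hB) hg) ?_)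
    rw [MvPolynomial.C_mul, MvPolynomial.C_mul]
    linear_combination -B * hT - (S g * .C (σ m)) * hfix + (T B * .C (σ m)) * hu

/-- If `p ∣ d` then `m` is, up to a power of `c`, a coboundary by Hilbert 90, which corrects `n` to
a `τ`-fixed element; otherwise `c` itself would be a norm. -/
lemma exists_fixed_of_cocycle (hp : p.Prime) (hσ : σ ^ p = 1) (hτ : orderOf τ = p)
    (hστ : Commute σ τ) (hσc : σ c = c) (hτc : τ c = c) (hc : ∀ z, cyclicNorm p τ z ≠ c)
    {n m : N} (hm : m ≠ 0) (hcoc : σ m * n = τ n * m) {d : ℕ} (hd : cyclicNorm p τ m = c ^ d) :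
    ∃ n', τ n' = n' ∧ cyclicNorm p σ n' = cyclicNorm p σ n := by
  have : NeZero p := ⟨hp.ne_zero⟩
  have hc0 : c ≠ 0 := fun h => hc 0 (by
    rw [cyclicNorm_of_fixed (map_zero τ), zero_pow hp.ne_zero, h])
  have hnorm_pow (e : ℕ) : cyclicNorm p τ (c ^ e) = c ^ (p * e) := by
    rw [map_pow, cyclicNorm_of_fixed hτc, pow_mul]
  by_cases hdvd : p ∣ d
  · obtain ⟨e, rfl⟩ := hdvd
    have hce : c ^ e ≠ 0 := pow_ne_zero _ hc0
    obtain ⟨w, hw0, hw⟩ := exists_mul_eq_map_of_cyclicNorm_eq_one (m := m / c ^ e) hp.pos hτ (by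
      rw [cyclicNorm_div, hd, hnorm_pow, div_self (pow_ne_zero _ hc0)])
    have hσw : σ w ≠ 0 := (_root_.map_ne_zero σ).2 hw0
    refine ⟨n * (w / σ w), ?_, ?_⟩
    · have hσm : σ m ≠ 0 := (_root_.map_ne_zero σ).2 hm
      rw [map_mul, map_div₀, show τ (σ w) = σ (τ w) from (DFunLike.congr_fun hστ w).symm, ← hw,
        map_mul, map_div₀, map_pow, hσc]
      field_simp
      linear_combination -hcoc
    · rw [map_mul, cyclicNorm_div, cyclicNorm_map hσ, div_self (cyclicNorm_ne_zero σ.injective hw0),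
        mul_one]
  · obtain ⟨a, -, ha⟩ := Nat.exists_mul_mod_eq_one_of_coprime
      ((Nat.Prime.coprime_iff_not_dvd hp).2 hdvd).symm hp.one_lt
    refine absurd ?_ (hc (m ^ a / c ^ (d * a / p)))
    rw [cyclicNorm_div, map_pow, hd, hnorm_pow, ← pow_mul, div_eq_iff (pow_ne_zero _ hc0),
      ← pow_succ']
    congr 1
    have := Nat.mod_add_div (d * a) p
    lia

/-- Adjoining a generic element of norm `c` to the fixed field of `τ` creates no new `σ`-norms. -/
lemma exists_fixed_cyclicNorm_eq (hp : p.Prime) (hσ : σ ^ p = 1) (hτ : orderOf τ = p)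
    (hστ : Commute σ τ) (hσc : σ c = c) (hτc : τ c = c) (hc : ∀ z, cyclicNorm p τ z ≠ c)
    (hs : s ≠ 0) {A B : MvPolynomial (ZMod p) N} (hA : A ≠ 0) (hB : B ≠ 0)
    (hfix : twistedShift p τ c A * B = A * twistedShift p τ c B)
    (h : cyclicNorm p (MvPolynomial.map σ) A = .C s * cyclicNorm p (MvPolynomial.map σ) B) :
    ∃ n, τ n = n ∧ cyclicNorm p σ n = s := by
  have : NeZero p := ⟨hp.ne_zero⟩
  have hc0 : c ≠ 0 := fun h => hc 0 (by
    rw [cyclicNorm_of_fixed (map_zero τ), zero_pow hp.ne_zero, h])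
  obtain ⟨n, m, hm, rfl, hcoc, d, hd⟩ := exists_cocycle_of_cyclicNorm_eq hσ
    (hτ ▸ pow_orderOf_eq_one τ) hστ hc0 hσc hτc hs hA hB hfix h
  exact exists_fixed_of_cocycle hp hσ hτ hστ hσc hτc hc hm hcoc hd

end Cocycle

section Adj

variable {E : Type*} [Field E] {F G : Subfield E}

/-- The subfield `F(S)` of `E`, as a subfield of `E` rather than an intermediate field of `E / F`,
so that towers over varying base fields can be compared. -/
abbrev adj (F : Subfield E) (S : Set E) : Subfield E := F ⊔ Subfield.closure S

lemma mem_adj {S : Set E} {x : E} (h : x ∈ S) : x ∈ adj F S :=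
  (le_sup_right : _ ≤ adj F S) (Subfield.subset_closure h)

lemma adj_le {S : Set E} (hF : F ≤ G) (hS : S ⊆ G) : adj F S ≤ G :=
  sup_le hF (Subfield.closure_le.2 hS)

lemma adj_adj (S T : Set E) : adj (adj F S) T = adj F (S ∪ T) := by
  rw [adj, adj, sup_assoc, ← Subfield.closure_union]

lemma adj_eq_toSubfield (F : Subfield E) (S : Set E) :
    adj F S = (IntermediateField.adjoin F S).toSubfield := by
  refine le_antisymm (adj_le (fun a ha => (IntermediateField.adjoin F S).algebraMap_mem ⟨a, ha⟩)
    (IntermediateField.subset_adjoin F S)) ?_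
  refine Subfield.closure_le.2 (Set.union_subset ?_ fun a ha => mem_adj ha)
  rintro _ ⟨a, rfl⟩
  exact le_sup_left (a := F) a.2

lemma aeval_mem_adj (t : E) (q : F[X]) : aeval t q ∈ adj F {t} := by
  have hF : F ≤ adj F {t} := le_sup_left
  rw [aeval_eq_sum_range]
  refine sum_mem fun i _ => ?_
  rw [Algebra.smul_def]
  exact mul_mem (hF (q.coeff i).2) (pow_mem (mem_adj (Set.mem_singleton t)) i)

lemma exists_div_of_mem_adj {t a : E} (h : a ∈ adj F {t}) :
    ∃ r s : F[X], a = aeval t r / aeval t s := by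
  rw [adj_eq_toSubfield] at h
  exact IntermediateField.mem_adjoin_simple_iff F a |>.1 h

lemma exists_aeval_eq_of_mem_adj {x a : E} (hx : IsIntegral F x) (h : a ∈ adj F {x}) :
    ∃ q : F[X], aeval x q = a := by
  have h' : a ∈ (IntermediateField.adjoin F {x}).toSubalgebra := by
    rwa [adj_eq_toSubfield] at h
  rwa [IntermediateField.adjoin_simple_toSubalgebra_of_isAlgebraic hx.isAlgebraic,
    Algebra.adjoin_singleton_eq_range_aeval] at h'

lemma isIntegral_of_pow_mem {p : ℕ} (hp : 0 < p) {x : E} (hx : x ^ p ∈ F) : IsIntegral F x :=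
  IsIntegral.of_pow hp (isIntegral_algebraMap (x := (⟨x ^ p, hx⟩ : F)))

lemma forall_pow_ne_of_notMem {p : ℕ} [NeZero p] {ζ a : F} (hζ : IsPrimitiveRoot ζ p) {x : E}
    (hx : x ^ p = a) (hxF : x ∉ F) (r : F) : r ^ p ≠ a :=
  forall_pow_ne_of_notMem_bot hζ (x := x) hx (fun h => by
    obtain ⟨y, rfl⟩ := Algebra.mem_bot.1 h
    exact hxF y.2) r

end Adj

section IsNormAt

variable {p : ℕ} {E : Type*} [Field E] {F G : Subfield E} {ζ x c : E}

/-- `c` is a product `∏ i < p, q (ζ ^ i * x)` with `q` a polynomial over `F`. When `ζ` is a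
primitive `p`-th root of unity in `F` and `x ∉ F` is a `p`-th root of an element of `F`, this says
that `c` is a norm from `F(x)`. -/
def IsNormAt (p : ℕ) (ζ : E) (F : Subfield E) (x c : E) : Prop :=
  ∃ q : F[X], ∏ i ∈ range p, aeval (ζ ^ i * x) q = c

lemma aeval_map_inclusion (h : F ≤ G) (q : F[X]) (y : E) :
    aeval y (q.map (Subfield.inclusion h)) = aeval y q := by
  rw [aeval_def, eval₂_map, aeval_def]
  rfl

namespace IsNormAt

lemma mono (h : F ≤ G) (hN : IsNormAt p ζ F x c) : IsNormAt p ζ G x c := by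
  obtain ⟨q, hq⟩ := hN
  exact ⟨q.map (Subfield.inclusion h), by simpa only [aeval_map_inclusion] using hq⟩

lemma zero (hp : 0 < p) : IsNormAt p ζ F x 0 :=
  ⟨0, prod_eq_zero (mem_range.2 hp) (map_zero _)⟩

lemma mul {d : E} (hc : IsNormAt p ζ F x c) (hd : IsNormAt p ζ F x d) :
    IsNormAt p ζ F x (c * d) := by
  obtain ⟨q, rfl⟩ := hc
  obtain ⟨r, rfl⟩ := hd
  exact ⟨q * r, by simp only [map_mul, prod_mul_distrib]⟩

lemma pow_mem {d : E} (hd : d ∈ F) : IsNormAt p ζ F x (d ^ p) :=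
  ⟨C ⟨d, hd⟩, by simp only [aeval_C, prod_const, card_range]; rfl⟩

lemma of_pow_eq [NeZero p] (hζ : IsPrimitiveRoot ζ p) (hζF : ζ ∈ F) {y : E} (hy : y ≠ 0)
    (hxy : x ^ p = y ^ p) (h : IsNormAt p ζ F x c) : IsNormAt p ζ F y c := by
  obtain ⟨q, hq⟩ := h
  obtain ⟨i, -, hi⟩ := hζ.eq_pow_of_pow_eq_one (ξ := x / y)
    (by rw [div_pow, hxy, div_self (pow_ne_zero _ hy)])
  obtain rfl : ζ ^ i * y = x := by rw [hi, div_mul_cancel₀ _ hy]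
  refine ⟨q.comp (C (⟨ζ, hζF⟩ ^ i) * X), .trans (prod_congr rfl fun k _ => ?_) hq⟩
  rw [aeval_comp, map_mul, aeval_C, aeval_X, mul_left_comm]
  rfl

lemma map_iff {E' : Type*} [Field E'] (j : E →+* E') :
    IsNormAt p (j ζ) (F.map j) (j x) (j c) ↔ IsNormAt p ζ F x c := by
  let jF : F →+* F.map j := (j.comp F.subtype).codRestrict _ fun a => ⟨a, a.2, rfl⟩
  have hjF : Function.Surjective jF := by
    rintro ⟨_, a, ha, rfl⟩
    exact ⟨⟨a, ha⟩, rfl⟩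
  have haeval (q : F[X]) (i : ℕ) : aeval (j ζ ^ i * j x) (q.map jF) = j (aeval (ζ ^ i * x) q) := by
    rw [aeval_def, aeval_def, eval₂_map, hom_eval₂, map_mul, map_pow]
    rfl
  unfold IsNormAt
  rw [(map_surjective jF hjF).exists]
  simp only [haeval, ← map_prod, j.injective.eq_iff]

lemma aeval_skewNorm {ζ : F} (x : E) (q : F[X]) :
    aeval x (skewNorm ζ p q) = ∏ i ∈ range p, aeval ((ζ : E) ^ i * x) q := by
  simp only [skewNorm, map_prod, aeval_comp, map_mul, aeval_C, aeval_X]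
  rfl

lemma of_isKummerNorm {ζ a c : F} (hx : x ^ p = a) (h : IsKummerNorm p ζ a c) :
    IsNormAt p (ζ : E) F x c := by
  obtain ⟨q, hq⟩ := h
  exact ⟨q, by rw [← aeval_skewNorm, aeval_eq_of_dvd_sub (x := x) hx hq, aeval_C]; rfl⟩

lemma of_mem [NeZero p] (hζ : IsPrimitiveRoot ζ p) (hζF : ζ ∈ F) (hx : x ∈ F) (hx0 : x ≠ 0)
    (hc : c ∈ F) : IsNormAt p ζ F x c := by
  have hζ' : IsPrimitiveRoot (⟨ζ, hζF⟩ : F) p :=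
    IsPrimitiveRoot.of_map_of_injective (f := F.subtype) hζ F.subtype.injective
  exact of_isKummerNorm (F := F) (ζ := ⟨ζ, hζF⟩) (a := ⟨x, hx⟩ ^ p) (c := ⟨c, hc⟩) rfl
    (isKummerNorm_pow hζ' (fun h => hx0 (congrArg Subtype.val h)) _)

lemma iff_isKummerNorm (hp : p.Prime) {ζ a c : F} (hζ : IsPrimitiveRoot ζ p) (hx : x ^ p = a)
    (hxF : x ∉ F) : IsNormAt p (ζ : E) F x c ↔ IsKummerNorm p ζ a c := by
  have : NeZero p := ⟨hp.ne_zero⟩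
  refine ⟨fun ⟨q, hq⟩ => ⟨q, ?_⟩, of_isKummerNorm hx⟩
  refine dvd_of_aeval_eq_zero hp (forall_pow_ne_of_notMem hζ hx hxF) hx ?_
  rw [map_sub, aeval_skewNorm, hq, aeval_C]
  exact sub_self _

end IsNormAt

end IsNormAt

section IsKummerShift

variable {p : ℕ} {E : Type*} [Field E] {F : Subfield E} {ζ x : E} {θ : E →+* E}

/-- `θ` restricts to the identity of `F`, which contains `ζ`, and sends `x` to `ζ * x`. -/
structure IsKummerShift (ζ : E) (F : Subfield E) (x : E) (θ : E →+* E) : Prop where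
  mem : ζ ∈ F
  apply_of_mem : ∀ a ∈ F, θ a = a
  apply_eq : θ x = ζ * x

namespace IsKummerShift

lemma iterate_apply (h : IsKummerShift ζ F x θ) (i : ℕ) : θ^[i] x = ζ ^ i * x := by
  induction i with
  | zero => simp
  | succ i ih =>
    rw [Function.iterate_succ_apply', ih, map_mul, map_pow, h.apply_of_mem ζ h.mem, h.apply_eq,
      pow_succ, mul_assoc]

lemma iterate_aeval (h : IsKummerShift ζ F x θ) (i : ℕ) (q : F[X]) :
    θ^[i] (aeval x q) = aeval (ζ ^ i * x) q := by
  have hcoe : (θ ^ i).comp (algebraMap F E) = algebraMap F E := RingHom.ext fun a =>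
    (congrFun (RingHom.coe_pow θ i) a).trans
      (Function.iterate_fixed (h.apply_of_mem a a.2) i)
  rw [← RingHom.coe_pow, aeval_def, hom_eval₂, hcoe, RingHom.coe_pow, h.iterate_apply, aeval_def]

lemma cyclicNorm_aeval (h : IsKummerShift ζ F x θ) (q : F[X]) :
    cyclicNorm p θ (aeval x q) = ∏ i ∈ range p, aeval (ζ ^ i * x) q := by
  rw [cyclicNorm_apply]
  exact prod_congr rfl fun i _ => h.iterate_aeval i q

lemma isNormAt_iff (h : IsKummerShift ζ F x θ) (hgen : ∀ z, ∃ q : F[X], aeval x q = z) {c : E} :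
    IsNormAt p ζ F x c ↔ ∃ z, cyclicNorm p θ z = c := by
  constructor
  · rintro ⟨q, rfl⟩
    exact ⟨_, h.cyclicNorm_aeval q⟩
  · rintro ⟨z, rfl⟩
    obtain ⟨q, rfl⟩ := hgen z
    exact ⟨q, (h.cyclicNorm_aeval q).symm⟩

end IsKummerShift

lemma sum_pow_eq_zero (hζ : IsPrimitiveRoot ζ p) {k : ℕ} (hk : ¬ p ∣ k) :
    ∑ i ∈ range p, (ζ ^ i) ^ k = 0 := by
  have hne : ζ ^ k - 1 ≠ 0 := sub_ne_zero.2 fun h => hk (hζ.dvd_of_pow_eq_one k h)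
  have hprod : (∑ i ∈ range p, (ζ ^ k) ^ i) * (ζ ^ k - 1) = 0 := by
    rw [geom_sum_mul, ← pow_mul, mul_comm, pow_mul, hζ.pow_eq_one, one_pow, sub_self]
  simp only [pow_right_comm ζ _ k]
  exact (mul_eq_zero.1 hprod).resolve_right hne

lemma sum_aeval_mem (hζ : IsPrimitiveRoot ζ p) (hxp : x ^ p ∈ F) (q : F[X]) :
    ∑ i ∈ range p, aeval (ζ ^ i * x) q ∈ F := by
  simp only [aeval_eq_sum_range, mul_pow]
  rw [sum_comm]
  refine sum_mem fun k _ => ?_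
  rw [← smul_sum, ← sum_mul, Algebra.smul_def]
  refine mul_mem (q.coeff k).2 ?_
  by_cases hk : p ∣ k
  · obtain ⟨d, rfl⟩ := hk
    refine mul_mem (sum_mem fun i _ => ?_) (pow_mul x p d ▸ pow_mem hxp d)
    rw [pow_mul, ← pow_mul ζ, mul_comm i, pow_mul, hζ.pow_eq_one, one_pow, one_pow]
    exact one_mem F
  · rw [sum_pow_eq_zero hζ hk, zero_mul]
    exact zero_mem F

lemma IsKummerShift.mem_of_apply_eq (h : IsKummerShift ζ F x θ) [CharZero E] (hp : p ≠ 0)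
    (hζ : IsPrimitiveRoot ζ p) (hxp : x ^ p ∈ F) {q : F[X]}
    (hq : θ (aeval x q) = aeval x q) : aeval x q ∈ F := by
  have hsum := sum_aeval_mem hζ hxp q
  simp only [← h.iterate_aeval, Function.iterate_fixed hq, sum_const, card_range,
    nsmul_eq_mul] at hsum
  have hp0 : (p : E) ≠ 0 := Nat.cast_ne_zero.2 hp
  simpa [hp0] using div_mem hsum (natCast_mem F p)

lemma apply_sum_iterate {w : E} (hw : θ^[p] w = w) :
    θ (∑ j ∈ range p, θ^[j] w) = ∑ j ∈ range p, θ^[j] w := by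
  have h := sum_range_succ' (θ^[·] w) p
  rw [sum_range_succ, hw] at h
  simpa only [map_sum, ← Function.iterate_succ_apply'] using (add_right_cancel h).symm

lemma sum_inv_mul_sum_iterate_mul_pow [CharZero E] (hp : p ≠ 0) (hζ : IsPrimitiveRoot ζ p)
    (hx0 : x ≠ 0) (hx : ∀ j, θ^[j] x = ζ ^ j * x) (z : E) :
    ∑ k ∈ range p, ((p : E)⁻¹ * ∑ j ∈ range p, θ^[j] (z * (x ^ k)⁻¹)) * x ^ k = z := by
  have hp0 : (p : E) ≠ 0 := Nat.cast_ne_zero.2 hp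
  have hcoeff (k j : ℕ) : θ^[j] (z * (x ^ k)⁻¹) * x ^ k = θ^[j] z * (ζ⁻¹ ^ k) ^ j := by
    have h : θ^[j] ((x ^ k)⁻¹) = ((ζ ^ j * x) ^ k)⁻¹ := by
      rw [← hx, ← RingHom.coe_pow, map_inv₀, map_pow]
    rw [iterate_map_mul, h, mul_pow, mul_inv, mul_assoc, mul_assoc,
      inv_mul_cancel₀ (pow_ne_zero k hx0), mul_one, ← inv_pow, ← inv_pow, pow_right_comm]
  calc ∑ k ∈ range p, ((p : E)⁻¹ * ∑ j ∈ range p, θ^[j] (z * (x ^ k)⁻¹)) * x ^ k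
      = (p : E)⁻¹ * ∑ j ∈ range p, θ^[j] z * ∑ k ∈ range p, (ζ⁻¹ ^ k) ^ j := by
        simp only [mul_assoc, sum_mul, mul_sum, hcoeff]
        rw [sum_comm]
    _ = (p : E)⁻¹ * (θ^[0] z * ∑ k ∈ range p, (ζ⁻¹ ^ k) ^ 0) := by
        rw [sum_eq_single_of_mem 0 (mem_range.2 (Nat.pos_of_ne_zero hp)) fun j hj hj0 => ?_]
        rw [sum_pow_eq_zero hζ.inv, mul_zero]
        exact Nat.not_dvd_of_pos_of_lt (Nat.pos_of_ne_zero hj0) (mem_range.1 hj)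
    _ = z := by
        simp only [Function.iterate_zero_apply, pow_zero, sum_const, card_range, nsmul_eq_mul,
          mul_one]
        field_simp

/-- Decomposition into eigenvectors of `θ`: the one with eigenvalue `ζ ^ k` is `x ^ k` times a
`θ`-fixed element. -/
lemma IsKummerShift.exists_aeval_eq_of_iterate_eq [CharZero E] {T : Subfield E}
    (h : IsKummerShift ζ (T ⊓ θ.eqLocusField (RingHom.id E)) x θ) (hp : p ≠ 0)
    (hζ : IsPrimitiveRoot ζ p) (hT : ∀ e ∈ T, θ e ∈ T) (hx0 : x ≠ 0) (hxT : x ∈ T) {z : E}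
    (hzT : z ∈ T) (hz : θ^[p] z = z) :
    ∃ q : (T ⊓ θ.eqLocusField (RingHom.id E) : Subfield E)[X], aeval x q = z := by
  let y (k : ℕ) : E := (p : E)⁻¹ * ∑ j ∈ range p, θ^[j] (z * (x ^ k)⁻¹)
  have hT' (e : E) (he : e ∈ T) (j : ℕ) : θ^[j] e ∈ T :=
    Set.MapsTo.iterate (s := (T : Set E)) (fun e he => hT e he) j he
  have hyT (k : ℕ) : y k ∈ T := mul_mem (inv_mem (natCast_mem T p))
    (sum_mem fun j _ => hT' _ (mul_mem hzT (inv_mem (pow_mem hxT k))) j)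
  have hyθ (k : ℕ) : θ (y k) = y k := by
    have hw : θ^[p] (z * (x ^ k)⁻¹) = z * (x ^ k)⁻¹ := by
      have hxk : θ^[p] ((x ^ k)⁻¹) = (x ^ k)⁻¹ := by
        rw [← RingHom.coe_pow, map_inv₀, map_pow, RingHom.coe_pow, h.iterate_apply,
          hζ.pow_eq_one, one_mul]
      rw [iterate_map_mul, hz, hxk]
    rw [map_mul, map_inv₀, map_natCast, apply_sum_iterate hw]
  refine ⟨∑ k ∈ range p, C ⟨y k, hyT k, hyθ k⟩ * X ^ k, ?_⟩
  simp only [map_sum, map_mul, map_pow, aeval_C, aeval_X]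
  exact sum_inv_mul_sum_iterate_mul_pow hp hζ hx0 h.iterate_apply z

/-- Since `θ^p` multiplies `u` by `c`, the ratio `θ u / u` has norm `c`. -/
lemma IsKummerShift.isNormAt_of_iterate_eq [CharZero E] {T : Subfield E}
    (h : IsKummerShift ζ (T ⊓ θ.eqLocusField (RingHom.id E)) x θ) (hp : p ≠ 0)
    (hζ : IsPrimitiveRoot ζ p) (hT : ∀ e ∈ T, θ e ∈ T) (hx0 : x ≠ 0) (hxT : x ∈ T) {u c : E}
    (hu : u ∈ T) (hu0 : u ≠ 0) (hθu : θ^[p] u = c * u) (hc : θ c = c) :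
    IsNormAt p ζ (T ⊓ θ.eqLocusField (RingHom.id E)) x c := by
  have hθu0 : θ u ≠ 0 := (map_ne_zero θ).2 hu0
  have hz : θ^[p] (θ u / u) = θ u / u := by
    rw [← RingHom.coe_pow, map_div₀, RingHom.coe_pow, ← Function.iterate_succ_apply,
      Function.iterate_succ_apply', hθu, map_mul, hc]
    have hc0 : c ≠ 0 := by
      rintro rfl
      exact hu0 ((map_eq_zero (θ ^ p)).1 (by rw [RingHom.coe_pow, hθu, zero_mul]))
    field_simp
  obtain ⟨q, hq⟩ := h.exists_aeval_eq_of_iterate_eq hp hζ hT hx0 hxT (div_mem (hT u hu) hu) hz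
  refine ⟨q, ?_⟩
  rw [← h.cyclicNorm_aeval, hq, cyclicNorm_div, div_eq_iff (cyclicNorm_ne_zero θ.injective hu0)]
  refine mul_left_cancel₀ hu0 ?_
  rw [← map_cyclicNorm rfl, cyclicNorm_apply, mul_map_prod_iterate, hθu]
  ring

end IsKummerShift

namespace IsKummerShift

variable {p : ℕ} {N : Type*} [Field N] {F G : Subfield N} {ζ x : N} {θ : N →+* N}

lemma mono (h : IsKummerShift ζ G x θ) (hFG : F ≤ G) (hζ : ζ ∈ F) : IsKummerShift ζ F x θ :=
  ⟨hζ, fun a ha => h.apply_of_mem a (hFG ha), h.apply_eq⟩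

lemma orderOf_eq (h : IsKummerShift ζ F x θ) (hp : p.Prime) (hζ : IsPrimitiveRoot ζ p)
    (hx : x ≠ 0) (hgen : ∀ z, ∃ q : F[X], aeval x q = z) : orderOf θ = p := by
  have : Fact p.Prime := ⟨hp⟩
  refine orderOf_eq_prime (RingHom.ext fun z => ?_) fun h1 => hζ.ne_one hp.one_lt ?_
  · obtain ⟨q, rfl⟩ := hgen z
    rw [RingHom.coe_pow, h.iterate_aeval, hζ.pow_eq_one, one_mul, RingHom.one_def, RingHom.id_apply]
  · refine mul_right_cancel₀ hx ?_
    rw [← h.apply_eq, h1, one_mul, RingHom.one_def, RingHom.id_apply]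

lemma commute {y : N} {σ τ : N →+* N} (hσ : IsKummerShift ζ F x σ) (hτ : IsKummerShift ζ F y τ)
    (hσy : σ y = y) (hτx : τ x = x) (htop : adj F {x, y} = ⊤) : Commute σ τ := by
  have hle : adj F {x, y} ≤ (σ * τ).eqLocusField (τ * σ) := by
    refine adj_le (fun a ha => ?_) ?_
    · change σ (τ a) = τ (σ a)
      rw [hσ.apply_of_mem a ha, hτ.apply_of_mem a ha, hσ.apply_of_mem a ha]
    · rintro _ (rfl | rfl)
      · change σ (τ _) = τ (σ _)
        rw [hτx, hσ.apply_eq, map_mul, hτ.apply_of_mem ζ hτ.mem, hτx]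
      · change σ (τ _) = τ (σ _)
        rw [hσy, hτ.apply_eq, map_mul, hσ.apply_of_mem ζ hσ.mem, hσy]
  exact RingHom.ext fun a => hle (htop ▸ Subfield.mem_top a)

end IsKummerShift

section FractionRing

variable {A : Type*} [CommRing A] [IsDomain A] {f g : A →+* A}

lemma fractionRingMap_algebraMap (hf : Function.Injective f) (a : A) :
    (IsFractionRing.map hf : FractionRing A →+* FractionRing A) (algebraMap A _ a) =
      algebraMap A _ (f a) :=
  IsLocalization.map_eq _ a

lemma commute_fractionRingMap (hf : Function.Injective f) (hg : Function.Injective g)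
    (h : Commute f g) : Commute (IsFractionRing.map hf : FractionRing A →+* FractionRing A)
      (IsFractionRing.map hg) := by
  refine RingHom.ext fun e => ?_
  obtain ⟨a, b, -, rfl⟩ := IsFractionRing.div_surjective (A := A) e
  simp only [RingHom.mul_def, RingHom.comp_apply, map_div₀, fractionRingMap_algebraMap]
  rw [show f (g a) = g (f a) from DFunLike.congr_fun h a,
    show f (g b) = g (f b) from DFunLike.congr_fun h b]

lemma fractionRingMap_algebraMap_of_semiconj {N : Type*} [CommRing N] [Algebra N A] {σ : N →+* N}
    (hf : Function.Injective f) (h : ∀ a, f (algebraMap N A a) = algebraMap N A (σ a)) (a : N) :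
    (IsFractionRing.map hf : FractionRing A →+* FractionRing A) (algebraMap N _ a) =
      algebraMap N _ (σ a) := by
  simp only [IsScalarTower.algebraMap_apply N A (FractionRing A), fractionRingMap_algebraMap, h]

end FractionRing

section FunctionField

/-- The field of rational functions over `N` in variables indexed by `ZMod p`. -/
abbrev CyclicFunctionField (p : ℕ) (N : Type*) [Field N] : Type _ :=
  FractionRing (MvPolynomial (ZMod p) N)

variable {p : ℕ} {N : Type*} [Field N] {F : Subfield N} {ζ μ lam c s : N} {σ τ : N →+* N}

/-- The elements of the function field fixed by `σ`, acting on coefficients, and by the twisted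
shift of `τ` and `c`. -/
noncomputable def twistedFixedField
    (hσ : Function.Injective (MvPolynomial.map (σ := ZMod p) σ))
    (hτ : Function.Injective (twistedShift p τ c)) : Subfield (CyclicFunctionField p N) :=
  (IsFractionRing.map hσ).eqLocusField (RingHom.id _) ⊓
    (IsFractionRing.map hτ).eqLocusField (RingHom.id _)

variable {hσ : Function.Injective (MvPolynomial.map (σ := ZMod p) σ)}
  {hτ : Function.Injective (twistedShift p τ c)}

lemma map_le_twistedFixedField (hFσ : ∀ a ∈ F, σ a = a) (hFτ : ∀ a ∈ F, τ a = a) :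
    F.map (algebraMap N _) ≤ twistedFixedField hσ hτ := by
  rintro _ ⟨a, ha, rfl⟩
  constructor
  · exact (fractionRingMap_algebraMap_of_semiconj hσ (MvPolynomial.map_C σ) a).trans
      (congrArg _ (hFσ a ha))
  · exact (fractionRingMap_algebraMap_of_semiconj hτ (fun _ => twistedShift_C _) a).trans
      (congrArg _ (hFτ a ha))

lemma isNormAt_twistedFixedField [CharZero N] [NeZero p] (hζ : IsPrimitiveRoot ζ p)
    (hστ : Commute σ τ) (hσF : ∀ a ∈ F, σ a = a) (hτF : IsKummerShift ζ F lam τ)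
    (hσlam : σ lam = lam) (hlam : lam ≠ 0) (hc : c ∈ F) :
    IsNormAt p (algebraMap N _ ζ) (twistedFixedField hσ hτ) (algebraMap N _ lam)
      (algebraMap N _ c) := by
  have hinj := IsFractionRing.injective (MvPolynomial (ZMod p) N) (CyclicFunctionField p N)
  have hC (a : N) := fractionRingMap_algebraMap_of_semiconj hτ (fun _ => twistedShift_C _) a
  have hσC (a : N) := fractionRingMap_algebraMap_of_semiconj hσ (MvPolynomial.map_C σ) a
  have hcomm := commute_fractionRingMap hσ hτ (map_comp_twistedShift hστ (hσF c hc))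
  have hshift : IsKummerShift (algebraMap N _ ζ) (twistedFixedField hσ hτ) (algebraMap N _ lam)
      (IsFractionRing.map hτ) :=
    ⟨map_le_twistedFixedField hσF hτF.apply_of_mem ⟨ζ, hτF.mem, rfl⟩, fun a ha => ha.2, by
      rw [hC, hτF.apply_eq, map_mul]⟩
  have hX : (IsFractionRing.map hτ)^[p] (algebraMap _ (CyclicFunctionField p N)
      (MvPolynomial.X 0 : MvPolynomial (ZMod p) N)) =
      algebraMap N _ c * algebraMap _ _ (MvPolynomial.X 0 : MvPolynomial (ZMod p) N) := by
    have hsc : Function.Semiconj (algebraMap _ (CyclicFunctionField p N)) (twistedShift p τ c)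
      (IsFractionRing.map hτ) := fun a => (fractionRingMap_algebraMap hτ a).symm
    rw [← hsc.iterate_right, twistedShift_iterate_period_X (hτF.apply_of_mem c hc), map_mul,
      IsScalarTower.algebraMap_apply N (MvPolynomial (ZMod p) N), MvPolynomial.algebraMap_eq]
  refine hshift.isNormAt_of_iterate_eq (NeZero.ne p)
    (hζ.map_of_injective (algebraMap N _).injective) (fun e he => ?_)
    ((_root_.map_ne_zero _).2 hlam)
    (RingHom.mem_eqLocusField.2 ((hσC lam).trans (congrArg _ hσlam))) ?_
    ((map_ne_zero_iff _ hinj).2 (MvPolynomial.X_ne_zero 0)) hX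
    ((hC c).trans (congrArg _ (hτF.apply_of_mem c hc)))
  · rw [RingHom.mem_eqLocusField, RingHom.id_apply] at he ⊢
    have := DFunLike.congr_fun hcomm e
    simp only [RingHom.mul_def, RingHom.comp_apply] at this
    rw [this, he]
  · rw [RingHom.mem_eqLocusField, RingHom.id_apply, fractionRingMap_algebraMap,
      MvPolynomial.map_X]

lemma exists_fixed_of_cyclicNorm_fractionRingMap (hp : p.Prime) (hσp : σ ^ p = 1)
    (hτp : orderOf τ = p) (hστ : Commute σ τ) (hσc : σ c = c) (hτc : τ c = c)
    (hc : ∀ z, cyclicNorm p τ z ≠ c) (hs : s ≠ 0) {e : CyclicFunctionField p N}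
    (he : IsFractionRing.map hτ e = e)
    (hes : cyclicNorm p (IsFractionRing.map hσ) e = algebraMap N _ s) :
    ∃ n, τ n = n ∧ cyclicNorm p σ n = s := by
  have hinj := IsFractionRing.injective (MvPolynomial (ZMod p) N) (CyclicFunctionField p N)
  obtain ⟨A, B, hB, rfl⟩ := IsFractionRing.div_surjective (A := MvPolynomial (ZMod p) N) e
  have hB0 := nonZeroDivisors.ne_zero hB
  have hnorm (P : MvPolynomial (ZMod p) N) :
      cyclicNorm p (IsFractionRing.map hσ) (algebraMap _ (CyclicFunctionField p N) P) =
        algebraMap _ _ (cyclicNorm p (MvPolynomial.map σ) P) :=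
    (map_cyclicNorm (RingHom.ext fun a => (fractionRingMap_algebraMap hσ a).symm) P).symm
  rw [cyclicNorm_div, hnorm, hnorm, div_eq_iff ((map_ne_zero_iff _ hinj).2
      (cyclicNorm_ne_zero hσ hB0)),
    IsScalarTower.algebraMap_apply N (MvPolynomial (ZMod p) N), ← map_mul] at hes
  rw [map_div₀, fractionRingMap_algebraMap, fractionRingMap_algebraMap,
    div_eq_div_iff ((map_ne_zero_iff _ hinj).2 ((map_ne_zero_iff _ hτ).2 hB0))
      ((map_ne_zero_iff _ hinj).2 hB0), ← map_mul, ← map_mul] at he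
  have hAB : cyclicNorm p (MvPolynomial.map σ) A = .C s * cyclicNorm p (MvPolynomial.map σ) B :=
    hinj hes
  have hA0 : A ≠ 0 := by
    rintro rfl
    rw [cyclicNorm_of_fixed (map_zero _), zero_pow hp.ne_zero, eq_comm] at hAB
    exact mul_ne_zero (MvPolynomial.C_ne_zero.2 hs) (cyclicNorm_ne_zero hσ hB0) hAB
  exact exists_fixed_cyclicNorm_eq hp hσp hτp hστ hσc hτc hc hs hA0 hB0 (hinj he) hAB

lemma exists_fixed_of_isNormAt_twistedFixedField (hp : p.Prime) (hσp : σ ^ p = 1)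
    (hτp : orderOf τ = p) (hστ : Commute σ τ) (hσc : σ c = c) (hτc : τ c = c)
    (hc : ∀ z, cyclicNorm p τ z ≠ c) (hs : s ≠ 0) (hσF : IsKummerShift ζ F μ σ)
    (hζ : τ ζ = ζ) (hτμ : τ μ = μ)
    (h : IsNormAt p (algebraMap N _ ζ) (twistedFixedField hσ hτ) (algebraMap N _ μ)
      (algebraMap N _ s)) :
    ∃ n, τ n = n ∧ cyclicNorm p σ n = s := by
  have hτC (a : N) := fractionRingMap_algebraMap_of_semiconj hτ (fun _ => twistedShift_C _) a
  have hσC (a : N) := fractionRingMap_algebraMap_of_semiconj hσ (MvPolynomial.map_C σ) a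
  have hσE : IsKummerShift (algebraMap N _ ζ) (twistedFixedField hσ hτ) (algebraMap N _ μ)
      (IsFractionRing.map hσ) :=
    ⟨⟨(hσC ζ).trans (congrArg _ (hσF.apply_of_mem ζ hσF.mem)), (hτC ζ).trans (congrArg _ hζ)⟩,
      fun a ha => ha.1, by rw [hσC, hσF.apply_eq, map_mul]⟩
  have hτE : IsKummerShift 1 (twistedFixedField hσ hτ) (algebraMap N _ μ)
      (IsFractionRing.map hτ) :=
    ⟨one_mem _, fun a ha => ha.2, by rw [hτC, hτμ, one_mul]⟩
  obtain ⟨q, hq⟩ := h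
  refine exists_fixed_of_cyclicNorm_fractionRingMap hp hσp hτp hστ hσc hτc hc hs
    (hσ := hσ) (hτ := hτ) (e := aeval (algebraMap N _ μ) q) ?_ ((hσE.cyclicNorm_aeval q).trans hq)
  simpa only [one_pow, one_mul, Function.iterate_one] using hτE.iterate_aeval 1 q

theorem exists_subfield_cyclicFunctionField_isNormAt [CharZero N] (hp : p.Prime)
    (hζ : IsPrimitiveRoot ζ p) (hσ : IsKummerShift ζ (adj F {lam}) μ σ)
    (hτ : IsKummerShift ζ (adj F {μ}) lam τ) (htop : adj F {μ, lam} = ⊤) (hμ : μ ^ p ∈ F)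
    (hlam : lam ^ p ∈ F) (hμ0 : μ ≠ 0) (hlam0 : lam ≠ 0) (hζF : ζ ∈ F) (hcF : c ∈ F)
    (hc : ¬ IsNormAt p ζ (adj F {μ}) lam c) :
    ∃ S : Subfield (CyclicFunctionField p N), F.map (algebraMap N _) ≤ S ∧
      IsNormAt p (algebraMap N _ ζ) S (algebraMap N _ lam) (algebraMap N _ c) ∧
      ∀ s ∈ F, IsNormAt p (algebraMap N _ ζ) S (algebraMap N _ μ) (algebraMap N _ s) →
        IsNormAt p ζ F μ s := by
  have : NeZero p := ⟨hp.ne_zero⟩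
  have hgenσ (z : N) : ∃ q : (adj F {lam})[X], aeval μ q = z :=
    exists_aeval_eq_of_mem_adj (isIntegral_of_pow_mem hp.pos (le_sup_left (a := F) hμ)) (by
      rw [adj_adj, Set.singleton_union, Set.pair_comm, htop]; trivial)
  have hgenτ (z : N) : ∃ q : (adj F {μ})[X], aeval lam q = z :=
    exists_aeval_eq_of_mem_adj (isIntegral_of_pow_mem hp.pos (le_sup_left (a := F) hlam)) (by
      rw [adj_adj, Set.singleton_union, htop]; trivial)
  have hσF := hσ.mono le_sup_left hζF
  have hτF := hτ.mono le_sup_left hζF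
  have hσlam := hσ.apply_of_mem lam (mem_adj rfl)
  have hστ := hσF.commute hτF hσlam (hτ.apply_of_mem μ (mem_adj rfl)) htop
  have hσp : σ ^ p = 1 := hσ.orderOf_eq hp hζ hμ0 hgenσ ▸ pow_orderOf_eq_one σ
  have hτp := hτ.orderOf_eq hp hζ hlam0 hgenτ
  have hc0 : c ≠ 0 := by
    rintro rfl
    exact hc (.zero hp.pos)
  have hmap := MvPolynomial.map_injective (σ := ZMod p) σ σ.injective
  have hshift := twistedShift_injective (hτp ▸ pow_orderOf_eq_one τ) (hτF.apply_of_mem c hcF) hc0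
  refine ⟨twistedFixedField hmap hshift,
    map_le_twistedFixedField hσF.apply_of_mem hτF.apply_of_mem,
    isNormAt_twistedFixedField hζ hστ hσF.apply_of_mem hτF hσlam hlam0 hcF, ?_⟩
  intro s hsF hs
  by_cases hs0 : s = 0
  · exact hs0 ▸ .zero hp.pos
  obtain ⟨n, hτn, rfl⟩ := exists_fixed_of_isNormAt_twistedFixedField hp hσp hτp hστ
    (hσF.apply_of_mem c hcF) (hτF.apply_of_mem c hcF)
    (fun z hz => hc ((hτ.isNormAt_iff hgenτ).2 ⟨z, hz⟩)) hs0 hσF (hτF.apply_of_mem ζ hζF)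
    (hτ.apply_of_mem μ (mem_adj rfl)) hs
  obtain ⟨q, rfl⟩ := hgenτ n
  obtain ⟨r, hr⟩ := exists_aeval_eq_of_mem_adj (isIntegral_of_pow_mem hp.pos hμ)
    (hτ.mem_of_apply_eq hp.ne_zero hζ (le_sup_left (a := F) hlam) hτn)
  exact ⟨r, by rw [← hr, hσF.cyclicNorm_aeval]⟩

end FunctionField

section Trailing

variable {ι R S : Type*}

lemma natTrailingDegree_congr [Semiring R] [Semiring S] {f : S[X]} {g : R[X]}
    (h : ∀ n, f.coeff n = 0 ↔ g.coeff n = 0) : f.natTrailingDegree = g.natTrailingDegree := by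
  have hs : f.support = g.support := Finset.ext fun n => by
    rw [mem_support_iff, mem_support_iff, Ne, h]
  rw [natTrailingDegree, trailingDegree, hs]
  rfl

lemma natTrailingDegree_map_eq [Semiring R] [Semiring S] {φ : R →+* S}
    (hφ : Function.Injective φ) (f : R[X]) : (f.map φ).natTrailingDegree = f.natTrailingDegree :=
  natTrailingDegree_congr fun n => by rw [coeff_map, map_eq_zero_iff φ hφ]

lemma trailingCoeff_map_eq [Semiring R] [Semiring S] {φ : R →+* S}
    (hφ : Function.Injective φ) (f : R[X]) : (f.map φ).trailingCoeff = φ f.trailingCoeff := by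
  rw [trailingCoeff, natTrailingDegree_map_eq hφ, coeff_map]
  rfl

variable [CommRing R] [IsDomain R]

lemma trailingCoeff_prod (s : Finset ι) (f : ι → R[X]) :
    (∏ i ∈ s, f i).trailingCoeff = ∏ i ∈ s, (f i).trailingCoeff :=
  map_prod ({ toFun := trailingCoeff
              map_one' := by rw [← C_1, trailingCoeff, natTrailingDegree_C, coeff_C_zero]
              map_mul' := trailingCoeff_mul } : R[X] →* R) f s

lemma natTrailingDegree_prod (s : Finset ι) (f : ι → R[X]) (hf : ∏ i ∈ s, f i ≠ 0) :
    (∏ i ∈ s, f i).natTrailingDegree = ∑ i ∈ s, (f i).natTrailingDegree := by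
  classical
  induction s using Finset.induction_on with
  | empty => rw [prod_empty, sum_empty, natTrailingDegree_one]
  | insert a s ha ih =>
    rw [prod_insert ha] at hf
    rw [prod_insert ha, sum_insert ha, natTrailingDegree_mul (left_ne_zero_of_mul hf)
      (right_ne_zero_of_mul hf), ih (right_ne_zero_of_mul hf)]

end Trailing

section Transcendental

variable {p : ℕ} {E : Type*} [Field E] {F : Subfield E} {ζ x t c : E}

lemma minpoly_eq_X_pow_sub_C (hp : p.Prime) (hζ : IsPrimitiveRoot ζ p) (hζF : ζ ∈ F)
    (hxp : x ^ p ∈ F) (hx : x ∉ F) (i : ℕ) :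
    minpoly F (ζ ^ i * x) = X ^ p - C (⟨x ^ p, hxp⟩ : F) := by
  have : NeZero p := ⟨hp.ne_zero⟩
  have hζ' : IsPrimitiveRoot (⟨ζ, hζF⟩ : F) p :=
    .of_map_of_injective (f := F.subtype) hζ F.subtype_injective
  have ha := forall_pow_ne_of_notMem_bot hζ' (x := x) (a := ⟨x ^ p, hxp⟩) rfl fun h => by
    obtain ⟨y, rfl⟩ := Algebra.mem_bot.1 h
    exact hx y.2
  refine (minpoly.eq_of_irreducible_of_monic (X_pow_sub_C_irreducible_of_prime hp ha) ?_
    (monic_X_pow_sub_C _ hp.ne_zero)).symm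
  rw [map_sub, map_pow, aeval_X, aeval_C, mul_pow, ← pow_mul, mul_comm i, pow_mul, hζ.pow_eq_one,
    one_pow, one_mul]
  exact sub_self _

lemma aeval_pow_mul_eq_zero_iff (hp : p.Prime) (hζ : IsPrimitiveRoot ζ p) (hζF : ζ ∈ F)
    (hxp : x ^ p ∈ F) (hx : x ∉ F) (q : F[X]) (i : ℕ) :
    aeval (ζ ^ i * x) q = 0 ↔ aeval x q = 0 := by
  have h0 := minpoly_eq_X_pow_sub_C hp hζ hζF hxp hx 0
  rw [pow_zero, one_mul] at h0
  rw [← minpoly.dvd_iff, ← minpoly.dvd_iff, minpoly_eq_X_pow_sub_C hp hζ hζF hxp hx i, h0]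

lemma exists_clear_denominators (q : (adj F {t})[X]) :
    ∃ (Q : F[X][X]) (D : F[X]), aeval t D ≠ 0 ∧
      ∀ y : E, aeval y q * aeval t D = Q.eval₂ (aeval (R := F) y : F[X] →+* E) t := by
  have heval (r : F[X]) (y : E) :
      (r.map C).eval₂ (aeval (R := F) y : F[X] →+* E) t = aeval t r := by
    rw [eval₂_map, aeval_def]
    congr 1
    exact RingHom.ext fun a => aeval_C y a
  induction q using Polynomial.induction_on' with
  | add f g hf hg =>
    obtain ⟨P, A, hA, hP⟩ := hf
    obtain ⟨Q, B, hB, hQ⟩ := hg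
    refine ⟨P * B.map C + Q * A.map C, A * B, by rw [map_mul]; exact mul_ne_zero hA hB,
      fun y => ?_⟩
    rw [eval₂_add, eval₂_mul, eval₂_mul, heval, heval, ← hP, ← hQ, map_add, map_mul]
    ring
  | monomial n a =>
    obtain ⟨r, s, h⟩ := exists_div_of_mem_adj a.2
    by_cases hs : aeval t s = 0
    · have ha : a = 0 := Subtype.ext (by rw [h, hs, div_zero]; rfl)
      exact ⟨0, 1, by rw [map_one]; exact one_ne_zero, fun y => by simp [ha]⟩
    · refine ⟨r.map C * C (X ^ n), s, hs, fun y => ?_⟩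
      rw [eval₂_mul, heval, aeval_monomial, eval₂_C, show algebraMap _ E a = _ from h]
      simp only [RingHom.coe_coe, map_pow, aeval_X]
      field_simp

lemma exists_prod_map_eq_of_isNormAt (hp : 0 < p) (hζF : ζ ∈ F) (hxp : x ^ p ∈ F)
    (ht : Transcendental F t) {G : F[X]} (h : IsNormAt p ζ (adj F {t}) x (aeval t G)) :
    ∃ (Q : F[X][X]) (D : F[X]), D ≠ 0 ∧
      ∏ i ∈ range p, Q.map (aeval (R := F) (ζ ^ i * x) : F[X] →+* E) =
        G.map (algebraMap F E) * D.map (algebraMap F E) ^ p := by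
  obtain ⟨q, hq⟩ := h
  obtain ⟨Q, D, hD, hQ⟩ := exists_clear_denominators q
  let B := IntermediateField.adjoin F {x}
  have : Algebra.IsAlgebraic F B :=
    IntermediateField.isAlgebraic_adjoin_simple (isIntegral_of_pow_mem hp hxp)
  let conj (i : ℕ) : F[X] →+* B :=
    (aeval (⟨ζ, B.algebraMap_mem ⟨ζ, hζF⟩⟩ ^ i * IntermediateField.AdjoinSimple.gen F x) :
      F[X] →ₐ[F] B)
  have hconj (i : ℕ) : (algebraMap B E).comp (conj i) = (aeval (R := F) (ζ ^ i * x) :) :=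
    RingHom.ext fun r => (aeval_algHom_apply B.val _ r).symm
  have hB : ∏ i ∈ range p, Q.map (conj i) =
      G.map (algebraMap F B) * D.map (algebraMap F B) ^ p := by
    have hf (i : ℕ) : aeval t (Q.map (conj i)) = aeval (ζ ^ i * x) q * aeval t D := by
      rw [hQ, aeval_def, eval₂_map, hconj]
    refine transcendental_iff_injective.1 (ht.extendScalars B) ?_
    simp only [map_prod, hf, prod_mul_distrib, prod_const, card_range, hq, map_mul, map_pow,
      aeval_map_algebraMap]
  refine ⟨Q, D, fun h => hD (by rw [h, map_zero]), ?_⟩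
  have hE := congrArg (Polynomial.map (algebraMap B E)) hB
  simpa only [Polynomial.map_prod, Polynomial.map_mul, Polynomial.map_pow, Polynomial.map_map,
    hconj, ← IsScalarTower.algebraMap_eq] using hE

/-- Conjugate elements of `F(x)` vanish together, so the conjugate factors on the norm side have
the same order of vanishing at `t = 0`. -/
theorem IsNormAt.trailing (hp : p.Prime) (hζ : IsPrimitiveRoot ζ p) (hζF : ζ ∈ F)
    (hxp : x ^ p ∈ F) (hx : x ∉ F) (ht : Transcendental F t) {G : F[X]} (hG : G ≠ 0)
    (h : IsNormAt p ζ (adj F {t}) x (aeval t G)) :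
    p ∣ G.natTrailingDegree ∧ IsNormAt p ζ F x (G.trailingCoeff : F) := by
  obtain ⟨Q, D, hD, key⟩ := exists_prod_map_eq_of_isNormAt hp.pos hζF hxp ht h
  have hinj := (algebraMap F E).injective
  have hG' := (Polynomial.map_ne_zero_iff hinj).2 hG
  have hD' := pow_ne_zero p ((Polynomial.map_ne_zero_iff hinj).2 hD)
  set n := (Q.map (aeval (R := F) x : F[X] →+* E)).natTrailingDegree
  have hdeg (i : ℕ) :
      (Q.map (aeval (R := F) (ζ ^ i * x) : F[X] →+* E)).natTrailingDegree = n :=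
    natTrailingDegree_congr fun k => by
      rw [coeff_map, coeff_map]
      exact aeval_pow_mul_eq_zero_iff hp hζ hζF hxp hx _ i
  have hdegD := natTrailingDegree_prod (range p) (fun _ => D.map (algebraMap F E)) (by
    rwa [prod_const, card_range])
  have hcoeffD := trailingCoeff_prod (range p) fun _ => D.map (algebraMap F E)
  have htd := congrArg natTrailingDegree key
  have htc := congrArg trailingCoeff key
  rw [natTrailingDegree_prod _ _ (key ▸ mul_ne_zero hG' hD'), natTrailingDegree_mul hG' hD',
    natTrailingDegree_map_eq hinj] at htd
  rw [trailingCoeff_prod, trailingCoeff_mul, trailingCoeff_map_eq hinj] at htc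
  simp only [prod_const, sum_const, card_range, smul_eq_mul, hdeg, trailingCoeff, coeff_map,
    natTrailingDegree_map_eq hinj] at hdegD hcoeffD htd htc
  rw [hdegD] at htd
  refine ⟨(Nat.dvd_add_left (Dvd.intro _ rfl)).1 (htd ▸ Dvd.intro _ rfl),
    C D.trailingCoeff⁻¹ * Q.coeff n, ?_⟩
  simp only [map_mul, aeval_C, prod_mul_distrib, prod_const, card_range]
  refine (congrArg _ (htc.trans (congrArg _ hcoeffD))).trans ?_
  rw [mul_left_comm, map_inv₀, ← mul_pow, trailingCoeff, inv_mul_cancel₀, one_pow, mul_one]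
  · rfl
  · exact (_root_.map_ne_zero _).2 (trailingCoeff_nonzero_iff_nonzero.2 hD)

lemma IsNormAt.of_adj_transcendental (hp : p.Prime) (hζ : IsPrimitiveRoot ζ p) (hζF : ζ ∈ F)
    (hxp : x ^ p ∈ F) (hx : x ∉ F) (ht : Transcendental F t) (hc : c ∈ F)
    (h : IsNormAt p ζ (adj F {t}) x c) : IsNormAt p ζ F x c := by
  obtain rfl | hc0 := eq_or_ne c 0
  · exact .zero hp.pos
  have := (IsNormAt.trailing hp hζ hζF hxp hx ht (G := C ⟨c, hc⟩)
    (C_ne_zero.2 fun h => hc0 (congrArg Subtype.val h)) (by rw [aeval_C]; exact h)).2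
  rwa [trailingCoeff, natTrailingDegree_C, coeff_C_zero] at this

lemma adj_singleton_sub {a : E} (ha : a ∈ F) : adj F {t - a} = adj F {t} := by
  refine le_antisymm (adj_le le_sup_left ?_) (adj_le le_sup_left ?_) <;>
    rw [Set.singleton_subset_iff]
  · exact sub_mem (mem_adj rfl) (le_sup_left (a := F) ha)
  · have := add_mem (mem_adj (F := F) (Set.mem_singleton (t - a))) (le_sup_left (a := F) ha)
    rwa [sub_add_cancel] at this

lemma dvd_rootMultiplicity_of_isNormAt (hp : p.Prime) (hζ : IsPrimitiveRoot ζ p) (hζF : ζ ∈ F)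
    (hxp : x ^ p ∈ F) (hx : x ∉ F) (ht : Transcendental F t) {G : F[X]} (hG : G ≠ 0)
    (h : IsNormAt p ζ (adj F {t}) x (aeval t G)) (a : F) : p ∣ G.rootMultiplicity a := by
  have ha : Transcendental F (t - a) := by
    have := ht.aeval (X - C a) (by simp) (by simp)
    rwa [map_sub, aeval_X, aeval_C] at this
  rw [rootMultiplicity_eq_natTrailingDegree]
  refine (IsNormAt.trailing hp hζ hζF hxp hx ha (comp_X_add_C_ne_zero_iff.2 hG) ?_).1
  rw [adj_singleton_sub a.2, aeval_comp, map_add, aeval_X, aeval_C,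
    show algebraMap F E a = a from rfl, sub_add_cancel]
  exact h

lemma not_isNormAt_transcendental_add (hp : p.Prime) (hζ : IsPrimitiveRoot ζ p) (hζF : ζ ∈ F)
    (hxp : x ^ p ∈ F) (hx : x ∉ F) (ht : Transcendental F t) (a : F) :
    ¬ IsNormAt p ζ (adj F {t}) x (t + a) := fun h => hp.not_dvd_one <| by
  have := dvd_rootMultiplicity_of_isNormAt hp hζ hζF hxp hx ht (X_sub_C_ne_zero (-a))
    (by rw [C_neg, sub_neg_eq_add, map_add, aeval_X, aeval_C]; exact h) (-a)
  rwa [rootMultiplicity_X_sub_C_self] at this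

lemma not_isNormAt_transcendental_div (hp : p.Prime) (hζ : IsPrimitiveRoot ζ p) (hζF : ζ ∈ F)
    (hxp : x ^ p ∈ F) (hx : x ∉ F) (ht : Transcendental F t) {a b : F} (hab : a ≠ b) :
    ¬ IsNormAt p ζ (adj F {t}) x ((t + a) / (t + b)) := fun h => hp.not_dvd_one <| by
  classical
  have htb : t + b ≠ 0 := fun h0 => ht ⟨X + C b, X_add_C_ne_zero b, by
    rw [map_add, aeval_X, aeval_C]; exact h0⟩
  have hmem : t + b ∈ adj F {t} := add_mem (mem_adj rfl) (le_sup_left (a := F) b.2)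
  have hne : (X - C (-a)) * (X - C (-b)) ^ (p - 1) ≠ 0 :=
    mul_ne_zero (X_sub_C_ne_zero _) (pow_ne_zero _ (X_sub_C_ne_zero _))
  have := dvd_rootMultiplicity_of_isNormAt hp hζ hζF hxp hx ht hne (by
    convert h.mul (.pow_mem hmem) using 1
    obtain ⟨m, rfl⟩ := Nat.exists_eq_succ_of_ne_zero hp.ne_zero
    simp [pow_succ', show ∀ d : F, algebraMap F E d = d from fun _ => rfl]
    field_simp) (-a)
  rwa [rootMultiplicity_mul hne, rootMultiplicity_X_sub_C_self, rootMultiplicity_eq_zero, add_zero]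
    at this
  simp [neg_add_eq_zero, hab]

lemma not_isNormAt_mul_transcendental_pow_sub [CharZero E] (hp : p.Prime)
    (hζ : IsPrimitiveRoot ζ p) (hζF : ζ ∈ F) (hxp : x ^ p ∈ F) (hx : x ∉ F)
    (ht : Transcendental F t) {a b : E} (ha : a ∈ F) (ha0 : a ≠ 0) (hb : b ∈ F) (hb0 : b ≠ 0) :
    ¬ IsNormAt p ζ (adj F {t}) x (b * (t ^ p - a ^ p)) := fun h => hp.not_dvd_one <| by
  lift a to F using ha
  lift b to F using hb
  have hne : X ^ p - C (a ^ p) ≠ 0 := X_pow_sub_C_ne_zero hp.pos _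
  have hb' : C b ≠ 0 := C_ne_zero.2 (by simpa using hb0)
  have := dvd_rootMultiplicity_of_isNormAt hp hζ hζF hxp hx ht (mul_ne_zero hb' hne)
    (by rw [map_mul, map_sub, map_pow, aeval_X, aeval_C, aeval_C, map_pow]; exact h) a
  have hroot : (X ^ p - C (a ^ p)).rootMultiplicity a = 1 :=
    le_antisymm (rootMultiplicity_le_one_of_separable (separable_X_pow_sub_C _
      (Nat.cast_ne_zero.2 hp.ne_zero) (pow_ne_zero _ (by simpa using ha0))) a)
      ((rootMultiplicity_pos hne).2 (by simp))
  rwa [rootMultiplicity_mul (mul_ne_zero hb' hne), rootMultiplicity_C, hroot] at this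

end Transcendental

section KummerTower

variable {p : ℕ} {E : Type*} [Field E] {F : Subfield E} {ζ x y μ lam c : E}

lemma finrank_adjoin_simple_of_pow_mem (hp : p.Prime) (hζ : IsPrimitiveRoot ζ p) (hζF : ζ ∈ F)
    (hxp : x ^ p ∈ F) (hx : x ∉ F) :
    Module.finrank F (IntermediateField.adjoin F {x}) = p := by
  have hmin := minpoly_eq_X_pow_sub_C hp hζ hζF hxp hx 0
  rw [pow_zero, one_mul] at hmin
  rw [IntermediateField.adjoin.finrank (isIntegral_of_pow_mem hp.pos hxp), hmin,
    natDegree_X_pow_sub_C]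

lemma mem_adj_singleton_of_mem_adj_singleton (hp : p.Prime) (hζ : IsPrimitiveRoot ζ p)
    (hζF : ζ ∈ F) (hxp : x ^ p ∈ F) (hyp : y ^ p ∈ F) (hy : y ∉ F) (h : y ∈ adj F {x}) :
    x ∈ adj F {y} := by
  have hx : x ∉ F := fun hx => hy (adj_le le_rfl (by simpa) h)
  rw [adj_eq_toSubfield] at h ⊢
  have := IntermediateField.adjoin.finiteDimensional (isIntegral_of_pow_mem hp.pos hxp)
  have heq := IntermediateField.eq_of_le_of_finrank_eq
    (IntermediateField.adjoin_simple_le_iff.2 h) <|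
    (finrank_adjoin_simple_of_pow_mem hp hζ hζF hyp hy).trans
      (finrank_adjoin_simple_of_pow_mem hp hζ hζF hxp hx).symm
  exact heq ▸ IntermediateField.mem_adjoin_simple_self F x

lemma exists_isKummerShift (hp : p.Prime) (hζ : IsPrimitiveRoot ζ p) (hζF : ζ ∈ F)
    (hxp : x ^ p ∈ F) (hx : x ∉ F) (htop : adj F {x} = ⊤) :
    ∃ θ : E →+* E, IsKummerShift ζ F x θ := by
  have hmin := minpoly_eq_X_pow_sub_C hp hζ hζF hxp hx
  have hmin0 := hmin 0
  rw [pow_zero, one_mul] at hmin0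
  obtain ⟨θ, hθ⟩ := IntermediateField.exists_algHom_of_adjoin_splits_of_aeval (F := F) (S := {x})
    (x := x) (y := ζ * x) (fun s hs => by
      obtain rfl := hs
      refine ⟨isIntegral_of_pow_mem hp.pos hxp, ?_⟩
      rw [hmin0, Polynomial.map_sub, Polynomial.map_pow, map_X, map_C]
      exact X_pow_sub_C_splits_of_isPrimitiveRoot hζ rfl)
    (IntermediateField.toSubfield_injective (by rw [← adj_eq_toSubfield, htop]; rfl))
    (by rw [hmin0, ← hmin 1, pow_one, minpoly.aeval])
  exact ⟨θ, hζF, fun a ha => θ.commutes ⟨a, ha⟩, hθ⟩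

lemma exists_subfield_isNormAt_of_adj_eq_top [CharZero E] (hp : p.Prime)
    (hζ : IsPrimitiveRoot ζ p) (hζF : ζ ∈ F) (hμp : μ ^ p ∈ F) (hμ : μ ∉ F) (hlamp : lam ^ p ∈ F)
    (hlam0 : lam ≠ 0) (hcF : c ∈ F) (hc : ¬ IsNormAt p ζ (adj F {μ}) lam c)
    (htop : adj F {μ, lam} = ⊤) :
    ∃ S : Subfield (CyclicFunctionField p E), F.map (algebraMap E _) ≤ S ∧
      IsNormAt p (algebraMap E _ ζ) S (algebraMap E _ lam) (algebraMap E _ c) ∧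
      ∀ s ∈ F, IsNormAt p (algebraMap E _ ζ) S (algebraMap E _ μ) (algebraMap E _ s) →
        IsNormAt p ζ F μ s := by
  have : NeZero p := ⟨hp.ne_zero⟩
  have hle (z : E) : F ≤ adj F {z} := le_sup_left
  have hlam : lam ∉ adj F {μ} := fun h =>
    hc (.of_mem hζ (hle μ hζF) h hlam0 (hle μ hcF))
  have hμ' : μ ∉ adj F {lam} := fun h =>
    hlam (mem_adj_singleton_of_mem_adj_singleton hp hζ hζF hlamp hμp hμ h)
  obtain ⟨σ, hσ⟩ := exists_isKummerShift hp hζ (hle lam hζF) (hle lam hμp) hμ' (by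
    rw [adj_adj, Set.singleton_union, Set.pair_comm, htop])
  obtain ⟨τ, hτ⟩ := exists_isKummerShift hp hζ (hle μ hζF) (hle μ hlamp) hlam (by
    rw [adj_adj, Set.singleton_union, htop])
  exact exists_subfield_cyclicFunctionField_isNormAt hp hζ hσ hτ htop hμp hlamp
    (ne_of_mem_of_not_mem F.zero_mem hμ).symm hlam0 hζF hcF hc

lemma adj_map {E' : Type*} [Field E'] (j : E →+* E') (S : Set E) :
    (adj F S).map j = adj (F.map j) (j '' S) := by
  rw [adj, Subfield.map_sup, RingHom.map_field_closure]

theorem exists_le_isNormAt_of_algebraicIndependent [CharZero E] (hp : p.Prime)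
    (hζ : IsPrimitiveRoot ζ p) (hζF : ζ ∈ F) (hμp : μ ^ p ∈ F) (hμ : μ ∉ F) (hlamp : lam ^ p ∈ F)
    (hlam0 : lam ≠ 0) (hcF : c ∈ F) (hc : ¬ IsNormAt p ζ (adj F {μ}) lam c) {v : ZMod p → E}
    (hv : AlgebraicIndependent (adj F {μ, lam}) v) :
    ∃ F' : Subfield E, F ≤ F' ∧ F' ≤ adj (adj F {μ, lam}) (Set.range v) ∧
      IsNormAt p ζ F' lam c ∧ ∀ s ∈ F, IsNormAt p ζ F' μ s → IsNormAt p ζ F μ s := by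
  set M := adj F {μ, lam}
  have hFM : F ≤ M := le_sup_left
  let ζM : M := ⟨ζ, hFM hζF⟩
  let cM : M := ⟨c, hFM hcF⟩
  let μM : M := ⟨μ, mem_adj (by simp)⟩
  let lamM : M := ⟨lam, mem_adj (by simp)⟩
  let F₀ := F.comap M.subtype
  have hF₀ : F₀.map M.subtype = F := by
    rw [Subfield.map_comap_eq, Subfield.fieldRange_subtype, inf_eq_left.2 hFM]
  have htop : adj F₀ {μM, lamM} = ⊤ := by
    rw [← Subfield.comap_map M.subtype (adj F₀ {μM, lamM}), adj_map, hF₀, Set.image_pair]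
    exact top_unique fun a _ => a.2
  obtain ⟨S, hFS, hlam, hμS⟩ := exists_subfield_isNormAt_of_adj_eq_top (F := F₀) (ζ := ζM)
    (c := cM) (μ := μM) (lam := lamM) hp
    (.of_map_of_injective (f := M.subtype) hζ M.subtype_injective) hζF hμp hμ hlamp
    (fun h => hlam0 (congrArg Subtype.val h)) hcF
    (by rwa [← IsNormAt.map_iff M.subtype, adj_map, hF₀, Set.image_singleton])
    htop
  let j : CyclicFunctionField p M →+* E :=
    (IntermediateField.adjoin M (Set.range v)).subtype.comp hv.aevalEquivField.toRingHom
  have hj (a : M) : j (algebraMap _ _ a) = a :=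
    congrArg Subtype.val (hv.aevalEquivField.commutes a)
  have hnorm {x s : M} : IsNormAt p ζ (S.map j) x s ↔ IsNormAt p (algebraMap _ _ ζM) S
      (algebraMap _ _ x) (algebraMap _ _ s) := by
    rw [← IsNormAt.map_iff j, hj, hj, hj]
  refine ⟨S.map j, fun a ha => ?_, ?_, hnorm.2 hlam, fun s hs h => ?_⟩
  · exact ⟨_, hFS ⟨⟨a, hFM ha⟩, ha, rfl⟩, hj ⟨a, hFM ha⟩⟩
  · rintro _ ⟨a, -, rfl⟩
    rw [adj_eq_toSubfield]
    exact (hv.aevalEquivField a).2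
  · have := hμS ⟨s, hFM hs⟩ hs (hnorm.1 h)
    rwa [← IsNormAt.map_iff M.subtype, hF₀] at this

end KummerTower

/-! ### Fields saturated with norms -/

section AlgAdjoin

variable {B E : Type*} [Field B] [Field E] [Algebra B E]

/-- The subfield of the elements of `E` which are algebraic over `B(T)`. -/
noncomputable def algAdjoin (B : Type*) {E : Type*} [Field B] [Field E] [Algebra B E] (T : Set E) :
    Subfield E :=
  (algebraicClosure (IntermediateField.adjoin B T) E).toSubfield

lemma subset_algAdjoin (T : Set E) : T ⊆ algAdjoin B T := fun _ ha =>
  (algebraicClosure (IntermediateField.adjoin B T) E).algebraMap_mem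
    ⟨_, IntermediateField.subset_adjoin B T ha⟩

lemma mem_algAdjoin_of_isAlgebraic {T : Set E} {F : Subfield E} (hF : F ≤ algAdjoin B T) {a : E}
    (ha : IsAlgebraic F a) : a ∈ algAdjoin B T := by
  let := (Subfield.inclusion hF).toAlgebra
  have : IsScalarTower F (algAdjoin B T) E := .of_algebraMap_eq fun _ => rfl
  have ha' : IsAlgebraic (algebraicClosure (IntermediateField.adjoin B T) E) a :=
    ha.extendScalars (S := algAdjoin B T) (Subfield.inclusion hF).injective
  exact mem_algebraicClosure_iff.2 (ha'.restrictScalars _)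

lemma algAdjoin_le_algAdjoin {S T : Set E} (h : S ⊆ algAdjoin B T) :
    algAdjoin B S ≤ algAdjoin B T := by
  have hle : (IntermediateField.adjoin B S).toSubfield ≤ algAdjoin B T :=
    Subfield.closure_le.2 (Set.union_subset (by
      rintro _ ⟨b, rfl⟩
      exact (algebraicClosure (IntermediateField.adjoin B T) E).algebraMap_mem
        (algebraMap B (IntermediateField.adjoin B T) b)) h)
  exact fun a ha => mem_algAdjoin_of_isAlgebraic hle (mem_algebraicClosure_iff.1 ha)

lemma algAdjoin_mono {S T : Set E} (h : S ⊆ T) : algAdjoin B S ≤ algAdjoin B T :=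
  algAdjoin_le_algAdjoin (h.trans (subset_algAdjoin T))

lemma algebraicIndependent_algAdjoin {ι κ : Type*} {x : ι → E} (hx : AlgebraicIndependent B x)
    {f : κ → ι} (hf : Function.Injective f) {S : Set ι} (hS : ∀ k, f k ∉ S) :
    AlgebraicIndependent (algAdjoin B (x '' S)) (x ∘ f) := by
  have h := (hx.adjoin_of_disjoint (disjoint_compl_right (a := S))).comp
    (fun k => ⟨f k, hS k⟩) fun a b hab => hf (congrArg Subtype.val hab)
  open scoped IntermediateField.algebraAdjoinAdjoin in
  exact (h.extendScalars (IntermediateField.adjoin B (x '' S))).algebraicClosure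

lemma transcendental_algAdjoin {ι : Type*} {x : ι → E} (hx : AlgebraicIndependent B x) {S : Set ι}
    {i : ι} (hi : i ∉ S) : Transcendental (algAdjoin B (x '' S)) (x i) :=
  (algebraicIndependent_algAdjoin hx (f := fun _ : Unit => i) (Function.injective_of_subsingleton _)
    fun _ => hi).transcendental ()

lemma algebraicIndependent_mono {ι : Type*} {v : ι → E} {F G : Subfield E} (h : F ≤ G)
    (hv : AlgebraicIndependent G v) : AlgebraicIndependent F v := by
  let := (Subfield.inclusion h).toAlgebra
  have : IsScalarTower F G E := .of_algebraMap_eq fun _ => rfl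
  exact hv.restrictScalars (Subfield.inclusion h).injective

lemma transcendental_mono {t : E} {F G : Subfield E} (h : F ≤ G) (ht : Transcendental G t) :
    Transcendental F t := by
  rw [← algebraicIndependent_iff_transcendental] at ht ⊢
  exact algebraicIndependent_mono h ht

lemma transcendental_adj_algAdjoin {ι : Type*} {x : ι → E} (hx : AlgebraicIndependent B x)
    {S : Set ι} {i j : ι} (hjS : j ∉ S) (hij : j ≠ i) :
    Transcendental (adj (algAdjoin B (x '' S)) {x i}) (x j) := by
  have hle : adj (algAdjoin B (x '' S)) {x i} ≤ algAdjoin B (x '' insert i S) :=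
    adj_le (algAdjoin_mono (Set.image_mono (Set.subset_insert i S))) (Set.singleton_subset_iff.2
      (subset_algAdjoin _ (Set.mem_image_of_mem x (Set.mem_insert i S))))
  exact transcendental_mono hle
    (transcendental_algAdjoin hx (i := j) fun h => h.elim hij hjS)

end AlgAdjoin

section Stage

variable {p : ℕ} {B E : Type*} [Field B] [Field E] [Algebra B E] {ζ μ : E} {R : Set E}

lemma exists_isNormAt_of_sSup {S : Set (Subfield E)} (hS : S.Nonempty) (hd : DirectedOn (· ≤ ·) S)
    {x c : E} (h : IsNormAt p ζ (sSup S) x c) : ∃ F ∈ S, IsNormAt p ζ F x c := by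
  obtain ⟨q, hq⟩ := h
  obtain ⟨F, hF, hqF⟩ := DirectedOn.exists_mem_subset_of_finset_subset_biUnion (s := q.coeffs)
    (f := fun F : Subfield E => (F.comap (sSup S).subtype : Set (sSup S : Subfield E))) hS
    (fun F hF G hG => (hd F hF G hG).imp fun H hH =>
      ⟨hH.1, fun a ha => hH.2.1 ha, fun a ha => hH.2.2 ha⟩)
    (fun a _ => by simpa using (Subfield.mem_sSup_of_directedOn hS hd).1 a.2)
  obtain ⟨r, rfl⟩ : q ∈ lifts (Subfield.inclusion (le_sSup hF)) :=
    (lifts_iff_coeffs_subset_range q).2 fun a ha => ⟨⟨a, hqF ha⟩, rfl⟩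
  simp only [coe_mapRingHom, aeval_map_inclusion] at hq
  exact ⟨F, hF, r, hq⟩

lemma exists_le_isNormAt_aeval [CharZero E] (hp : p.Prime) (hζ : IsPrimitiveRoot ζ p) {y t : E}
    {F : Subfield E} (hζF : ζ ∈ F) (hμp : μ ^ p ∈ F) (hμ : μ ∉ F) (hyp : y ^ p ∈ F) (hy0 : y ≠ 0)
    (ht : Transcendental (adj F {μ}) t) {q : F[X]}
    (hq : ¬ IsNormAt p ζ (adj (adj F {μ}) {t}) y (aeval t q)) {v : ZMod p → E}
    (hv : AlgebraicIndependent (adj (adj F {t}) {μ, y}) v) :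
    ∃ F', adj F {t} ≤ F' ∧ F' ≤ adj (adj (adj F {t}) {μ, y}) (Set.range v) ∧
      IsNormAt p ζ F' y (aeval t q) ∧ ∀ s ∈ F, IsNormAt p ζ F' μ s → IsNormAt p ζ F μ s := by
  have : NeZero p := ⟨hp.ne_zero⟩
  have hFt : F ≤ adj F {t} := le_sup_left
  have htF : Transcendental F t := transcendental_mono le_sup_left ht
  have hμt : μ ∉ adj F {t} := fun h =>
    not_isNormAt_transcendental_add hp hζ hζF hμp hμ htF 0 <|
      .of_mem hζ (hFt hζF) h (ne_of_mem_of_not_mem F.zero_mem hμ).symm <|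
        add_mem (mem_adj (Set.mem_singleton t)) (zero_mem _)
  obtain ⟨F', hF', hF'v, hN, hμF'⟩ := exists_le_isNormAt_of_algebraicIndependent hp hζ
    (hFt hζF) (hFt hμp) hμt (hFt hyp) hy0 (aeval_mem_adj t q)
    (by rwa [adj, adj, sup_right_comm]) hv
  exact ⟨F', hF', hF'v, hN, fun s hs h =>
    (hμF' s (hFt hs) h).of_adj_transcendental hp hζ hζF hμp hμ htF hs⟩

/-- A demand `(a, d)` on a field: some `d(t)`, for `t` in the field, has to become a norm from the
adjunction of a `p`-th root of `a`. -/
abbrev NormTask (E : Type*) [Field E] := E × E[X]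

/-- `F` fulfils the tasks in `J` at the expense of the variables `x (d, ·)`, `d ∈ J`, only, and
no element of `R` is a norm from `F(μ)`. For each task, `x (d, none)` serves as the element `t` and
the other `p` variables generate the cyclic function field over which `d(t)` is a norm. -/
structure IsNormStage (B : Type*) [Field B] [Algebra B E] (p : ℕ) (ζ μ : E) (R : Set E)
    (x : NormTask E × Option (ZMod p) → E) (J : Set (NormTask E)) (F : Subfield E) : Prop where
  zeta_mem : ζ ∈ F
  pow_mem : μ ^ p ∈ F
  subset : R ⊆ F
  le_algAdjoin : F ≤ algAdjoin B (x '' J ×ˢ Set.univ)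
  not_isNormAt : ∀ s ∈ R, ¬ IsNormAt p ζ F μ s
  exists_isNormAt : ∀ d ∈ J, ∃ y, y ^ p = d.1 ∧ ∃ t ∈ F, IsNormAt p ζ F y (d.2.eval t)

variable {x : NormTask E × Option (ZMod p) → E} {J : Set (NormTask E)} {F : Subfield E}

namespace IsNormStage

lemma mem_algAdjoin (H : IsNormStage B p ζ μ R x J F) (hp : 0 < p) {y : E} (hy : y ^ p ∈ F) :
    y ∈ algAdjoin B (x '' J ×ˢ Set.univ) :=
  mem_algAdjoin_of_isAlgebraic H.le_algAdjoin (isIntegral_of_pow_mem hp hy).isAlgebraic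

lemma notMem [NeZero p] (H : IsNormStage B p ζ μ R x J F) (hζ : IsPrimitiveRoot ζ p)
    (hR : R.Nonempty) (hμ0 : μ ≠ 0) : μ ∉ F := fun hμ =>
  let ⟨s, hs⟩ := hR
  H.not_isNormAt s hs (.of_mem hζ H.zeta_mem hμ hμ0 (H.subset hs))

lemma exists_insert [CharZero E] (H : IsNormStage B p ζ μ R x J F) (hp : p.Prime)
    (hζ : IsPrimitiveRoot ζ p) (hR : R.Nonempty) (hμ0 : μ ≠ 0) (hx : AlgebraicIndependent B x)
    {y : E} (hyp : y ^ p ∈ F) (hy0 : y ≠ 0) {q : F[X]}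
    (hq : ∀ t, Transcendental (adj F {μ}) t → ¬ IsNormAt p ζ (adj (adj F {μ}) {t}) y (aeval t q))
    (hJ : (y ^ p, q.map F.subtype) ∉ J) :
    ∃ F', F ≤ F' ∧ IsNormStage B p ζ μ R x (insert (y ^ p, q.map F.subtype) J) F' := by
  have : NeZero p := ⟨hp.ne_zero⟩
  set d : NormTask E := (y ^ p, q.map F.subtype)
  set A := algAdjoin B (x '' J ×ˢ Set.univ)
  have hμA : μ ∈ A := H.mem_algAdjoin hp.pos H.pow_mem
  have hyA : y ∈ A := H.mem_algAdjoin hp.pos hyp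
  have ht : Transcendental (adj F {μ}) (x (d, none)) := transcendental_mono
    (adj_le H.le_algAdjoin (Set.singleton_subset_iff.2 hμA))
    (transcendental_algAdjoin hx fun h => hJ h.1)
  have hle {A' : Subfield E} (hA : A ≤ A') (hd : x (d, none) ∈ A') :
      adj (adj F {x (d, none)}) {μ, y} ≤ A' :=
    adj_le (adj_le (H.le_algAdjoin.trans hA) (Set.singleton_subset_iff.2 hd))
      (Set.pair_subset (hA hμA) (hA hyA))
  have hv : AlgebraicIndependent (adj (adj F {x (d, none)}) {μ, y}) fun j => x (d, some j) :=
    algebraicIndependent_mono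
      (hle (algAdjoin_mono (Set.image_mono (Set.subset_insert _ _)))
        (subset_algAdjoin _ ⟨_, Set.mem_insert _ _, rfl⟩))
      (algebraicIndependent_algAdjoin hx (f := fun j => (d, some j)) (fun i j h => by simpa using h)
        (S := insert (d, none) (J ×ˢ Set.univ)) fun j h => by simp [hJ] at h)
  obtain ⟨F', hF', hF'A, hN, hμ⟩ := exists_le_isNormAt_aeval hp hζ H.zeta_mem H.pow_mem
    (H.notMem hζ hR hμ0) hyp hy0 ht (hq _ ht) hv
  have hFF' : F ≤ F' := le_sup_left.trans hF'
  have hnew (o : Option (ZMod p)) : x (d, o) ∈ algAdjoin B (x '' insert d J ×ˢ Set.univ) :=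
    subset_algAdjoin _ ⟨_, ⟨Set.mem_insert _ _, trivial⟩, rfl⟩
  refine ⟨F', hFF', hFF' H.zeta_mem, hFF' H.pow_mem, H.subset.trans hFF', hF'A.trans ?_,
    fun s hs h => H.not_isNormAt s hs (hμ s (H.subset hs) h), ?_⟩
  · exact adj_le (hle (algAdjoin_mono (Set.image_mono (Set.prod_mono_left (Set.subset_insert _ _))))
      (hnew none)) (Set.range_subset_iff.2 fun j => hnew (some j))
  · rintro _ (rfl | he)
    · exact ⟨y, rfl, _, hF' (mem_adj rfl), by rw [eval_map]; exact hN⟩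
    · obtain ⟨z, hz, s, hs, h⟩ := H.exists_isNormAt _ he
      exact ⟨z, hz, s, hFF' hs, h.mono hFF'⟩

lemma sSup_chain {c : Set (Set (NormTask E) × Subfield E)} (hc : IsChain (· ≤ ·) c)
    (hcne : c.Nonempty) (H : ∀ m ∈ c, IsNormStage B p ζ μ R x m.1 m.2) :
    IsNormStage B p ζ μ R x (⋃ m ∈ c, m.1) (sSup (Prod.snd '' c)) := by
  have hd : DirectedOn (· ≤ ·) (Prod.snd '' c) :=
    (hc.image_of_map_rel _ _ Prod.snd fun _ _ h => h.2).directedOn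
  have hle (m) (hm : m ∈ c) : m.2 ≤ sSup (Prod.snd '' c) := le_sSup ⟨m, hm, rfl⟩
  obtain ⟨m₀, hm₀⟩ := hcne
  refine ⟨hle m₀ hm₀ (H m₀ hm₀).zeta_mem, hle m₀ hm₀ (H m₀ hm₀).pow_mem,
    (H m₀ hm₀).subset.trans (hle m₀ hm₀), ?_, fun s hs h => ?_, fun e he => ?_⟩
  · refine sSup_le ?_
    rintro _ ⟨m, hm, rfl⟩
    exact (H m hm).le_algAdjoin.trans (algAdjoin_mono (Set.image_mono
      (Set.prod_mono_left (Set.subset_biUnion_of_mem (u := Prod.fst) hm))))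
  · obtain ⟨_, ⟨m, hm, rfl⟩, hF⟩ :=
      exists_isNormAt_of_sSup (Set.Nonempty.image _ ⟨m₀, hm₀⟩) hd h
    exact (H m hm).not_isNormAt s hs hF
  · obtain ⟨m, hm, hem⟩ := Set.mem_iUnion₂.1 he
    obtain ⟨y, hy, t, ht, h⟩ := (H m hm).exists_isNormAt e hem
    exact ⟨y, hy, t, hle m hm ht, h.mono (hle m hm)⟩

lemma exists_maximal (H : IsNormStage B p ζ μ R x J F) :
    ∃ m : Set (NormTask E) × Subfield E,
      Maximal (fun m => IsNormStage B p ζ μ R x m.1 m.2) m := by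
  obtain ⟨m, -, hm⟩ := zorn_le_nonempty₀
    {m : Set (NormTask E) × Subfield E | IsNormStage B p ζ μ R x m.1 m.2}
    (fun c hcs hc y hy => ⟨(⋃ m ∈ c, m.1, sSup (Prod.snd '' c)),
      sSup_chain hc ⟨y, hy⟩ fun _ h => hcs h,
      fun m hm => ⟨Set.subset_biUnion_of_mem (u := Prod.fst) hm, le_sSup ⟨m, hm, rfl⟩⟩⟩)
    (J, F) H
  exact ⟨m, hm⟩

end IsNormStage

/-- The outcome of a maximal choice of `F`: no element of `R` is a norm from `F(μ)`, but `d(t)`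
is, for some `t`, a norm from `F(y)` whenever it is not one over `F(μ)` for transcendental `t`; and
no proper algebraic extension of `F` keeps the elements of `R` from becoming norms. -/
structure IsNormSaturated (p : ℕ) (ζ μ : E) (R : Set E) (F : Subfield E) : Prop where
  zeta_mem : ζ ∈ F
  pow_mem : μ ^ p ∈ F
  notMem : μ ∉ F
  subset : R ⊆ F
  not_isNormAt : ∀ s ∈ R, ¬ IsNormAt p ζ F μ s
  exists_isNormAt {y : E} (hyp : y ^ p ∈ F) (hy0 : y ≠ 0) {q : F[X]}
    (hq : ∀ t, Transcendental (adj F {μ}) t →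
      ¬ IsNormAt p ζ (adj (adj F {μ}) {t}) y (aeval t q)) :
    ∃ t ∈ F, IsNormAt p ζ F y (aeval t q)
  le_of_isAlgebraic {G : Subfield E} (hFG : F ≤ G) (hG : ∀ a ∈ G, IsAlgebraic F a)
    (hR : ∀ s ∈ R, ¬ IsNormAt p ζ G μ s) : G ≤ F

lemma IsNormStage.exists_isNormSaturated [CharZero E] (H : IsNormStage B p ζ μ R x J F)
    (hp : p.Prime) (hζ : IsPrimitiveRoot ζ p) (hR : R.Nonempty) (hμ0 : μ ≠ 0)
    (hx : AlgebraicIndependent B x) : ∃ G, IsNormSaturated p ζ μ R G := by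
  have : NeZero p := ⟨hp.ne_zero⟩
  obtain ⟨⟨J', G⟩, hG, hmax⟩ := H.exists_maximal
  refine ⟨G, hG.zeta_mem, hG.pow_mem, hG.notMem hζ hR hμ0, hG.subset,
    hG.not_isNormAt, fun {y} hyp hy0 q hq => ?_,
    fun {G'} hGG' halg hRG' => ?_⟩
  · have hJ : (y ^ p, q.map G.subtype) ∈ J' := by
      by_contra hJ
      obtain ⟨G', hGG', hG'⟩ := hG.exists_insert hp hζ hR hμ0 hx hyp hy0 hq hJ
      exact hJ ((hmax (y := (_, G')) hG' ⟨Set.subset_insert _ _, hGG'⟩).1 (Set.mem_insert _ _))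
    obtain ⟨z, hz, t, ht, h⟩ := hG.exists_isNormAt _ hJ
    rw [eval_map] at h
    exact ⟨t, ht, h.of_pow_eq hζ hG.zeta_mem hy0 hz⟩
  · refine (hmax (y := (J', G')) ⟨hGG' hG.zeta_mem, hGG' hG.pow_mem, hG.subset.trans hGG',
      fun a ha => mem_algAdjoin_of_isAlgebraic hG.le_algAdjoin (halg a ha), hRG', fun e he => ?_⟩
      ⟨le_rfl, hGG'⟩).2
    obtain ⟨y, hy, t, ht, h⟩ := hG.exists_isNormAt e he
    exact ⟨y, hy, t, hGG' ht, h.mono hGG'⟩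

namespace IsNormSaturated

lemma isNormAt (H : IsNormSaturated p ζ μ R F) (hp : p.Prime) (hζ : IsPrimitiveRoot ζ p) {y c : E}
    (hyp : y ^ p ∈ F) (hy0 : y ≠ 0) (hc : c ∈ F) (hN : ¬ IsNormAt p ζ (adj F {μ}) y c) :
    IsNormAt p ζ F y c := by
  have : NeZero p := ⟨hp.ne_zero⟩
  have hF : F ≤ adj F {μ} := le_sup_left
  have hy : y ∉ adj F {μ} := fun h => hN (.of_mem hζ (hF H.zeta_mem) h hy0 (hF hc))
  obtain ⟨t, -, ht⟩ := H.exists_isNormAt hyp hy0 (q := C ⟨c, hc⟩) fun t ht h => by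
    rw [aeval_C] at h
    exact hN (h.of_adj_transcendental hp hζ (hF H.zeta_mem) (hF hyp) hy ht (hF hc))
  rwa [aeval_C] at ht

lemma exists_isNormAt_mul_pow_sub [CharZero E] (H : IsNormSaturated p ζ μ R F) (hp : p.Prime)
    (hζ : IsPrimitiveRoot ζ p) {y b : E} (hyp : y ^ p ∈ F) (hy : y ∉ adj F {μ}) (hb : b ∈ F)
    (hb0 : b ≠ 0) : ∃ t ∈ F, IsNormAt p ζ F y (b * (t ^ p - μ ^ p)) := by
  have hF : F ≤ adj F {μ} := le_sup_left
  have hq (t : E) : aeval t (C ⟨b, hb⟩ * (X ^ p - C ⟨μ ^ p, H.pow_mem⟩) : F[X]) =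
      b * (t ^ p - μ ^ p) := by
    rw [map_mul, map_sub, map_pow, aeval_X, aeval_C, aeval_C]
    rfl
  obtain ⟨t, htF, ht⟩ := H.exists_isNormAt hyp (ne_of_mem_of_not_mem (zero_mem _) hy).symm
    fun t ht => by
      rw [hq]
      exact not_isNormAt_mul_transcendental_pow_sub hp hζ (hF H.zeta_mem) (hF hyp) hy ht
        (mem_adj rfl) (ne_of_mem_of_not_mem F.zero_mem H.notMem).symm (hF hb) hb0
  exact ⟨t, htF, hq t ▸ ht⟩

end IsNormSaturated

end Stage

section Base

variable {p : ℕ} {E : Type*} [Field E] {k : Subfield E} {ζ μ β : E}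

lemma notMem_adj_pow_of_transcendental (hp : p.Prime) (hμ : Transcendental k μ) :
    μ ∉ adj k {μ ^ p} := fun h => by
  obtain ⟨r, s, hrs⟩ := exists_div_of_mem_adj h
  have hs : aeval (μ ^ p) s ≠ 0 := fun h0 => hμ (by rw [hrs, h0, div_zero]; exact isAlgebraic_zero)
  have hexpand : X * expand k p s = expand k p r := by
    apply transcendental_iff_injective.1 hμ
    rw [map_mul, aeval_X, expand_aeval, expand_aeval]
    exact (eq_div_iff hs).1 hrs
  have hdeg := congrArg natDegree hexpand
  rw [natDegree_X_mul ((expand_ne_zero hp.pos).2 (by rintro rfl; exact hs (map_zero _))),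
    natDegree_expand, natDegree_expand] at hdeg
  exact hp.not_dvd_one ((Nat.dvd_add_right (dvd_mul_left p s.natDegree)).1
    (hdeg ▸ dvd_mul_left p r.natDegree))

/-- The elements `b n` and the quotients of two distinct ones. -/
def termsAndQuotients (b : ℕ → E) : Set E :=
  Set.range b ∪ {s | ∃ n m, n ≠ m ∧ s = b n / b m}

lemma not_isNormAt_termsAndQuotients [CharZero E] (hp : p.Prime) (hζ : IsPrimitiveRoot ζ p)
    (hζk : ζ ∈ k) (hμ : Transcendental k μ) (hβ : Transcendental (adj k {μ}) β) :
    ∀ s ∈ termsAndQuotients fun n : ℕ => β + n,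
      ¬ IsNormAt p ζ (adj (adj k {μ ^ p}) {β}) μ s := by
  have hk : k ≤ adj k {μ ^ p} := le_sup_left
  have hpow : μ ^ p ∈ adj k {μ ^ p} := mem_adj rfl
  have hμk := notMem_adj_pow_of_transcendental hp hμ
  have hβ' : Transcendental (adj k {μ ^ p}) β := transcendental_mono (adj_le le_sup_left
    (Set.singleton_subset_iff.2 (pow_mem (mem_adj (Set.mem_singleton μ)) p))) hβ
  rintro _ (⟨n, rfl⟩ | ⟨n, m, hnm, rfl⟩)
  · exact not_isNormAt_transcendental_add hp hζ (hk hζk) hpow hμk hβ' n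
  · exact not_isNormAt_transcendental_div hp hζ (hk hζk) hpow hμk hβ' (a := n) (b := m)
      (Nat.cast_injective.ne hnm)

lemma isNormStage_empty [CharZero E] (hp : p.Prime) (hζ : IsPrimitiveRoot ζ p) (hζk : ζ ∈ k)
    (hμ : Transcendental k μ) (hβ : Transcendental (adj k {μ}) β) {B : Subfield E} (hkB : k ≤ B)
    (hμB : μ ∈ B) (hβB : β ∈ B) (x : NormTask E × Option (ZMod p) → E) :
    IsNormStage B p ζ μ (termsAndQuotients fun n : ℕ => β + n) x ∅
      (adj (adj k {μ ^ p}) {β}) where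
  zeta_mem := le_sup_left (a := adj k {μ ^ p}) (le_sup_left (a := k) hζk)
  pow_mem := le_sup_left (a := adj k {μ ^ p}) (mem_adj (Set.mem_singleton (μ ^ p)))
  subset := by
    have hb (n : ℕ) : β + n ∈ adj (adj k {μ ^ p}) {β} :=
      add_mem (mem_adj (Set.mem_singleton β)) (natCast_mem _ n)
    rintro _ (⟨n, rfl⟩ | ⟨n, m, -, rfl⟩)
    exacts [hb n, div_mem (hb n) (hb m)]
  le_algAdjoin a ha := (algebraicClosure (IntermediateField.adjoin B _) E).algebraMap_mem
    (algebraMap B (IntermediateField.adjoin B _) ⟨a, adj_le (adj_le hkB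
      (Set.singleton_subset_iff.2 (pow_mem hμB p))) (Set.singleton_subset_iff.2 hβB) ha⟩)
  not_isNormAt := not_isNormAt_termsAndQuotients hp hζ hζk hμ hβ
  exists_isNormAt := by simp

theorem exists_isNormSaturated [CharZero E] (hp : p.Prime) (hζ : IsPrimitiveRoot ζ p)
    {x : (NormTask E × Option (ZMod p)) ⊕ Bool → E} (hx : AlgebraicIndependent ℚ x) :
    ∃ (μ : E) (b : ℕ → E) (F : Subfield E), IsNormSaturated p ζ μ (termsAndQuotients b) F := by
  have hζk : ζ ∈ algAdjoin ℚ (x '' ∅) := mem_algAdjoin_of_isAlgebraic (F := algAdjoin ℚ (x '' ∅))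
    le_rfl (isIntegral_of_pow_mem hp.pos (by rw [hζ.pow_eq_one]; exact one_mem _)).isAlgebraic
  have hmem (i : Bool) : x (.inr i) ∈ algAdjoin ℚ (x '' Set.range Sum.inr) :=
    subset_algAdjoin _ (Set.mem_image_of_mem x (Set.mem_range_self i))
  have hβ : Transcendental (adj (algAdjoin ℚ (x '' ∅)) {x (.inr true)}) (x (.inr false)) :=
    transcendental_adj_algAdjoin hx (Set.notMem_empty _) (by simp)
  have hstage := isNormStage_empty hp hζ hζk (transcendental_algAdjoin hx (by simp)) hβ
    (algAdjoin_mono (Set.image_mono (Set.empty_subset _))) (hmem true) (hmem false) (x ∘ Sum.inl)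
  have hxB : AlgebraicIndependent (algAdjoin ℚ (x '' Set.range Sum.inr)) (x ∘ Sum.inl) :=
    algebraicIndependent_algAdjoin hx Sum.inl_injective (by simp)
  obtain ⟨F, hF⟩ := hstage.exists_isNormSaturated hp hζ ⟨_, .inl ⟨0, rfl⟩⟩ (hx.ne_zero _) hxB
  exact ⟨_, _, F, hF⟩

end Base

section PolyNorm

variable {F G ι : Type*} [CommRing F] [CommRing G] [Algebra F G] [Fintype ι] [DecidableEq ι]

/-- The matrix over `F[X]` by which a polynomial over `G` acts on `G[X]`, in the basis that `b`
induces. -/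
noncomputable def polyLeftMulMatrix (b : Module.Basis ι F G) : G[X] →+* Matrix ι ι F[X] :=
  (matPolyEquiv.symm : (Matrix ι ι F)[X] ≃ₐ[F] _).toRingHom.comp
    (mapRingHom (Algebra.leftMulMatrix b : G →+* Matrix ι ι F))

variable (b : Module.Basis ι F G)

lemma polyLeftMulMatrix_C (a : G) :
    polyLeftMulMatrix b (C a) = (Algebra.leftMulMatrix b a).map C := by
  simp [polyLeftMulMatrix]

lemma polyLeftMulMatrix_map_algebraMap (r : F[X]) :
    polyLeftMulMatrix b (r.map (algebraMap F G)) = Matrix.scalar ι r := by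
  have h : (polyLeftMulMatrix b).comp (mapRingHom (algebraMap F G)) = Matrix.scalar ι := by
    refine ringHom_ext (fun a => ?_) ?_
    · simp [polyLeftMulMatrix_C, Matrix.algebraMap_eq_diagonal, Matrix.diagonal_map]
    · simp [polyLeftMulMatrix]
  exact DFunLike.congr_fun h r

lemma polyLeftMulMatrix_comp (q : G[X]) (r : F[X]) :
    polyLeftMulMatrix b (q.comp (r.map (algebraMap F G))) =
      (compRingHom r).mapMatrix (polyLeftMulMatrix b q) := by
  have h : (polyLeftMulMatrix b).comp (compRingHom (r.map (algebraMap F G))) =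
      (compRingHom r).mapMatrix.comp (polyLeftMulMatrix b) := by
    refine ringHom_ext (fun a => ?_) ?_
    · ext1 i j
      simp [polyLeftMulMatrix_C]
    · have hX : polyLeftMulMatrix b X = Matrix.scalar ι X := by
        simpa using polyLeftMulMatrix_map_algebraMap b X
      rw [RingHom.comp_apply, RingHom.comp_apply, hX, coe_compRingHom_apply, X_comp,
        polyLeftMulMatrix_map_algebraMap]
      ext1 i j
      by_cases hij : i = j <;> simp [hij]
  exact DFunLike.congr_fun h q

/-- The norm from `G[X]` to `F[X]`. -/
noncomputable def polyNorm : G[X] →* F[X] :=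
  Matrix.detMonoidHom.comp (polyLeftMulMatrix b : G[X] →* Matrix ι ι F[X])

lemma polyNorm_apply (q : G[X]) : polyNorm b q = (polyLeftMulMatrix b q).det := rfl

lemma polyNorm_comp (q : G[X]) (r : F[X]) :
    polyNorm b (q.comp (r.map (algebraMap F G))) = (polyNorm b q).comp r := by
  rw [polyNorm_apply, polyLeftMulMatrix_comp, ← RingHom.map_det, ← polyNorm_apply,
    coe_compRingHom_apply]

lemma polyNorm_C_algebraMap (c : F) :
    polyNorm b (C (algebraMap F G c)) = C (c ^ Fintype.card ι) := by
  rw [← map_C (algebraMap F G), polyNorm_apply, polyLeftMulMatrix_map_algebraMap,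
    Matrix.scalar_apply, Matrix.det_diagonal, prod_const, card_univ, map_pow]

lemma dvd_polyNorm_sub {d : F[X]} {f g : G[X]} (h : d.map (algebraMap F G) ∣ f - g) :
    d ∣ polyNorm b f - polyNorm b g := by
  obtain ⟨e, he⟩ := h
  have hM : (Ideal.Quotient.mk (Ideal.span {d})).mapMatrix (polyLeftMulMatrix b f) =
      (Ideal.Quotient.mk (Ideal.span {d})).mapMatrix (polyLeftMulMatrix b g) := by
    rw [← sub_eq_zero, ← map_sub, ← map_sub, he, map_mul, polyLeftMulMatrix_map_algebraMap]
    have hd : Ideal.Quotient.mk (Ideal.span {d}) d = 0 :=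
      Ideal.Quotient.eq_zero_iff_mem.2 (Ideal.mem_span_singleton_self d)
    have hscalar : (Ideal.Quotient.mk (Ideal.span {d})).mapMatrix (Matrix.scalar ι d) = 0 := by
      ext1 i j
      by_cases hij : i = j <;> simp [hij, hd]
    rw [map_mul, hscalar, zero_mul]
  rw [← Ideal.mem_span_singleton, ← Ideal.Quotient.mk_eq_mk_iff_sub_mem, polyNorm_apply,
    polyNorm_apply, RingHom.map_det, hM, RingHom.map_det]

end PolyNorm

section NormDescent

variable {p : ℕ}

theorem IsKummerNorm.pow_finrank {F G : Type*} [Field F] [Field G] [Algebra F G]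
    [FiniteDimensional F G] {ζ a c : F}
    (h : IsKummerNorm p (algebraMap F G ζ) (algebraMap F G a) (algebraMap F G c)) :
    IsKummerNorm p ζ a (c ^ Module.finrank F G) := by
  obtain ⟨q, hq⟩ := h
  let b := Module.finBasis F G
  have hcomp (i : ℕ) : (polyNorm b q).comp (C (ζ ^ i) * X) =
      polyNorm b (q.comp (C (algebraMap F G ζ ^ i) * X)) := by
    rw [← polyNorm_comp, Polynomial.map_mul, map_C, map_X, map_pow]
  have hskew : skewNorm ζ p (polyNorm b q) = polyNorm b (skewNorm (algebraMap F G ζ) p q) := by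
    simp only [skewNorm, hcomp, map_prod]
  have hconst := polyNorm_C_algebraMap b c
  rw [Fintype.card_fin] at hconst
  refine ⟨polyNorm b q, ?_⟩
  rw [hskew, ← hconst]
  exact dvd_polyNorm_sub b (by simpa using hq)

variable {E : Type*} [Field E] {ζ x μ c : E} {F : Subfield E}

lemma IsNormAt.of_pow_of_coprime (hp : 1 < p) {n : ℕ} (hn : n.Coprime p) (hc : c ∈ F) (hc0 : c ≠ 0)
    (h : IsNormAt p ζ F x (c ^ n)) : IsNormAt p ζ F x c := by
  obtain ⟨m, -, hm⟩ := Nat.exists_mul_mod_eq_one_of_coprime hn hp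
  have hpow : IsNormAt p ζ F x ((c ^ n) ^ m) := by
    obtain ⟨q, hq⟩ := h
    exact ⟨q ^ m, by simp only [map_pow, prod_pow, hq]⟩
  have hexp : (c ^ n) ^ m = c * (c ^ (n * m / p)) ^ p := by
    rw [← pow_mul, ← pow_mul, ← pow_succ', mul_comm _ p, ← hm, Nat.div_add_mod]
  have hdiv := hpow.mul (.pow_mem (inv_mem (_root_.pow_mem hc (n * m / p))))
  rwa [hexp, inv_pow, mul_assoc,
    mul_inv_cancel₀ (pow_ne_zero _ (pow_ne_zero _ hc0)), mul_one] at hdiv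

lemma isNormAt_toSubfield_iff (hp : p.Prime) {ζ a c : F} (hζ : IsPrimitiveRoot ζ p) (hx : x ^ p = a)
    (G : IntermediateField F E) (hxG : x ∉ G) :
    IsNormAt p (ζ : E) G.toSubfield x c ↔
      IsKummerNorm p (algebraMap F G ζ) (algebraMap F G a) (algebraMap F G c) := by
  have hζG : IsPrimitiveRoot (algebraMap F G ζ) p := hζ.map_of_injective (algebraMap F G).injective
  exact IsNormAt.iff_isKummerNorm (F := G.toSubfield) (x := x) (ζ := algebraMap F G ζ)
    (a := algebraMap F G a) (c := algebraMap F G c) hp hζG hx hxG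

lemma IsNormAt.of_coprime_finrank (hp : p.Prime) {ζ a c : F} (hζ : IsPrimitiveRoot ζ p)
    (hx : x ^ p = a) (hxF : x ∉ F) (G : IntermediateField F E) [FiniteDimensional F G]
    (hG : (Module.finrank F G).Coprime p) (h : IsNormAt p (ζ : E) G.toSubfield x c) :
    IsNormAt p (ζ : E) F x c := by
  rcases eq_or_ne c 0 with rfl | hc0
  · exact .zero hp.pos
  have hxG : x ∉ G := fun hxG => by
    have hdvd := IntermediateField.finrank_dvd_of_le_right
      (IntermediateField.adjoin_simple_le_iff.2 hxG)
    rw [finrank_adjoin_simple_of_pow_mem hp (hζ.map_of_injective (f := F.subtype)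
      F.subtype.injective) ζ.2 (hx ▸ a.2) hxF] at hdvd
    exact hp.ne_one (Nat.eq_one_of_dvd_coprimes hG hdvd dvd_rfl)
  refine .of_pow_of_coprime hp.one_lt hG c.2 (by simpa) ?_
  exact (IsNormAt.iff_isKummerNorm (c := c ^ Module.finrank F G) hp hζ hx hxF).2
    ((isNormAt_toSubfield_iff hp hζ hx G hxG).1 h).pow_finrank

lemma IsNormSaturated.eq_bot_of_coprime_finrank {R : Set E} (H : IsNormSaturated p ζ μ R F)
    (hp : p.Prime) (hζ : IsPrimitiveRoot ζ p) (G : IntermediateField F E) [FiniteDimensional F G]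
    (hG : (Module.finrank F G).Coprime p) : G = ⊥ := by
  have hζF : IsPrimitiveRoot (⟨ζ, H.zeta_mem⟩ : F) p :=
    hζ.of_map_of_injective (f := F.subtype) F.subtype.injective
  have hle : G.toSubfield ≤ F := H.le_of_isAlgebraic
    (fun a ha => G.algebraMap_mem ⟨a, ha⟩)
    (fun a ha => (Algebra.IsAlgebraic.isAlgebraic (R := F) (⟨a, ha⟩ : G)).algHom G.val)
    (fun s hs h => H.not_isNormAt s hs (IsNormAt.of_coprime_finrank (c := ⟨s, H.subset hs⟩)
      (a := ⟨μ ^ p, H.pow_mem⟩) hp hζF rfl H.notMem G hG h))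
  exact eq_bot_iff.2 fun a ha => IntermediateField.mem_bot.2 ⟨⟨a, hle ha⟩, rfl⟩

end NormDescent

section CoprimeClosed

open Module

variable {p : ℕ} {K Ω : Type*} [Field K] [Field Ω] [IsAlgClosed Ω] [Algebra K Ω]

lemma isPGroup_gal_of_forall_eq_bot [Fact p.Prime] {N : Type*} [Field N] [Algebra K N]
    [FiniteDimensional K N] [IsGalois K N]
    (H : ∀ G : IntermediateField K Ω, FiniteDimensional K G → (finrank K G).Coprime p → G = ⊥) :
    IsPGroup p Gal(N/K) := by
  let P : Sylow p Gal(N/K) := default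
  let M : IntermediateField K N := IntermediateField.fixedField (P : Subgroup Gal(N/K))
  have hM : finrank K M = (P : Subgroup Gal(N/K)).index := by
    rw [IntermediateField.finrank_eq_fixingSubgroup_index,
      IntermediateField.fixingSubgroup_fixedField]
  let φ : M →ₐ[K] Ω := IsAlgClosed.lift
  let e : M ≃ₐ[K] φ.fieldRange := AlgEquiv.ofInjectiveField φ
  have := e.toLinearEquiv.finiteDimensional
  have hbot : φ.fieldRange = ⊥ := H _ inferInstance (by
    rw [← e.toLinearEquiv.finrank_eq, hM, Nat.coprime_comm,
      (Fact.out : p.Prime).coprime_iff_not_dvd]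
    exact P.not_dvd_index)
  have hindex : (P : Subgroup Gal(N/K)).index = 1 := by
    rw [← hM, e.toLinearEquiv.finrank_eq, hbot, IntermediateField.finrank_bot]
  obtain ⟨k, hk⟩ := IsPGroup.iff_card.1 P.2
  refine IsPGroup.of_card (n := k) ?_
  rw [← (P : Subgroup Gal(N/K)).card_mul_index, hindex, mul_one]
  exact hk

lemma isGalois_of_isPGroup_of_finrank_eq (hp : p.Prime) {N : Type*} [Field N] [Algebra K N]
    [FiniteDimensional K N] [IsGalois K N] (hN : IsPGroup p Gal(N/K)) (L : IntermediateField K N)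
    (hL : finrank K L = p) : IsGalois K L := by
  have : Fact p.Prime := ⟨hp⟩
  obtain ⟨k, hk⟩ := IsPGroup.iff_card.1 hN
  have hindex : L.fixingSubgroup.index = p := by
    rw [← IntermediateField.finrank_eq_fixingSubgroup_index, hL]
  have hk0 : k ≠ 0 := by
    rintro rfl
    have hdvd := L.fixingSubgroup.index_dvd_card
    rw [hindex, hk, pow_zero] at hdvd
    exact hp.ne_one (Nat.dvd_one.1 hdvd)
  have : L.fixingSubgroup.Normal :=
    Subgroup.normal_of_index_eq_minFac_card (by rw [hindex, hk, hp.pow_minFac hk0])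
  exact (InfiniteGalois.normal_iff_isGalois L).1 this

lemma isGalois_of_finrank_eq_prime [PerfectField K] (hp : p.Prime)
    (H : ∀ G : IntermediateField K Ω, FiniteDimensional K G → (finrank K G).Coprime p → G = ⊥)
    {L : Type*} [Field L] [Algebra K L] (hL : finrank K L = p) : IsGalois K L := by
  have : Fact p.Prime := ⟨hp⟩
  have : FiniteDimensional K L := .of_finrank_pos (hL ▸ hp.pos)
  let N := IntermediateField.normalClosure K L (AlgebraicClosure L)
  have : IsGalois K N := .normalClosure K L (AlgebraicClosure L)
  let ψ : L →ₐ[K] N := IsScalarTower.toAlgHom K L N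
  let e : L ≃ₐ[K] ψ.fieldRange := AlgEquiv.ofInjectiveField ψ
  have := isGalois_of_isPGroup_of_finrank_eq hp (isPGroup_gal_of_forall_eq_bot H)
    ψ.fieldRange (e.toLinearEquiv.finrank_eq.symm.trans hL)
  exact .of_algEquiv e.symm

lemma exists_pow_eq_of_finrank_eq_prime {L : Type*} [Field L] [Algebra K L] [IsGalois K L]
    (hp : p.Prime) {ζ : K} (hζ : IsPrimitiveRoot ζ p) (hL : finrank K L = p) :
    ∃ (θ : L) (ℓ : K), θ ^ p = algebraMap K L ℓ ∧ ∀ r : K, r ^ p ≠ ℓ := by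
  have : Fact p.Prime := ⟨hp⟩
  have : NeZero p := ⟨hp.ne_zero⟩
  have : FiniteDimensional K L := .of_finrank_pos (hL ▸ hp.pos)
  have : IsCyclic Gal(L/K) :=
    isCyclic_of_prime_card (p := p) (by rw [IsGalois.card_aut_eq_finrank, hL])
  obtain ⟨θ, ⟨ℓ, hℓ⟩, hθ⟩ := exists_root_adjoin_eq_top_of_isCyclic K L
    ⟨ζ, by rw [hL]; exact (mem_primitiveRoots hp.pos).2 hζ⟩
  rw [hL] at hℓ
  refine ⟨θ, ℓ, hℓ.symm, forall_pow_ne_of_notMem_bot hζ hℓ.symm fun hbot => ?_⟩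
  have hθK : IntermediateField.adjoin K {θ} = ⊥ :=
    IntermediateField.adjoin_simple_eq_bot_iff.2
      (IntermediateField.mem_bot.2 (Algebra.mem_bot.1 hbot))
  refine hp.ne_one (hL.symm.trans ?_)
  rw [← IntermediateField.finrank_top', ← hθ, hθK, IntermediateField.finrank_bot]

end CoprimeClosed

section Descent

variable {p : ℕ} {E : Type*} [Field E] {ζ μ lam c : E} {F : Subfield E} {R : Set E}

lemma isKummerNorm_adjoin_of_isNormAt (hp : p.Prime) {ζ ℓ c : F}
    (hζ : IsPrimitiveRoot ζ p) (hlam : lam ^ p = ℓ) (hlam0 : lam ≠ 0)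
    (h : IsNormAt p (ζ : E) (adj F {μ}) lam c) :
    IsKummerNorm p (algebraMap F (IntermediateField.adjoin F {μ}) ζ) (algebraMap F _ ℓ)
      (algebraMap F _ c) := by
  have : NeZero p := ⟨hp.ne_zero⟩
  by_cases hmem : lam ∈ IntermediateField.adjoin F {μ}
  · have hpow : algebraMap F (IntermediateField.adjoin F {μ}) ℓ = ⟨lam, hmem⟩ ^ p :=
      Subtype.ext hlam.symm
    rw [hpow]
    exact isKummerNorm_pow (hζ.map_of_injective (algebraMap F _).injective)
      (fun h0 => hlam0 (congrArg Subtype.val h0)) _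
  · rw [adj_eq_toSubfield] at h
    exact (isNormAt_toSubfield_iff hp hζ hlam _ hmem).1 h

lemma exists_dvd_pow_sub (hp : p.Prime) {ζ α ℓ : F} (hζ : IsPrimitiveRoot ζ p) (hμ : μ ^ p = α)
    (hμF : μ ∉ F) {x : E} (hx : x ∈ adj F {μ}) (hxℓ : x ^ p = ℓ) :
    ∃ f : F[X], X ^ p - C α ∣ f ^ p - C ℓ := by
  have : NeZero p := ⟨hp.ne_zero⟩
  obtain ⟨f, rfl⟩ := exists_aeval_eq_of_mem_adj (isIntegral_of_pow_mem hp.pos (hμ ▸ α.2)) hx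
  refine ⟨f, dvd_of_aeval_eq_zero hp (forall_pow_ne_of_notMem hζ hμ hμF) hμ ?_⟩
  rw [map_sub, map_pow, hxℓ, aeval_C]
  exact sub_self _

namespace IsNormSaturated

lemma isPrimitiveRoot (H : IsNormSaturated p ζ μ R F) (hζ : IsPrimitiveRoot ζ p) :
    IsPrimitiveRoot (⟨ζ, H.zeta_mem⟩ : F) p :=
  hζ.of_map_of_injective (f := F.subtype) F.subtype.injective

lemma isKummerNorm_or_isNormAt (H : IsNormSaturated p ζ μ R F) (hp : p.Prime)
    (hζ : IsPrimitiveRoot ζ p) {ℓ c : F} (hlam : lam ^ p = ℓ) (hlamF : lam ∉ F) :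
    IsKummerNorm p ⟨ζ, H.zeta_mem⟩ ℓ c ∨ IsNormAt p ζ (adj F {μ}) lam c := by
  refine or_iff_not_imp_right.2 fun hN => ?_
  refine (IsNormAt.iff_isKummerNorm hp (H.isPrimitiveRoot hζ) hlam hlamF).1 ?_
  exact H.isNormAt hp hζ (hlam ▸ ℓ.2) (ne_of_mem_of_not_mem F.zero_mem hlamF).symm c.2 hN

lemma dvd_or_exists_isKummerNorm [CharZero E] (H : IsNormSaturated p ζ μ R F) (hp : p.Prime)
    (hζ : IsPrimitiveRoot ζ p) {α ℓ c : F} (hμ : μ ^ p = α) (hlam : lam ^ p = (ℓ / α : F))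
    (hc : c ≠ 0) :
    (∃ f : F[X], X ^ p - C α ∣ f ^ p - C ℓ) ∨
      ∃ t : F, IsKummerNorm p ⟨ζ, H.zeta_mem⟩ (ℓ / α) (c * (t ^ p - α)) := by
  have hζF := H.isPrimitiveRoot hζ
  have hμ0 : μ ≠ 0 := (ne_of_mem_of_not_mem F.zero_mem H.notMem).symm
  by_cases hmem : lam ∈ adj F {μ}
  · refine .inl (exists_dvd_pow_sub hp hζF hμ H.notMem
      (mul_mem hmem (mem_adj (Set.mem_singleton μ))) ?_)
    rw [mul_pow, hlam, Subfield.coe_div, ← hμ, div_mul_cancel₀ _ (pow_ne_zero p hμ0)]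
  · right
    have hlamF : lam ∉ F := fun h => hmem (le_sup_left (a := F) h)
    have hc0 : (c : E) ≠ 0 := fun h => hc (Subtype.ext h)
    obtain ⟨t, ht, hN⟩ := H.exists_isNormAt_mul_pow_sub hp hζ (hlam ▸ (ℓ / α).2) hmem c.2 hc0
    lift t to F using ht
    refine ⟨t, (IsNormAt.iff_isKummerNorm hp hζF hlam hlamF).1 ?_⟩
    rwa [Subfield.coe_mul, Subfield.coe_sub, SubmonoidClass.coe_pow, ← hμ]

end IsNormSaturated

end Descent

section Witness

variable {p : ℕ} {E : Type u} [Field E] [CharZero E] [IsAlgClosed E] {ζ μ : E} {F : Subfield E}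

theorem IsNormSaturated.isSymbolLinked {b : ℕ → E}
    (H : IsNormSaturated p ζ μ (termsAndQuotients b) F) (hp : p.Prime)
    (hζ : IsPrimitiveRoot ζ p) :
    IsSymbolLinked p (⟨ζ, H.zeta_mem⟩ : F) ⟨μ ^ p, H.pow_mem⟩
      fun n => ⟨b n, H.subset (.inl ⟨n, rfl⟩)⟩ := by
  have : NeZero p := ⟨hp.ne_zero⟩
  have hζF := H.isPrimitiveRoot hζ
  have hiff (c : F) := IsNormAt.iff_isKummerNorm (a := ⟨μ ^ p, H.pow_mem⟩) (c := c) hp hζF rfl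
    H.notMem
  refine ⟨hζF, forall_pow_ne_of_notMem hζF rfl H.notMem, fun n h => ?_, fun n m hnm h => ?_,
    fun L _ _ hL => ?_, fun ℓ c hℓ => ?_, fun ℓ c hc => ?_⟩
  · exact H.not_isNormAt _ (.inl ⟨n, rfl⟩) ((hiff _).2 h)
  · exact H.not_isNormAt _ (.inr ⟨n, m, hnm, rfl⟩) ((hiff _).2 h)
  · have := isGalois_of_finrank_eq_prime (Ω := E) hp
      (fun G _ hG => H.eq_bot_of_coprime_finrank hp hζ G hG) hL
    exact exists_pow_eq_of_finrank_eq_prime hp hζF hL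
  · obtain ⟨lam, hlam⟩ := IsAlgClosed.exists_pow_nat_eq (ℓ : E) hp.pos
    have hlamF : lam ∉ F := fun h => hℓ ⟨lam, h⟩ (Subtype.ext hlam)
    refine (H.isKummerNorm_or_isNormAt hp hζ hlam hlamF).imp_right fun h => ?_
    exact ⟨IntermediateField.adjoin F {μ}, inferInstance, inferInstance,
      ⟨μ, IntermediateField.mem_adjoin_simple_self F μ⟩,
      finrank_adjoin_simple_of_pow_mem hp hζ H.zeta_mem H.pow_mem H.notMem, Subtype.ext rfl,
      isKummerNorm_adjoin_of_isNormAt hp hζF hlam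
        (ne_of_mem_of_not_mem F.zero_mem hlamF).symm h⟩
  · obtain ⟨lam, hlam⟩ := IsAlgClosed.exists_pow_nat_eq
      ((ℓ / ⟨μ ^ p, H.pow_mem⟩ : F) : E) hp.pos
    exact H.dvd_or_exists_isKummerNorm hp hζ rfl hlam hc

end Witness

section Cardinal

open Cardinal

lemma exists_algebraicIndependent_of_mk_le {E ι : Type u} [Field E] [CharZero E] [IsAlgClosed E]
    (hE : ℵ₀ < #E) (hι : #ι ≤ #E) : ∃ x : ι → E, AlgebraicIndependent ℚ x := by
  obtain ⟨s, hs⟩ := exists_isTranscendenceBasis ℚ E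
  have hsE := IsAlgClosed.cardinal_eq_cardinal_transcendence_basis_of_aleph0_lt _ hs (by simp) hE
  rw [lift_id, lift_id] at hsE
  rw [hsE] at hι
  obtain ⟨f⟩ := hι
  exact ⟨_, hs.1.comp f f.injective⟩

lemma mk_normTask_prod_sum_le {E : Type u} [Field E] (hE : ℵ₀ ≤ #E) (A B : Type) [Countable A]
    [Countable B] : #((NormTask E × A) ⊕ B) ≤ #E := by
  have hcount (B : Type) [Countable B] : lift.{u} #B ≤ #E :=
    (lift_le_aleph0.2 mk_le_aleph0).trans hE
  rw [mk_sum, mk_prod, mk_prod, lift_id, lift_id, lift_uzero, lift_uzero]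
  exact add_le_of_le hE (mul_le_of_le hE (mul_le_of_le hE le_rfl
    (cardinalMk_le_max.trans (max_le le_rfl hE))) (hcount A)) (hcount B)

end Cardinal

theorem nonempty_commonGenusWitness_of_aleph0_lt {p : ℕ} (hp : p.Prime) {E : Type u} [Field E]
    [CharZero E] [IsAlgClosed E] (hE : Cardinal.aleph0 < Cardinal.mk E) :
    Nonempty (CommonGenusWitness.{u} p) := by
  have : NeZero p := ⟨hp.ne_zero⟩
  obtain ⟨ζ, hζ⟩ := HasEnoughRootsOfUnity.exists_primitiveRoot E p
  obtain ⟨x, hx⟩ := exists_algebraicIndependent_of_mk_le hE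
    (mk_normTask_prod_sum_le hE.le (Option (ZMod p)) Bool)
  obtain ⟨μ, b, F, H⟩ := exists_isNormSaturated hp hζ hx
  exact (H.isSymbolLinked hp hζ).nonempty_commonGenusWitness hp

/-- for any prime `p` there is a field `K` with infinitely many pairwise
nonisomorphic central division algebras of degree `p`, every degree-`p` extension of `K`
splitting all of them; hence all of them share the same genus. -/
theorem exists_field_with_common_genus (p : ℕ) (hp : p.Prime) :
    Nonempty (CommonGenusWitness.{u} p) := by
  have : CharZero (ULift.{u} ℂ) := CharP.charP_to_charZero _
  let e : ULift.{u} ℂ ≃+* ℂ := ULift.ringEquiv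
  have : IsAlgClosed (ULift.{u} ℂ) := ⟨fun f => by
    simpa [Polynomial.map_map] using (IsAlgClosed.splits (f.map e.toRingHom)).map e.symm.toRingHom⟩
  refine nonempty_commonGenusWitness_of_aleph0_lt hp (E := ULift.{u} ℂ) ?_
  rw [Cardinal.mk_uLift, Cardinal.aleph0_lt_lift, Cardinal.mk_complex]
  exact Cardinal.aleph0_lt_continuum
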